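/- Let Δ ⊆ ℝ⁴ be a 4-dimensional reflexive polytope. Then 12 · |∂Δ ∩ ℤ⁴| = 2 · v(Δ) + Σ_θ v(θ)·v(θ*), where the sum runs over all 2-dimensional faces θ of Δ, θ* is the dual 1-dimensional face (edge) of Δ*, |∂Δ ∩ ℤ⁴| denotes the number of lattice points on the boundary of Δ, v(Δ) = 4!·vol(Δ), v(θ) is the normalized lattice area of θ, and v(θ*) = |θ* ∩ ℤ⁴| − 1. -/

import Mathlib

open MeasureTheory Filter Pointwise

noncomputable section

/-- The canonical embedding of a lattice point of `ℤ^d` into `ℝ^d`. -/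
def coeLat {d : ℕ} (n : Fin d → ℤ) : Fin d → ℝ := fun i => (n i : ℝ)

/-- The set of lattice points lying in a subset `S ⊆ ℝ^d`. -/
def latticePoints {d : ℕ} (S : Set (Fin d → ℝ)) : Set (Fin d → ℤ) :=
  {n | coeLat n ∈ S}

/-- A lattice polytope: the convex hull of finitely many points of `ℤ^d`. -/
def IsLatticePolytope {d : ℕ} (P : Set (Fin d → ℝ)) : Prop :=
  ∃ V : Finset (Fin d → ℤ), P = convexHull ℝ (coeLat '' (V : Set (Fin d → ℤ)))

/-- The dual (polar) body `P* = {y | ⟨y,x⟩ ≥ -1 ∀ x ∈ P}`. -/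
def polarDual {d : ℕ} (P : Set (Fin d → ℝ)) : Set (Fin d → ℝ) :=
  {y | ∀ x ∈ P, -1 ≤ ∑ i, y i * x i}

/-- Dimension of a subset of `ℝ^d`: the dimension of its affine span. -/
def dimSet {d : ℕ} (S : Set (Fin d → ℝ)) : ℕ :=
  Module.finrank ℝ (affineSpan ℝ S).direction

/-- A reflexive polytope: a lattice polytope containing the origin in its interior
whose dual is again a lattice polytope. -/
def IsReflexive {d : ℕ} (P : Set (Fin d → ℝ)) : Prop :=
  IsLatticePolytope P ∧ (0 : Fin d → ℝ) ∈ interior P ∧ IsLatticePolytope (polarDual P)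

/-- A (nonempty, exposed) face of dimension `k` of a polytope `P`. -/
def IsFaceOfDim {d : ℕ} (P : Set (Fin d → ℝ)) (k : ℕ) (θ : Set (Fin d → ℝ)) : Prop :=
  IsExposed ℝ P θ ∧ θ.Nonempty ∧ dimSet θ = k

/-- The dual face `θ* = {y ∈ P* | ⟨y,x⟩ = -1 ∀ x ∈ θ}` of a face `θ` of `P`. -/
def dualFace {d : ℕ} (P θ : Set (Fin d → ℝ)) : Set (Fin d → ℝ) :=
  {y ∈ polarDual P | ∀ x ∈ θ, ∑ i, y i * x i = -1}

/-- The normalized volume of a `k`-dimensional lattice polytope `θ ⊆ ℝ^d`: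
`lim_{m → ∞} k! ⬝ |mθ ∩ ℤ^d| / m^k`. -/
def normVol {d : ℕ} (k : ℕ) (θ : Set (Fin d → ℝ)) : ℝ :=
  limUnder atTop
    (fun m : ℕ => (Nat.factorial k : ℝ) * (latticePoints ((m : ℝ) • θ)).ncard / (m : ℝ) ^ k)

/-!
Let `H` be the gauge of `Δ`. It is integer-valued on `ℤ⁴`, and by Ehrhart theory and reciprocity
exactly `a j ^ 3 + b j` lattice points lie at height `j ≥ 1`, where `a = 4 vol(Δ)`. At `j = 1` these
are the boundary points, so everything reduces to computing `b`.

Put `T(s) = ∑ x, e ^ (-s H(x))`. In `16 T(2s) - T(s)` the contribution of `a` cancels to leading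
order, and `s ^ 2 (16 T(2s) - T(s)) → 3 b` as `s → 0+`. But this difference is also the sum, over
the nontrivial characters `χ` of `ℤ⁴ / 2ℤ⁴`, of the twisted sums `∑ x, χ(x) e ^ (-s H(x))`. If
`χ(u) = -1`, then averaging over translations by `±u` replaces the weight by its second difference
in direction `u`. As `H` is piecewise linear, the latter concentrates near the walls of the normal
fan, that is, the cones over the 2-faces `θ` of `Δ`. Near the cone over `θ` the twisted sum cancels
unless `χ` is trivial on that cone, which happens for exactly one nontrivial `χ`; then the number of
lattice points on the cone brings in `v(θ)`, and the bend of `H` across it brings in `v(θ*)`.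
-/

namespace ReflexivePolytope

/-! ### Simplicial cones and a regular triangulation -/

section Cones

variable {E : Type*} [AddCommGroup E] [Module ℝ E]

/-- The finite set `s` is a basis of the real vector space `E`; its elements generate the rays of a
simplicial cone. -/
def IsBasisSet (s : Finset E) : Prop :=
  LinearIndepOn ℝ id (s : Set E) ∧ Submodule.span ℝ (s : Set E) = ⊤

/-- The basis of `E` formed by the elements of `s`. -/
def IsBasisSet.toBasis {s : Finset E} (hs : IsBasisSet s) : Module.Basis s ℝ E :=
  Module.Basis.mk (v := fun v : s => (v : E)) hs.1 (by simp [hs.2])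

open Classical in
/-- The coordinate at `v` with respect to the basis `s`; it is `0` when `s` is not a basis or does
not contain `v`. -/
def coordOn (s : Finset E) (v : E) : E →ₗ[ℝ] ℝ :=
  if h : IsBasisSet s ∧ v ∈ s then h.1.toBasis.coord ⟨v, h.2⟩ else 0

/-- The linear functional taking prescribed values `w` on the basis `s`. -/
def costOn (s : Finset E) (w : E → ℝ) : E →ₗ[ℝ] ℝ :=
  ∑ v ∈ s, w v • coordOn s v

variable {s t V : Finset E} {u v x z ξ : E} {w : E → ℝ}

theorem costOn_apply (s : Finset E) (w : E → ℝ) (z : E) :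
    costOn s w z = ∑ v ∈ s, w v * coordOn s v z := by
  simp [costOn]

namespace IsBasisSet

@[simp]
theorem toBasis_apply (hs : IsBasisSet s) (v : s) : hs.toBasis v = v :=
  Module.Basis.mk_apply (v := fun v : s => (v : E)) _ _ v

theorem sum_coordOn_smul (hs : IsBasisSet s) (z : E) : ∑ v ∈ s, coordOn s v z • v = z := by
  rw [← Finset.sum_coe_sort s]
  simpa [coordOn, hs] using hs.toBasis.sum_repr z

theorem coordOn_eq (hs : IsBasisSet s) {c : E → ℝ} (hz : ∑ v ∈ s, c v • v = z) (hv : v ∈ s) :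
    coordOn s v z = c v := by
  have hzero : ∑ v ∈ s, (coordOn s v z - c v) • v = 0 := by
    simp only [sub_smul, Finset.sum_sub_distrib, hz, hs.sum_coordOn_smul, sub_self]
  exact sub_eq_zero.mp (linearIndepOn_finset_iff.mp hs.1 _ hzero v hv)

theorem coordOn_self (hs : IsBasisSet s) (hv : v ∈ s) : coordOn s v v = 1 := by
  classical
  have := hs.coordOn_eq (c := Pi.single v 1) (z := v) (by simp [Pi.single_apply, hv]) hv
  simpa using this

theorem coordOn_of_ne (hs : IsBasisSet s) (hu : u ∈ s) (hv : v ∈ s) (huv : v ≠ u) :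
    coordOn s v u = 0 := by
  classical
  have := hs.coordOn_eq (c := Pi.single u 1) (z := u) (by simp [Pi.single_apply, hu]) hv
  simpa [huv] using this

theorem costOn_self (hs : IsBasisSet s) (w : E → ℝ) (hv : v ∈ s) : costOn s w v = w v := by
  rw [costOn_apply, Finset.sum_eq_single_of_mem v hv fun u hu huv => by
    rw [hs.coordOn_of_ne hv hu huv, mul_zero], hs.coordOn_self hv, mul_one]

theorem card_eq_finrank (hs : IsBasisSet s) : s.card = Module.finrank ℝ E := by
  simp [Module.finrank_eq_card_basis hs.toBasis]

theorem eq_of_subset (hs : IsBasisSet s) (ht : IsBasisSet t) (hst : s ⊆ t) : s = t :=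
  Finset.eq_of_subset_of_card_le hst (by rw [hs.card_eq_finrank, ht.card_eq_finrank])

theorem map_eq_sum (hs : IsBasisSet s) (f : E →ₗ[ℝ] ℝ) (z : E) :
    f z = ∑ v ∈ s, f v * coordOn s v z := by
  conv_lhs => rw [← hs.sum_coordOn_smul z]
  simp [mul_comm]

end IsBasisSet

open Classical in
/-- The bases of `E` contained in `V`. -/
def basisSubsets (V : Finset E) : Finset (Finset E) :=
  V.powerset.filter IsBasisSet

theorem mem_basisSubsets : s ∈ basisSubsets V ↔ s ⊆ V ∧ IsBasisSet s := by
  simp [basisSubsets]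

theorem exists_forall_map_ne_zero {M ι : Type*} [AddCommGroup M] [Module ℝ M] (I : Finset ι)
    (φ : ι → M →ₗ[ℝ] ℝ) (hφ : ∀ i ∈ I, φ i ≠ 0) : ∃ m : M, ∀ i ∈ I, φ i m ≠ 0 := by
  classical
  have hne := Subspace.biUnion_ne_univ_of_top_notMem (k := ℝ) (E := M)
    (s := I.image fun i => LinearMap.ker (φ i)) (by
      simpa only [Finset.mem_image, not_exists, not_and, LinearMap.ker_eq_top] using hφ)
  obtain ⟨m, hm⟩ := (Set.ne_univ_iff_exists_notMem _).mp hne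
  refine ⟨m, fun i hi hzero => hm ?_⟩
  exact Set.mem_biUnion (Finset.mem_image_of_mem _ hi) (LinearMap.mem_ker.mpr hzero)

/-- `z` lies on no hyperplane spanned by a facet of a simplicial cone with rays in `V`. -/
def IsGenericPoint (V : Finset E) (z : E) : Prop :=
  ∀ s ∈ basisSubsets V, ∀ v ∈ s, coordOn s v z ≠ 0

theorem exists_isGenericPoint (V : Finset E) : ∃ ξ : E, IsGenericPoint V ξ := by
  classical
  obtain ⟨ξ, hξ⟩ := exists_forall_map_ne_zero ((basisSubsets V).sigma id)
    (fun p => coordOn p.1 p.2) (by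
      rintro ⟨s, v⟩ hsv hzero
      obtain ⟨hs, hv⟩ := Finset.mem_sigma.mp hsv
      have := (mem_basisSubsets.mp hs).2.coordOn_self hv
      simp [hzero] at this)
  exact ⟨ξ, fun s hs v hv => hξ ⟨s, v⟩ (Finset.mem_sigma.mpr ⟨hs, hv⟩)⟩

theorem IsGenericPoint.neg (hξ : IsGenericPoint V ξ) : IsGenericPoint V (-ξ) := fun s hs v hv => by
  simpa using hξ s hs v hv

/-- A cost vector whose lower hull over `V` is a triangulation (`ne`), refining the subdivision
given by the constant cost `1` (`lt_of_one_lt`). -/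
structure IsGenericCost (V : Finset E) (w : E → ℝ) : Prop where
  pos : ∀ v ∈ V, 0 < w v
  ne : ∀ s ∈ basisSubsets V, ∀ v ∈ V, v ∉ s → costOn s w v ≠ w v
  lt_of_one_lt : ∀ s ∈ basisSubsets V, ∀ v ∈ V, 1 < costOn s 1 v → w v < costOn s w v

theorem exists_costOn_ne (V : Finset E) :
    ∃ r : E → ℝ, ∀ s ∈ basisSubsets V, ∀ v ∈ V, v ∉ s → costOn s r v ≠ r v := by
  classical
  let φ : Finset E × E → (E → ℝ) →ₗ[ℝ] ℝ := fun p =>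
    (∑ u ∈ p.1, coordOn p.1 u p.2 • (LinearMap.proj u : (E → ℝ) →ₗ[ℝ] ℝ)) - LinearMap.proj p.2
  have hφ (s v r) : φ (s, v) r = costOn s r v - r v := by
    simp [φ, costOn_apply, mul_comm]
  obtain ⟨r, hr⟩ := exists_forall_map_ne_zero
    (((basisSubsets V) ×ˢ V).filter fun p => p.2 ∉ p.1) φ (by
      rintro ⟨s, v⟩ hsv hzero
      have hvs : v ∉ s := (Finset.mem_filter.mp hsv).2
      have hsum : costOn s (Pi.single v 1) v = 0 := by
        rw [costOn_apply]
        refine Finset.sum_eq_zero fun u hu => ?_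
        rw [Pi.single_eq_of_ne (ne_of_mem_of_not_mem hu hvs), zero_mul]
      have := hφ s v (Pi.single v 1)
      simp [hzero, hsum] at this)
  refine ⟨r, fun s hs v hv hvs => ?_⟩
  rw [← sub_ne_zero, ← hφ]
  exact hr (s, v) (by simp [hs, hv, hvs])

open Topology

theorem eventually_pos_add_mul {a : ℝ} (ha : 0 < a) (b : ℝ) : ∀ᶠ t in 𝓝[>] (0 : ℝ), 0 < a + t * b :=
  have hcont : Continuous fun t : ℝ => a + t * b := by fun_prop
  nhdsWithin_le_nhds (hcont.continuousAt.eventually_const_lt (by simpa using ha))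

theorem eventually_add_mul_ne_zero (a : ℝ) {b : ℝ} (hb : b ≠ 0) :
    ∀ᶠ t in 𝓝[>] (0 : ℝ), a + t * b ≠ 0 := by
  rcases lt_trichotomy a 0 with ha | rfl | ha
  · filter_upwards [eventually_pos_add_mul (neg_pos.mpr ha) (-b)] with t ht
    linarith
  · filter_upwards [self_mem_nhdsWithin] with t ht
    simpa [hb] using (Set.mem_Ioi.mp ht).ne'
  · filter_upwards [eventually_pos_add_mul ha b] with t ht using ht.ne'

theorem exists_isGenericCost (V : Finset E) : ∃ w, IsGenericCost V w := by
  obtain ⟨r, hr⟩ := exists_costOn_ne V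
  have hcost (s : Finset E) (v : E) (t : ℝ) : costOn s (fun v => 1 + t * r v) v - (1 + t * r v)
      = costOn s 1 v - 1 + t * (costOn s r v - r v) := by
    simp only [costOn_apply, Pi.one_apply, add_mul, Finset.sum_add_distrib, Finset.mul_sum,
      mul_assoc, mul_sub]
    ring
  have hpos : ∀ᶠ t in 𝓝[>] (0 : ℝ), ∀ v ∈ V, 0 < 1 + t * r v :=
    V.eventually_all.mpr fun v _ => eventually_pos_add_mul one_pos (r v)
  have hne : ∀ᶠ t in 𝓝[>] (0 : ℝ), ∀ s ∈ basisSubsets V, ∀ v ∈ V, v ∉ s →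
      costOn s (fun v => 1 + t * r v) v ≠ 1 + t * r v := by
    refine (Finset.eventually_all _).mpr fun s hs => (Finset.eventually_all _).mpr fun v hv =>
      eventually_imp_distrib_left.mpr fun hvs => ?_
    filter_upwards [eventually_add_mul_ne_zero (costOn s 1 v - 1)
      (sub_ne_zero.mpr (hr s hs v hv hvs))] with t ht
    rwa [← sub_ne_zero, hcost]
  have hlt : ∀ᶠ t in 𝓝[>] (0 : ℝ), ∀ s ∈ basisSubsets V, ∀ v ∈ V, 1 < costOn s 1 v →
      1 + t * r v < costOn s (fun v => 1 + t * r v) v := by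
    refine (Finset.eventually_all _).mpr fun s _ => (Finset.eventually_all _).mpr fun v _ =>
      eventually_imp_distrib_left.mpr fun h1 => ?_
    filter_upwards [eventually_pos_add_mul (sub_pos.mpr h1) (costOn s r v - r v)] with t ht
    rwa [← sub_pos, hcost]
  obtain ⟨t, h1, h2, h3⟩ := (hpos.and (hne.and hlt)).exists
  exact ⟨fun v => 1 + t * r v, h1, h2, h3⟩

theorem exists_dependence_of_nonneg_cost (hw : ∀ v ∈ V, 0 < w v)
    (hV : ¬ LinearIndepOn ℝ id (V : Set E)) :
    ∃ g : E → ℝ, ∑ v ∈ V, g v • v = 0 ∧ 0 ≤ ∑ v ∈ V, w v * g v ∧ ∃ u ∈ V, 0 < g u := by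
  obtain ⟨g, hg, hcost, i, hi, hgi⟩ : ∃ g : E → ℝ, ∑ v ∈ V, g v • v = 0 ∧
      0 ≤ ∑ v ∈ V, w v * g v ∧ ∃ i ∈ V, g i ≠ 0 := by
    simp only [linearIndepOn_finset_iff, id, not_forall] at hV
    obtain ⟨g, hg, i, hi, hgi⟩ := hV
    rcases le_total 0 (∑ v ∈ V, w v * g v) with h | h
    · exact ⟨g, hg, h, i, hi, hgi⟩
    · exact ⟨-g, by simp [hg], by simpa using h, i, hi, by simpa using hgi⟩
  refine ⟨g, hg, hcost, ?_⟩
  by_contra! hle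
  have hneg : ∑ v ∈ V, w v * g v < ∑ v ∈ V, 0 :=
    Finset.sum_lt_sum (fun v hv => mul_nonpos_of_nonneg_of_nonpos (hw v hv).le (hle v hv))
      ⟨i, hi, mul_neg_of_pos_of_neg (hw i hi) (lt_of_le_of_ne (hle i hi) hgi)⟩
  simp only [Finset.sum_const_zero] at hneg
  exact hneg.not_ge hcost

theorem exists_rep_vanishing {c : E → ℝ} (hw : ∀ v ∈ V, 0 < w v) (hc : ∀ v ∈ V, 0 ≤ c v)
    (hV : ¬ LinearIndepOn ℝ id (V : Set E)) :
    ∃ c' : E → ℝ, (∀ v ∈ V, 0 ≤ c' v) ∧ ∑ v ∈ V, c' v • v = ∑ v ∈ V, c v • v ∧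
      ∑ v ∈ V, w v * c' v ≤ ∑ v ∈ V, w v * c v ∧ ∃ u ∈ V, c' u = 0 := by
  obtain ⟨g, hg, hcost, i, hi, hgi⟩ := exists_dependence_of_nonneg_cost hw hV
  obtain ⟨u, hu, hmin⟩ := (V.filter fun v => 0 < g v).exists_min_image (fun v => c v / g v)
    ⟨i, Finset.mem_filter.mpr ⟨hi, hgi⟩⟩
  simp only [Finset.mem_filter] at hu hmin
  have hratio : 0 ≤ c u / g u := div_nonneg (hc u hu.1) hu.2.le
  refine ⟨fun v => c v - c u / g u * g v, fun v hv => ?_, ?_, ?_, u, hu.1, ?_⟩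
  · rw [sub_nonneg]
    rcases lt_or_ge 0 (g v) with hgv | hgv
    · exact (le_div_iff₀ hgv).mp (hmin v ⟨hv, hgv⟩)
    · exact (mul_nonpos_of_nonneg_of_nonpos hratio hgv).trans (hc v hv)
  · simp only [sub_smul, Finset.sum_sub_distrib, mul_smul, ← Finset.smul_sum, hg, smul_zero,
      sub_zero]
  · simp only [mul_sub, Finset.sum_sub_distrib, mul_left_comm (w _) (c u / g u), ← Finset.mul_sum]
    exact sub_le_self _ (mul_nonneg hratio hcost)
  · exact sub_eq_zero.mpr (div_mul_cancel₀ _ hu.2.ne').symm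

theorem exists_linearIndepOn_rep_le (hw : ∀ v ∈ V, 0 < w v) {c : E → ℝ} (hc : ∀ v ∈ V, 0 ≤ c v) :
    ∃ t ⊆ V, LinearIndepOn ℝ id (t : Set E) ∧ ∃ c' : E → ℝ, (∀ v ∈ t, 0 < c' v) ∧
      ∑ v ∈ t, c' v • v = ∑ v ∈ V, c v • v ∧ ∑ v ∈ t, w v * c' v ≤ ∑ v ∈ V, w v * c v := by
  classical
  induction V using Finset.strongInduction generalizing c with
  | H V ih =>
    have reduce {c' : E → ℝ} (hc' : ∀ v ∈ V, 0 ≤ c' v) {u : E} (hu : u ∈ V) (h0 : c' u = 0) :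
        ∃ t ⊆ V, LinearIndepOn ℝ id (t : Set E) ∧ ∃ c'' : E → ℝ, (∀ v ∈ t, 0 < c'' v) ∧
          ∑ v ∈ t, c'' v • v = ∑ v ∈ V, c' v • v ∧
          ∑ v ∈ t, w v * c'' v ≤ ∑ v ∈ V, w v * c' v := by
      obtain ⟨t, ht, hrest⟩ := ih (V.erase u) (Finset.erase_ssubset hu)
        (fun v hv => hw v (Finset.mem_of_mem_erase hv))
        (fun v hv => hc' v (Finset.mem_of_mem_erase hv))
      rw [Finset.sum_erase _ (by simp [h0]), Finset.sum_erase _ (by simp [h0])] at hrest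
      exact ⟨t, ht.trans (Finset.erase_subset _ _), hrest⟩
    by_cases hpos : ∀ v ∈ V, 0 < c v
    · by_cases hV : LinearIndepOn ℝ id (V : Set E)
      · exact ⟨V, subset_rfl, hV, c, hpos, rfl, le_rfl⟩
      obtain ⟨c', hc', hsum, hle, u, hu, h0⟩ := exists_rep_vanishing hw hc hV
      obtain ⟨t, ht, hli, c'', hpos'', hsum'', hle''⟩ := reduce hc' hu h0
      exact ⟨t, ht, hli, c'', hpos'', hsum''.trans hsum, hle''.trans hle⟩
    · push Not at hpos
      obtain ⟨u, hu, h0⟩ := hpos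
      exact reduce hc hu (h0.antisymm (hc u hu))

theorem exists_basisSubset_superset (hV : Submodule.span ℝ (V : Set E) = ⊤) (ht : t ⊆ V)
    (hli : LinearIndepOn ℝ id (t : Set E)) : ∃ s ∈ basisSubsets V, t ⊆ s := by
  obtain ⟨b, hbV, htb, hsp, hb⟩ := exists_linearIndepOn_extension hli (Finset.coe_subset.mpr ht)
  lift b to Finset E using V.finite_toSet.subset hbV
  simp only [Set.image_id] at hsp
  exact ⟨b, mem_basisSubsets.mpr ⟨Finset.coe_subset.mp hbV, hb,
    top_le_iff.mp (hV.symm.trans_le (Submodule.span_le.mpr hsp))⟩, Finset.coe_subset.mp htb⟩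

/-- Every vector is a nonnegative combination of elements of `V`. -/
def PositivelySpans (V : Finset E) : Prop :=
  ∀ z, ∃ c : E → ℝ, (∀ v ∈ V, 0 ≤ c v) ∧ ∑ v ∈ V, c v • v = z

theorem PositivelySpans.span_eq_top (hV : PositivelySpans V) :
    Submodule.span ℝ (V : Set E) = ⊤ := by
  refine eq_top_iff.mpr fun z _ => ?_
  obtain ⟨c, -, rfl⟩ := hV z
  exact Submodule.sum_mem _ fun v hv => Submodule.smul_mem _ _ (Submodule.subset_span hv)

theorem exists_basisSubset_costOn_le (hV : PositivelySpans V) (hw : ∀ v ∈ V, 0 < w v) {c : E → ℝ}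
    (hc : ∀ v ∈ V, 0 ≤ c v) (hgen : IsGenericPoint V (∑ v ∈ V, c v • v)) :
    ∃ s ∈ basisSubsets V, (∀ v ∈ s, 0 < coordOn s v (∑ v ∈ V, c v • v)) ∧
      costOn s w (∑ v ∈ V, c v • v) ≤ ∑ v ∈ V, w v * c v := by
  classical
  obtain ⟨t, htV, hli, c', hpos, hsum, hle⟩ := exists_linearIndepOn_rep_le hw hc
  obtain ⟨s, hs, hts⟩ := exists_basisSubset_superset hV.span_eq_top htV hli
  set z := ∑ v ∈ V, c v • v
  have hcoord (v) (hv : v ∈ s) : coordOn s v z = if v ∈ t then c' v else 0 := by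
    refine (mem_basisSubsets.mp hs).2.coordOn_eq (c := fun v => if v ∈ t then c' v else 0) ?_ hv
    simp only [ite_smul, zero_smul]
    rw [Finset.sum_ite_mem, Finset.inter_eq_right.mpr hts, hsum]
  refine ⟨s, hs, fun v hv => ?_, le_of_eq_of_le ?_ hle⟩
  · have hne := hgen s hs v hv
    rw [hcoord v hv] at hne ⊢
    split_ifs at hne ⊢ with hvt
    · exact hpos v hvt
    · exact absurd rfl hne
  · rw [costOn_apply, Finset.sum_congr rfl fun v hv => by rw [hcoord v hv]]
    simp only [mul_ite, mul_zero]
    rw [Finset.sum_ite_mem, Finset.inter_eq_right.mpr hts]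

open Classical in
/-- The maximal cones of the regular triangulation given by the cost `w`. -/
def triangulation (V : Finset E) (w : E → ℝ) : Finset (Finset E) :=
  (basisSubsets V).filter fun s => ∀ v ∈ V, v ∉ s → costOn s w v < w v

theorem mem_triangulation :
    s ∈ triangulation V w ↔ s ∈ basisSubsets V ∧ ∀ v ∈ V, v ∉ s → costOn s w v < w v := by
  simp [triangulation]

theorem isBasisSet_of_mem_triangulation (hs : s ∈ triangulation V w) : IsBasisSet s :=
  (mem_basisSubsets.mp (mem_triangulation.mp hs).1).2

theorem subset_of_mem_triangulation (hs : s ∈ triangulation V w) : s ⊆ V :=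
  (mem_basisSubsets.mp (mem_triangulation.mp hs).1).1

theorem costOn_le_of_mem_triangulation (hs : s ∈ triangulation V w) (hv : v ∈ V) :
    costOn s w v ≤ w v := by
  by_cases hvs : v ∈ s
  · exact ((isBasisSet_of_mem_triangulation hs).costOn_self w hvs).le
  · exact ((mem_triangulation.mp hs).2 v hv hvs).le

theorem subset_of_costOn_le (hs : s ∈ triangulation V w) (ht : t ∈ triangulation V w)
    (hz : ∀ v ∈ s, 0 < coordOn s v z) (hle : costOn s w z ≤ costOn t w z) : s ⊆ t := by
  intro u hu
  by_contra hut
  have hsV := subset_of_mem_triangulation hs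
  refine hle.not_gt ?_
  rw [(isBasisSet_of_mem_triangulation hs).map_eq_sum, costOn_apply s]
  refine Finset.sum_lt_sum (fun v hv => ?_) ⟨u, hu, ?_⟩
  · exact mul_le_mul_of_nonneg_right (costOn_le_of_mem_triangulation ht (hsV hv)) (hz v hv).le
  · exact mul_lt_mul_of_pos_right ((mem_triangulation.mp ht).2 u (hsV hu) hut) (hz u hu)

theorem triangulation_unique (hs : s ∈ triangulation V w) (ht : t ∈ triangulation V w)
    (hsz : ∀ v ∈ s, 0 < coordOn s v z) (htz : ∀ v ∈ t, 0 < coordOn t v z) : s = t := by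
  have hs' := isBasisSet_of_mem_triangulation hs
  have ht' := isBasisSet_of_mem_triangulation ht
  rcases le_total (costOn s w z) (costOn t w z) with h | h
  · exact hs'.eq_of_subset ht' (subset_of_costOn_le hs ht hsz h)
  · exact (ht'.eq_of_subset hs' (subset_of_costOn_le ht hs htz h)).symm

theorem exists_rep_lt_costOn (hs : s ∈ basisSubsets V) (hz : ∀ v ∈ s, 0 < coordOn s v z)
    (hv : v ∈ V) (hlt : w v < costOn s w v) :
    ∃ c : E → ℝ, (∀ u ∈ V, 0 ≤ c u) ∧ ∑ u ∈ V, c u • u = z ∧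
      ∑ u ∈ V, w u * c u < costOn s w z := by
  classical
  obtain ⟨hsV, hsB⟩ := mem_basisSubsets.mp hs
  have hev : ∀ᶠ τ in 𝓝[>] (0 : ℝ), ∀ u ∈ s, 0 < coordOn s u z + τ * -coordOn s u v :=
    s.eventually_all.mpr fun u hu => eventually_pos_add_mul (hz u hu) _
  obtain ⟨τ, hcoord, hτ⟩ := (hev.and self_mem_nhdsWithin).exists
  replace hτ : 0 < τ := hτ
  let c (u : E) : ℝ :=
    (if u ∈ s then coordOn s u z - τ * coordOn s u v else 0) + if u = v then τ else 0
  refine ⟨c, fun u _ => add_nonneg ?_ ?_, ?_, ?_⟩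
  · split_ifs with hu
    · simpa [sub_eq_add_neg] using (hcoord u hu).le
    · exact le_rfl
  · split_ifs <;> simp [hτ.le]
  · simp only [c, add_smul, ite_smul, zero_smul, Finset.sum_add_distrib, Finset.sum_ite_mem,
      Finset.inter_eq_right.mpr hsV, Finset.sum_ite_eq', hv, if_true, sub_smul,
      Finset.sum_sub_distrib, mul_smul, ← Finset.smul_sum, hsB.sum_coordOn_smul, sub_add_cancel]
  · simp only [c, mul_add, mul_ite, mul_zero, Finset.sum_add_distrib, Finset.sum_ite_mem,
      Finset.inter_eq_right.mpr hsV, Finset.sum_ite_eq', hv, if_true, mul_sub,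
      Finset.sum_sub_distrib, mul_left_comm (w _) τ, ← Finset.mul_sum, ← costOn_apply]
    nlinarith

theorem exists_mem_triangulation (hV : PositivelySpans V) (hw : IsGenericCost V w)
    (hz : IsGenericPoint V z) : ∃ s ∈ triangulation V w, ∀ v ∈ s, 0 < coordOn s v z := by
  classical
  have hbasis {c : E → ℝ} (hc : ∀ v ∈ V, 0 ≤ c v) (hcz : ∑ v ∈ V, c v • v = z) :
      ∃ s ∈ basisSubsets V, (∀ v ∈ s, 0 < coordOn s v z) ∧
        costOn s w z ≤ ∑ v ∈ V, w v * c v := by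
    subst hcz
    exact exists_basisSubset_costOn_le hV hw.pos hc hz
  obtain ⟨c₀, hc₀, hcz₀⟩ := hV z
  obtain ⟨s₀, hs₀, hpos₀, -⟩ := hbasis hc₀ hcz₀
  obtain ⟨s, hs, hmin⟩ := ((basisSubsets V).filter fun s =>
    ∀ v ∈ s, 0 < coordOn s v z).exists_min_image (costOn · w z)
      ⟨s₀, Finset.mem_filter.mpr ⟨hs₀, hpos₀⟩⟩
  simp only [Finset.mem_filter] at hs hmin
  refine ⟨s, mem_triangulation.mpr ⟨hs.1, fun v hv hvs => ?_⟩, hs.2⟩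
  refine lt_of_le_of_ne ?_ (hw.ne s hs.1 v hv hvs)
  by_contra! hlt
  obtain ⟨c, hc, hcz, hcost⟩ := exists_rep_lt_costOn hs.1 hs.2 hv hlt
  obtain ⟨t, ht, hpos, hle⟩ := hbasis hc hcz
  exact (hle.trans_lt hcost).not_ge (hmin t ⟨ht, hpos⟩)

end Cones

/-! ### Ehrhart reciprocity for a lattice gauge -/

section HalfOpen

variable {a b t : ℝ}

/-- A unit interval closed on exactly one side, chosen by the sign of `a`: the range of the
coordinates of a half-open fundamental parallelepiped. -/
def halfOpenUnit (a : ℝ) : Set ℝ := if 0 < a then Set.Ico 0 1 else Set.Ioc 0 1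

/-- The closed or open positive ray, chosen by the sign of `a`: the range of the coordinates of a
half-open cone. -/
def halfOpenRay (a : ℝ) : Set ℝ := if 0 < a then Set.Ici 0 else Set.Ioi 0

theorem nonneg_of_mem_halfOpenRay (hb : b ∈ halfOpenRay a) : 0 ≤ b := by
  unfold halfOpenRay at hb
  split_ifs at hb with ha
  exacts [hb, (show 0 < b from hb).le]

theorem le_one_of_mem_halfOpenUnit (ht : t ∈ halfOpenUnit a) : t ≤ 1 := by
  unfold halfOpenUnit at ht
  split_ifs at ht with ha
  exacts [ht.2.le, ht.2]

theorem add_natCast_mem_halfOpenRay (ht : t ∈ halfOpenUnit a) (m : ℕ) :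
    t + m ∈ halfOpenRay a := by
  unfold halfOpenUnit at ht
  unfold halfOpenRay
  split_ifs at ht ⊢ with ha
  · exact add_nonneg ht.1 m.cast_nonneg
  · exact add_pos_of_pos_of_nonneg ht.1 m.cast_nonneg

theorem natCast_eq_of_add_eq {t' : ℝ} {m m' : ℕ} (ht : t ∈ halfOpenUnit a)
    (ht' : t' ∈ halfOpenUnit a) (h : t + m = t' + m') : m = m' := by
  have habs : |(m : ℤ) - m'| < 1 := by
    have hreal : |(m : ℝ) - m'| < 1 := by
      unfold halfOpenUnit at ht ht'
      split_ifs at ht ht' <;> rw [abs_lt] <;> constructor <;>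
        linarith [ht.1, ht.2, ht'.1, ht'.2]
    exact_mod_cast hreal
  exact_mod_cast sub_eq_zero.mp (Int.abs_lt_one_iff.mp habs)

theorem exists_natCast_sub_mem_halfOpenUnit (hb : b ∈ halfOpenRay a) :
    ∃ m : ℕ, b - m ∈ halfOpenUnit a := by
  unfold halfOpenRay at hb
  unfold halfOpenUnit
  split_ifs at hb ⊢ with ha
  · exact ⟨⌊b⌋₊, sub_nonneg.mpr (Nat.floor_le hb), by linarith [Nat.lt_floor_add_one b]⟩
  · have hceil : 1 ≤ ⌈b⌉₊ := Nat.one_le_ceil_iff.mpr hb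
    refine ⟨⌈b⌉₊ - 1, ?_, ?_⟩ <;> rw [Nat.cast_sub hceil, Nat.cast_one]
    · linarith [Nat.ceil_lt_add_one (show (0 : ℝ) ≤ b from (show 0 < b from hb).le)]
    · linarith [Nat.le_ceil b]

theorem one_sub_mem_halfOpenUnit (ha : a ≠ 0) (ht : t ∈ halfOpenUnit (-a)) :
    1 - t ∈ halfOpenUnit a := by
  unfold halfOpenUnit at *
  rcases ha.lt_or_gt with h | h
  · rw [if_pos (neg_pos.mpr h)] at ht
    rw [if_neg h.not_gt]
    exact ⟨by linarith [ht.2], by linarith [ht.1]⟩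
  · rw [if_neg (by linarith)] at ht
    rw [if_pos h]
    exact ⟨by linarith [ht.2], by linarith [ht.1]⟩

open Topology in
theorem eventually_add_mul_pos_iff_mem_halfOpenRay (a b : ℝ) :
    ∀ᶠ t in 𝓝[>] (0 : ℝ), 0 < b + t * a ↔ b ∈ halfOpenRay a := by
  unfold halfOpenRay
  rcases lt_trichotomy b 0 with hb | rfl | hb
  · filter_upwards [eventually_pos_add_mul (neg_pos.mpr hb) (-a)] with t ht
    split_ifs <;> exact iff_of_false (by linarith) (by simp [hb, hb.le])
  · filter_upwards [self_mem_nhdsWithin] with t (ht : 0 < t)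
    split_ifs with h
    · simpa using mul_pos ht h
    · simpa using mul_nonpos_of_nonneg_of_nonpos ht.le (not_lt.mp h)
  · filter_upwards [eventually_pos_add_mul hb a] with t ht
    split_ifs <;> exact iff_of_true ht (by simp [hb, hb.le])

end HalfOpen

section ShiftedBinomial

open Polynomial

/-- The polynomial whose value at an integer `k ≥ a` is the binomial coefficient `(k - a + n choose
n)`, the number of monomials of degree `k - a` in `n + 1` variables. -/
def shiftedBinomial (n : ℕ) (a : ℝ) : ℝ[X] :=
  C (n.factorial : ℝ)⁻¹ * (ascPochhammer ℝ n).comp (X + C (1 - a))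

theorem eval_shiftedBinomial (n : ℕ) (a t : ℝ) : (shiftedBinomial n a).eval t =
    (n.factorial : ℝ)⁻¹ * (ascPochhammer ℝ n).eval (t + (1 - a)) := by
  simp [shiftedBinomial]

theorem natDegree_shiftedBinomial_le (n : ℕ) (a : ℝ) : (shiftedBinomial n a).natDegree ≤ n := by
  refine (natDegree_C_mul_le _ _).trans ?_
  rw [natDegree_comp, ascPochhammer_natDegree, natDegree_X_add_C, mul_one]

theorem shiftedBinomial_comp_neg_X (n : ℕ) (a : ℝ) :
    (shiftedBinomial n a).comp (-X) = (-1) ^ n * shiftedBinomial n (n + 1 - a) := by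
  refine Polynomial.funext fun t => ?_
  have harg : -t + (1 - a) = -(t - (1 - a)) := by ring
  rw [eval_comp, eval_mul, eval_shiftedBinomial, eval_shiftedBinomial, eval_neg, eval_X, harg,
    ascPochhammer_eval_neg_eq_descPochhammer, descPochhammer_eval_eq_ascPochhammer]
  simp only [eval_pow, eval_neg, eval_one]
  ring_nf

theorem eval_shiftedBinomial_of_le {j k : ℕ} (n : ℕ) (hjk : j ≤ k) :
    (shiftedBinomial n j).eval (k : ℝ) = ((k - j + n).choose n : ℝ) := by
  have harg : (k : ℝ) + (1 - j) = ((k - j : ℕ) : ℝ) + 1 := by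
    rw [Nat.cast_sub hjk]
    ring
  rw [eval_shiftedBinomial, harg, inv_mul_eq_iff_eq_mul₀ (by positivity), ← Nat.cast_add_one,
    ← Nat.cast_ascFactorial, Nat.ascFactorial_eq_factorial_mul_choose, Nat.cast_mul]

theorem eval_shiftedBinomial_of_lt {j k n : ℕ} (hkj : k < j) (hjn : j ≤ k + n) :
    (shiftedBinomial n j).eval (k : ℝ) = 0 := by
  have harg : (k : ℝ) + (1 - j) = -((j - k - 1 : ℕ) : ℝ) := by
    rw [Nat.sub_sub, Nat.cast_sub (by lia)]
    push_cast
    ring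
  rw [eval_shiftedBinomial, harg, ascPochhammer_eval_neg_coe_nat_of_lt (by lia), mul_zero]

end ShiftedBinomial

section LevelMultiplicities

variable {ι : Type*} {s : Finset ι} {a : ℝ} {n k : ℕ}

/-- The multiplicities of the elements of `s` in the points of level `k` that lie in the translate,
by a point of level `a`, of the semigroup generated by `s`. -/
def levelMultiplicities (s : Finset ι) (a : ℝ) (k : ℕ) : Set (ι →₀ ℕ) :=
  {m | m.support ⊆ s ∧ a + ∑ v ∈ s, (m v : ℝ) = k}

open Classical in
theorem levelMultiplicities_of_le {j : ℕ} (hj : a = j) (hjk : j ≤ k) :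
    levelMultiplicities s a k = Finset.finsuppAntidiag s (k - j) := by
  ext m
  have hsum : a + ∑ v ∈ s, (m v : ℝ) = k ↔ ∑ v ∈ s, m v = k - j := by
    rw [hj]
    norm_cast
    lia
  rw [Finset.mem_coe, Finset.mem_finsuppAntidiag, and_comm]
  exact and_congr_right' hsum

theorem ncard_levelMultiplicities (hs : s.card = n + 1) (ha : ∃ j : ℕ, a = j)
    (han : a ≤ n + 1) (hk : 1 ≤ k) :
    ((levelMultiplicities s a k).ncard : ℝ) = (shiftedBinomial n (a)).eval (k : ℝ) := by
  classical
  obtain ⟨j, hj⟩ := ha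
  rcases le_or_gt j k with hjk | hkj
  · rw [levelMultiplicities_of_le hj hjk, Set.ncard_coe_finset,
      Finset.card_finsuppAntidiag_nat_eq_choose, hs, hj, eval_shiftedBinomial_of_le n hjk,
      ← Nat.choose_symm_add]
    congr 2
    lia
  · have hempty : levelMultiplicities s a k = ∅ := by
      refine Set.eq_empty_of_forall_notMem fun m hm => ?_
      have hlt : (k : ℝ) < j := by exact_mod_cast hkj
      linarith [hm.2, Finset.sum_nonneg fun v (_ : v ∈ s) => (m v).cast_nonneg (α := ℝ)]
    have hjn : j ≤ n + 1 := by exact_mod_cast hj ▸ han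
    rw [hempty, hj, eval_shiftedBinomial_of_lt hkj (by lia), Set.ncard_empty, Nat.cast_zero]

end LevelMultiplicities

section Gauge

variable {E : Type*} [AddCommGroup E] [Module ℝ E]

/-- `h` is the gauge of the polytope `conv (V ∪ {0})` with lattice generators `V`, and it is
integral on the lattice `Λ`, as happens for a reflexive polytope with vertices in `V`. -/
structure IsLatticeGauge (Λ : AddSubgroup E) (V : Finset E) (h : E → ℝ) : Prop where
  mem_lattice : ∀ v ∈ V, v ∈ Λ
  add_le : ∀ x y, h (x + y) ≤ h x + h y
  smul_of_nonneg : ∀ c x, 0 ≤ c → h (c • x) = c * h x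
  le_one : ∀ v ∈ V, h v ≤ 1
  exists_rep : ∀ x, ∃ c : E → ℝ, (∀ v ∈ V, 0 ≤ c v) ∧ ∑ v ∈ V, c v • v = x ∧ ∑ v ∈ V, c v = h x
  exists_natCast : ∀ x ∈ Λ, ∃ k : ℕ, h x = k
  finite_le : ∀ r, {x | x ∈ Λ ∧ h x ≤ r}.Finite

/-- The cone spanned by `s` with the facets away from `ξ` removed. -/
def halfOpenCone (s : Finset E) (ξ : E) : Set E :=
  {x | ∀ v ∈ s, coordOn s v x ∈ halfOpenRay (coordOn s v ξ)}

/-- The lattice points of the half-open fundamental parallelepiped of `s`, with the facets away from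
`ξ` removed. -/
def halfOpenBox (Λ : AddSubgroup E) (s : Finset E) (ξ : E) : Set E :=
  {p | p ∈ Λ ∧ ∀ v ∈ s, coordOn s v p ∈ halfOpenUnit (coordOn s v ξ)}

variable {Λ : AddSubgroup E} {V s : Finset E} {h w : E → ℝ} {p x ξ : E}

theorem coordOn_nonneg_of_mem_halfOpenCone (hx : x ∈ halfOpenCone s ξ) :
    ∀ v ∈ s, 0 ≤ coordOn s v x :=
  fun v hv => nonneg_of_mem_halfOpenRay (hx v hv)

theorem IsBasisSet.coordOn_add_sum (hs : IsBasisSet s) (p : E) (m : E → ℕ) {v : E} (hv : v ∈ s) :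
    coordOn s v (p + ∑ u ∈ s, m u • u) = coordOn s v p + m v := by
  rw [map_add, hs.coordOn_eq (c := fun u => (m u : ℝ))
    (Finset.sum_congr rfl fun u _ => Nat.cast_smul_eq_nsmul ℝ _ _) hv]

theorem IsBasisSet.add_sum_mem_halfOpenCone (hs : IsBasisSet s) (hp : p ∈ halfOpenBox Λ s ξ)
    (m : E → ℕ) : p + ∑ u ∈ s, m u • u ∈ halfOpenCone s ξ := fun v hv => by
  rw [hs.coordOn_add_sum p m hv]
  exact add_natCast_mem_halfOpenRay (hp.2 v hv) (m v)

theorem halfOpenBox_subset_halfOpenCone :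
    halfOpenBox Λ s ξ ⊆ halfOpenCone s ξ := fun p hp v hv => by
  simpa using add_natCast_mem_halfOpenRay (hp.2 v hv) 0

theorem IsBasisSet.eq_of_add_sum_eq (hs : IsBasisSet s) {p' : E} {m m' : E →₀ ℕ}
    (hp : p ∈ halfOpenBox Λ s ξ) (hp' : p' ∈ halfOpenBox Λ s ξ) (hm : m.support ⊆ s)
    (hm' : m'.support ⊆ s) (heq : p + ∑ u ∈ s, m u • u = p' + ∑ u ∈ s, m' u • u) :
    p = p' ∧ m = m' := by
  have hmm : m = m' := by
    ext v
    by_cases hv : v ∈ s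
    · have hcoord := congrArg (coordOn s v) heq
      rw [hs.coordOn_add_sum p m hv, hs.coordOn_add_sum p' m' hv] at hcoord
      exact natCast_eq_of_add_eq (hp.2 v hv) (hp'.2 v hv) hcoord
    · rw [Finsupp.notMem_support_iff.mp fun h => hv (hm h),
        Finsupp.notMem_support_iff.mp fun h => hv (hm' h)]
  subst hmm
  exact ⟨add_right_cancel heq, rfl⟩

theorem IsBasisSet.exists_eq_add_sum (hs : IsBasisSet s) (hsΛ : ∀ v ∈ s, v ∈ Λ) (hxΛ : x ∈ Λ)
    (hx : x ∈ halfOpenCone s ξ) : ∃ p ∈ halfOpenBox Λ s ξ, ∃ m : E →₀ ℕ, m.support ⊆ s ∧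
      p + ∑ u ∈ s, m u • u = x := by
  classical
  choose! m hm using fun v hv => exists_natCast_sub_mem_halfOpenUnit (hx v hv)
  refine ⟨x - ∑ u ∈ s, m u • u, ⟨?_, fun v hv => ?_⟩,
    Finsupp.onFinset s (fun v => if v ∈ s then m v else 0) (fun v hv => by simp_all),
    Finsupp.support_onFinset_subset, ?_⟩
  · exact Λ.sub_mem hxΛ (Λ.sum_mem fun v hv => Λ.nsmul_mem (hsΛ v hv) _)
  · have hcoord := hs.coordOn_add_sum (x - ∑ u ∈ s, m u • u) m hv
    rw [sub_add_cancel] at hcoord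
    rw [← sub_eq_of_eq_add hcoord]
    exact hm v hv
  · rw [sub_add_eq_add_sub, sub_eq_iff_eq_add]
    exact congrArg (x + ·) (Finset.sum_congr rfl fun u hu => by simp [hu])

namespace IsLatticeGauge

theorem positivelySpans (hh : IsLatticeGauge Λ V h) : PositivelySpans V := fun x =>
  (hh.exists_rep x).imp fun _ hc => ⟨hc.1, hc.2.1⟩

theorem sum_le (hh : IsLatticeGauge Λ V h) {t : Finset E} (htV : t ⊆ V) {c : E → ℝ}
    (hc : ∀ v ∈ t, 0 ≤ c v) : h (∑ v ∈ t, c v • v) ≤ ∑ v ∈ t, c v := by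
  have hzero : h 0 = 0 := by simpa using hh.smul_of_nonneg 0 0 le_rfl
  calc h (∑ v ∈ t, c v • v) ≤ ∑ v ∈ t, h (c v • v) :=
        Finset.le_sum_of_subadditive h hzero.le hh.add_le t _
    _ ≤ ∑ v ∈ t, c v := Finset.sum_le_sum fun v hv => by
        rw [hh.smul_of_nonneg _ _ (hc v hv)]
        exact mul_le_of_le_one_right (hc v hv) (hh.le_one v (htV hv))

theorem eq_sum_coordOn (hh : IsLatticeGauge Λ V h) (hw : IsGenericCost V w)
    (hs : s ∈ triangulation V w) (hx : ∀ v ∈ s, 0 ≤ coordOn s v x) :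
    h x = ∑ v ∈ s, coordOn s v x := by
  apply le_antisymm
  · have hle := hh.sum_le (subset_of_mem_triangulation hs) hx
    rwa [(isBasisSet_of_mem_triangulation hs).sum_coordOn_smul] at hle
  · obtain ⟨c, hc, hcx, hch⟩ := hh.exists_rep x
    have hone : ∀ v ∈ V, costOn s 1 v ≤ 1 := fun v hv => by
      by_contra! hlt
      exact (hw.lt_of_one_lt s (mem_triangulation.mp hs).1 v hv hlt).not_ge
        (costOn_le_of_mem_triangulation hs hv)
    calc ∑ v ∈ s, coordOn s v x = costOn s 1 x := by simp [costOn_apply]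
      _ = ∑ v ∈ V, c v * costOn s 1 v := by rw [← hcx]; simp
      _ ≤ ∑ v ∈ V, c v := Finset.sum_le_sum fun v hv =>
        mul_le_of_le_one_right (hc v hv) (hone v hv)
      _ = h x := hch

open Topology in
theorem existsUnique_mem_halfOpenCone (hh : IsLatticeGauge Λ V h) (hw : IsGenericCost V w)
    (hξ : IsGenericPoint V ξ) (x : E) : ∃! s, s ∈ triangulation V w ∧ x ∈ halfOpenCone s ξ := by
  have hev : ∀ᶠ t in 𝓝[>] (0 : ℝ), ∀ s ∈ basisSubsets V, ∀ v ∈ s,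
      coordOn s v (x + t • ξ) ≠ 0 ∧
        (0 < coordOn s v (x + t • ξ) ↔ coordOn s v x ∈ halfOpenRay (coordOn s v ξ)) := by
    simp only [map_add, map_smul, smul_eq_mul]
    exact (Finset.eventually_all _).mpr fun s hs => (Finset.eventually_all _).mpr fun v hv =>
      (eventually_add_mul_ne_zero _ (hξ s hs v hv)).and
        (eventually_add_mul_pos_iff_mem_halfOpenRay _ _)
  obtain ⟨t, ht⟩ := hev.exists
  have hcone {s : Finset E} (hs : s ∈ triangulation V w) :
      x ∈ halfOpenCone s ξ ↔ ∀ v ∈ s, 0 < coordOn s v (x + t • ξ) :=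
    forall₂_congr fun v hv => (ht s (mem_triangulation.mp hs).1 v hv).2.symm
  obtain ⟨s, hs, hpos⟩ := exists_mem_triangulation hh.positivelySpans hw
    (z := x + t • ξ) fun s hs v hv => (ht s hs v hv).1
  exact ⟨s, ⟨hs, (hcone hs).mpr hpos⟩, fun s' hs' =>
    triangulation_unique hs'.1 hs ((hcone hs'.1).mp hs'.2) hpos⟩

theorem eq_sum_coordOn_of_mem_cone (hh : IsLatticeGauge Λ V h) (hw : IsGenericCost V w)
    (hs : s ∈ triangulation V w) (hx : x ∈ halfOpenCone s ξ) : h x = ∑ v ∈ s, coordOn s v x :=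
  hh.eq_sum_coordOn hw hs (coordOn_nonneg_of_mem_halfOpenCone hx)

theorem apply_add_sum (hh : IsLatticeGauge Λ V h) (hw : IsGenericCost V w)
    (hs : s ∈ triangulation V w) (hp : p ∈ halfOpenBox Λ s ξ) (m : E → ℕ) :
    h (p + ∑ u ∈ s, m u • u) = h p + ∑ u ∈ s, (m u : ℝ) := by
  have hsB := isBasisSet_of_mem_triangulation hs
  rw [hh.eq_sum_coordOn_of_mem_cone hw hs (hsB.add_sum_mem_halfOpenCone hp m),
    hh.eq_sum_coordOn_of_mem_cone hw hs (halfOpenBox_subset_halfOpenCone hp),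
    ← Finset.sum_add_distrib]
  exact Finset.sum_congr rfl fun v hv => hsB.coordOn_add_sum p m hv

theorem apply_le_finrank (hh : IsLatticeGauge Λ V h) (hw : IsGenericCost V w)
    (hs : s ∈ triangulation V w) (hp : p ∈ halfOpenBox Λ s ξ) : h p ≤ Module.finrank ℝ E := by
  rw [hh.eq_sum_coordOn_of_mem_cone hw hs (halfOpenBox_subset_halfOpenCone hp),
    ← (isBasisSet_of_mem_triangulation hs).card_eq_finrank]
  simpa using Finset.sum_le_card_nsmul s _ 1 fun v hv => le_one_of_mem_halfOpenUnit (hp.2 v hv)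

theorem finite_halfOpenBox (hh : IsLatticeGauge Λ V h) (hw : IsGenericCost V w)
    (hs : s ∈ triangulation V w) : (halfOpenBox Λ s ξ).Finite :=
  (hh.finite_le _).subset fun _ hp => ⟨hp.1, hh.apply_le_finrank hw hs hp⟩

theorem finite_eq (hh : IsLatticeGauge Λ V h) (r : ℝ) : {x | x ∈ Λ ∧ h x = r}.Finite :=
  (hh.finite_le r).subset fun _ hx => ⟨hx.1, hx.2.le⟩

end IsLatticeGauge

variable {n k : ℕ}

namespace IsLatticeGauge

theorem level_halfOpenCone_eq_biUnion (hh : IsLatticeGauge Λ V h) (hw : IsGenericCost V w)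
    (hs : s ∈ triangulation V w) : {x | x ∈ Λ ∧ h x = k} ∩ halfOpenCone s ξ =
      ⋃ p ∈ halfOpenBox Λ s ξ,
        (fun m => p + ∑ u ∈ s, m u • u) '' levelMultiplicities s (h p) k := by
  have hsB := isBasisSet_of_mem_triangulation hs
  have hsΛ : ∀ v ∈ s, v ∈ Λ := fun v hv => hh.mem_lattice v (subset_of_mem_triangulation hs hv)
  ext x
  simp only [Set.mem_iUnion, Set.mem_image, exists_prop]
  constructor
  · rintro ⟨⟨hxΛ, hxk⟩, hx⟩
    obtain ⟨p, hp, m, hm, rfl⟩ := hsB.exists_eq_add_sum hsΛ hxΛ hx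
    exact ⟨p, hp, m, ⟨hm, by rw [← hh.apply_add_sum hw hs hp, hxk]⟩, rfl⟩
  · rintro ⟨p, hp, m, ⟨-, hk⟩, rfl⟩
    exact ⟨⟨Λ.add_mem hp.1 (Λ.sum_mem fun v hv => Λ.nsmul_mem (hsΛ v hv) _),
      by rw [hh.apply_add_sum hw hs hp, hk]⟩, hsB.add_sum_mem_halfOpenCone hp m⟩

theorem ncard_level_halfOpenCone (hh : IsLatticeGauge Λ V h) (hw : IsGenericCost V w)
    (hs : s ∈ triangulation V w) (hn : Module.finrank ℝ E = n + 1) (hk : 1 ≤ k) :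
    (({x | x ∈ Λ ∧ h x = k} ∩ halfOpenCone s ξ).ncard : ℝ) =
      (∑ᶠ p ∈ halfOpenBox Λ s ξ, shiftedBinomial n (h p)).eval (k : ℝ) := by
  have hsB := isBasisSet_of_mem_triangulation hs
  have hbox := hh.finite_halfOpenBox hw hs (ξ := ξ)
  have hdisj : (halfOpenBox Λ s ξ).PairwiseDisjoint fun p =>
      (fun m : E →₀ ℕ => p + ∑ u ∈ s, m u • u) '' levelMultiplicities s (h p) k := by
    refine fun p hp p' hp' hne => Set.disjoint_left.mpr ?_
    rintro _ ⟨m, hm, rfl⟩ ⟨m', hm', heq⟩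
    exact hne (hsB.eq_of_add_sum_eq hp hp' hm.1 hm'.1 heq.symm).1
  have hunion := hh.level_halfOpenCone_eq_biUnion hw hs (ξ := ξ) (k := k)
  rw [hunion, Set.Finite.ncard_biUnion hbox (fun p hp => ?_) hdisj, Nat.cast_finsum_mem hbox,
    ← Polynomial.leval_apply, ← LinearMap.toAddMonoidHom_coe, AddMonoidHom.map_finsum_mem _ _ hbox]
  · refine finsum_mem_congr rfl fun p hp => ?_
    rw [Set.InjOn.ncard_image fun m hm m' hm' heq =>
      (hsB.eq_of_add_sum_eq hp hp hm.1 hm'.1 heq).2]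
    refine ncard_levelMultiplicities (hsB.card_eq_finrank.trans hn) (hh.exists_natCast p hp.1) ?_ hk
    exact_mod_cast hn ▸ hh.apply_le_finrank hw hs hp
  · exact (hh.finite_eq k).subset fun x hx =>
      (hunion.symm.subset (Set.mem_biUnion hp hx)).1

theorem sum_sub_mem_halfOpenBox (hh : IsLatticeGauge Λ V h) (hs : s ∈ triangulation V w)
    (hξ : IsGenericPoint V ξ) (hp : p ∈ halfOpenBox Λ s (-ξ)) :
    ∑ u ∈ s, u - p ∈ halfOpenBox Λ s ξ := by
  have hsB := isBasisSet_of_mem_triangulation hs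
  refine ⟨Λ.sub_mem (Λ.sum_mem fun v hv =>
    hh.mem_lattice v (subset_of_mem_triangulation hs hv)) hp.1, fun v hv => ?_⟩
  have hsum : coordOn s v (∑ u ∈ s, u) = 1 := hsB.coordOn_eq (c := 1) (by simp) hv
  rw [map_sub, hsum]
  exact one_sub_mem_halfOpenUnit (hξ s (mem_triangulation.mp hs).1 v hv)
    (by simpa using hp.2 v hv)

theorem apply_sum_sub (hh : IsLatticeGauge Λ V h) (hw : IsGenericCost V w)
    (hs : s ∈ triangulation V w) (hn : Module.finrank ℝ E = n + 1)
    (hξ : IsGenericPoint V ξ) (hp : p ∈ halfOpenBox Λ s (-ξ)) :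
    h (∑ u ∈ s, u - p) = n + 1 - h p := by
  have hsB := isBasisSet_of_mem_triangulation hs
  rw [hh.eq_sum_coordOn_of_mem_cone hw hs (halfOpenBox_subset_halfOpenCone
      (hh.sum_sub_mem_halfOpenBox hs hξ hp)),
    hh.eq_sum_coordOn_of_mem_cone hw hs (halfOpenBox_subset_halfOpenCone hp)]
  have hsum : ∀ v ∈ s, coordOn s v (∑ u ∈ s, u) = 1 :=
    fun v hv => hsB.coordOn_eq (c := 1) (by simp) hv
  simp only [map_sub, Finset.sum_sub_distrib, Finset.sum_congr rfl hsum, Finset.sum_const,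
    hsB.card_eq_finrank, hn, nsmul_one, Nat.cast_add, Nat.cast_one]

open Polynomial in
theorem finsum_shiftedBinomial_comp_neg_X (hh : IsLatticeGauge Λ V h) (hw : IsGenericCost V w)
    (hs : s ∈ triangulation V w) (hn : Module.finrank ℝ E = n + 1) (hξ : IsGenericPoint V ξ) :
    (∑ᶠ p ∈ halfOpenBox Λ s ξ, shiftedBinomial n (h p)).comp (-X) =
      (-1) ^ n * ∑ᶠ p ∈ halfOpenBox Λ s (-ξ), shiftedBinomial n (h p) := by
  have hmaps : Set.MapsTo (fun p => ∑ u ∈ s, u - p) (halfOpenBox Λ s ξ) (halfOpenBox Λ s (-ξ)) :=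
    fun p hp => hh.sum_sub_mem_halfOpenBox hs hξ.neg (by rwa [neg_neg])
  have hbij : Set.BijOn (fun p => ∑ u ∈ s, u - p) (halfOpenBox Λ s (-ξ)) (halfOpenBox Λ s ξ) :=
    Set.InvOn.bijOn (f' := fun p => ∑ u ∈ s, u - p)
      ⟨fun p _ => sub_sub_cancel _ p, fun p _ => sub_sub_cancel _ p⟩
      (fun p hp => hh.sum_sub_mem_halfOpenBox hs hξ hp) hmaps
  have hbox : (halfOpenBox Λ s ξ).Finite := hh.finite_halfOpenBox hw hs
  have hcomp := AddMonoidHom.map_finsum_mem (fun p => shiftedBinomial n (h p))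
    (compRingHom (-X)).toAddMonoidHom hbox
  rw [mul_finsum_mem]
  refine hcomp.trans (finsum_mem_eq_of_bijOn _ hbij fun p hp => ?_).symm
  rw [hh.apply_sum_sub hw hs hn hξ hp]
  refine Eq.trans ?_ (shiftedBinomial_comp_neg_X n _).symm
  rw [sub_sub_cancel]

theorem ncard_level_eq_sum (hh : IsLatticeGauge Λ V h) (hw : IsGenericCost V w)
    (hξ : IsGenericPoint V ξ) (r : ℝ) : {x | x ∈ Λ ∧ h x = r}.ncard =
      ∑ s ∈ triangulation V w, ({x | x ∈ Λ ∧ h x = r} ∩ halfOpenCone s ξ).ncard := by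
  have hunion : {x | x ∈ Λ ∧ h x = r} =
      ⋃ s ∈ (triangulation V w : Set (Finset E)), {x | x ∈ Λ ∧ h x = r} ∩ halfOpenCone s ξ := by
    refine Set.Subset.antisymm (fun x hx => ?_)
      (Set.iUnion₂_subset fun _ _ => Set.inter_subset_left)
    obtain ⟨s, hs, -⟩ := hh.existsUnique_mem_halfOpenCone hw hξ x
    exact Set.mem_biUnion hs.1 ⟨hx, hs.2⟩
  rw [← finsum_mem_coe_finset, ← Set.Finite.ncard_biUnion (Finset.finite_toSet _)
    (fun s _ => (hh.finite_eq r).inter_of_left _) fun s hs t ht hst => ?_, ← hunion]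
  exact Set.disjoint_left.mpr fun x hxs hxt => hst
    ((hh.existsUnique_mem_halfOpenCone hw hξ x).unique ⟨hs, hxs.2⟩ ⟨ht, hxt.2⟩)

open Polynomial in
theorem exists_ehrhart_polynomial (hh : IsLatticeGauge Λ V h)
    (hn : Module.finrank ℝ E = n + 1) :
    ∃ Q : ℝ[X], Q.natDegree ≤ n ∧ Q.comp (-X) = (-1) ^ n * Q ∧
      ∀ k : ℕ, 1 ≤ k → ({x | x ∈ Λ ∧ h x = k}.ncard : ℝ) = Q.eval (k : ℝ) := by
  obtain ⟨w, hw⟩ := exists_isGenericCost V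
  obtain ⟨ξ, hξ⟩ := exists_isGenericPoint V
  let P (ξ : E) : ℝ[X] :=
    ∑ s ∈ triangulation V w, ∑ᶠ p ∈ halfOpenBox Λ s ξ, shiftedBinomial n (h p)
  have hPcomp {ξ : E} (hξ : IsGenericPoint V ξ) : (P ξ).comp (-X) = (-1) ^ n * P (-ξ) := by
    simp only [P, sum_comp, Finset.mul_sum]
    exact Finset.sum_congr rfl fun s hs => hh.finsum_shiftedBinomial_comp_neg_X hw hs hn hξ
  have hPdeg (ξ : E) : (P ξ).natDegree ≤ n :=
    natDegree_sum_le_of_forall_le _ _ fun s _ => finsum_mem_induction (natDegree · ≤ n)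
      (by simp) (fun _ _ => natDegree_add_le_of_degree_le) fun p _ =>
        natDegree_shiftedBinomial_le n _
  have hPeval {ξ : E} (hξ : IsGenericPoint V ξ) (k : ℕ) (hk : 1 ≤ k) :
      ({x | x ∈ Λ ∧ h x = k}.ncard : ℝ) = (P ξ).eval (k : ℝ) := by
    rw [hh.ncard_level_eq_sum hw hξ, Nat.cast_sum, eval_finsetSum]
    exact Finset.sum_congr rfl fun s hs => hh.ncard_level_halfOpenCone hw hs hn hk
  refine ⟨C (1 / 2) * (P ξ + P (-ξ)), ?_, ?_, fun k hk => ?_⟩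
  · exact (natDegree_C_mul_le _ _).trans
      (natDegree_add_le_of_degree_le (hPdeg ξ) (hPdeg (-ξ)))
  · rw [mul_comp, add_comp, C_comp, hPcomp hξ, hPcomp hξ.neg, neg_neg]
    ring
  · rw [eval_mul, eval_C, eval_add, ← hPeval hξ k hk, ← hPeval hξ.neg k hk]
    ring

theorem exists_ncard_level_eq_odd_cubic (hh : IsLatticeGauge Λ V h)
    (hn : Module.finrank ℝ E = 4) : ∃ a b : ℝ, ∀ k : ℕ, 1 ≤ k →
      ({x | x ∈ Λ ∧ h x = k}.ncard : ℝ) = a * k ^ 3 + b * k := by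
  obtain ⟨Q, hdeg, hodd, hQ⟩ := hh.exists_ehrhart_polynomial hn
  refine ⟨Q.coeff 3, Q.coeff 1, fun k hk => ?_⟩
  have hsymm : Q.eval (-(k : ℝ)) = -Q.eval (k : ℝ) := by
    simpa [Odd.neg_one_pow (show Odd 3 by decide)] using congrArg (Polynomial.eval (k : ℝ)) hodd
  rw [hQ k hk]
  rw [Polynomial.eval_eq_sum_range' (Nat.lt_succ_of_le hdeg),
    Polynomial.eval_eq_sum_range' (Nat.lt_succ_of_le hdeg)] at *
  simp only [Finset.sum_range_succ, Finset.sum_range_zero] at *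
  linear_combination (1 / 2) * hsymm

end IsLatticeGauge

end Gauge

/-! ### Exponentially weighted lattice sums -/

section Growth

open scoped Topology Matrix

variable {d : ℕ}

theorem exists_complementary_coordinates {ι : Type*} [Fintype ι] {a : ι → Fin d → ℝ}
    (ha : LinearIndependent ℝ a) :
    ∃ J : Finset (Fin d), J.card + Fintype.card ι = d ∧
      ∀ x, (∀ i, a i ⬝ᵥ x = 0) → (∀ j ∈ J, x j = 0) → x = 0 := by
  classical
  set w : ι ⊕ Fin d → Fin d → ℝ := Sum.elim a fun j => Pi.single j 1
  have hinl : LinearIndepOn ℝ w (Set.range Sum.inl) :=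
    (linearIndepOn_range_iff Sum.inl_injective w).2 ha
  obtain ⟨b, -, hsub, hspan, hb⟩ := exists_linearIndepOn_extension hinl (Set.subset_univ _)
  have hw : Submodule.span ℝ (w '' b) = ⊤ := by
    rw [eq_top_iff, ← (Pi.basisFun ℝ (Fin d)).span_eq, Submodule.span_le]
    rintro _ ⟨j, rfl⟩
    exact hspan ⟨Sum.inr j, trivial, by simp [w]⟩
  have hcard : b.toFinset.card = d := by
    have hrank := finrank_span_eq_card hb
    rw [← Set.image_eq_range, hw, finrank_top, Module.finrank_fin_fun] at hrank
    rw [Set.toFinset_card, ← hrank]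
  have hleft : b.toFinset.toLeft = Finset.univ :=
    Finset.eq_univ_iff_forall.2 fun i => by simpa using hsub ⟨i, rfl⟩
  refine ⟨b.toFinset.toRight, ?_, fun x hax hJ => ?_⟩
  · have hsum := Finset.card_toLeft_add_card_toRight (u := b.toFinset)
    rw [hleft, Finset.card_univ, hcard] at hsum
    omega
  · have hle : ⊤ ≤ LinearMap.ker ((dotProductBilin ℝ ℝ).flip x) := by
      rw [← hw, Submodule.span_le]
      rintro _ ⟨i | j, hi, rfl⟩
      · exact hax i
      · simpa [w] using hJ j (by simpa using hi)
    exact dotProduct_self_eq_zero.1 (hle (Submodule.mem_top (x := x)))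

theorem exists_mul_sum_exp_abs_le {c : ℝ} (hc : 0 < c) :
    ∃ C, 0 ≤ C ∧ ∀ s ∈ Set.Ioc (0 : ℝ) 1, ∀ A : Finset ℤ,
      s * ∑ n ∈ A, Real.exp (-(s * (c * |(n : ℝ)|))) ≤ C := by
  refine ⟨2 * ((1 + c) / c), by positivity, fun s ⟨hs, hs1⟩ A => ?_⟩
  set q := Real.exp (-(s * c)) with hq
  have hq1 : q < 1 := Real.exp_lt_one_iff.2 (by nlinarith)
  have hterm (n : ℕ) : q ^ n = Real.exp (-(s * (c * n))) := by
    rw [hq, ← Real.exp_nat_mul]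
    ring_nf
  have hsum : HasSum (fun n : ℤ => Real.exp (-(s * (c * |(n : ℝ)|))))
      ((1 - q)⁻¹ + (1 - q)⁻¹ - 1) := by
    have hgeom : HasSum (fun n : ℕ => Real.exp (-(s * (c * n)))) (1 - q)⁻¹ := by
      simp_rw [← hterm]
      exact hasSum_geometric_of_lt_one (Real.exp_pos _).le hq1
    simpa using HasSum.of_nat_of_neg (f := fun n : ℤ => Real.exp (-(s * (c * |(n : ℝ)|))))
      (by simpa using hgeom) (by simpa using hgeom)
  have hinv : s * (1 - q)⁻¹ ≤ (1 + c) / c := by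
    have hone : (1 + s * c) * q ≤ 1 := by
      calc (1 + s * c) * q ≤ Real.exp (s * c) * q := by
            gcongr
            linarith [Real.add_one_le_exp (s * c)]
        _ = 1 := by rw [hq, ← Real.exp_add, add_neg_cancel, Real.exp_zero]
    rw [← div_eq_mul_inv, div_le_div_iff₀ (by linarith) hc]
    nlinarith [mul_nonneg (mul_nonneg hc.le (sub_nonneg.2 hs1)) (sub_nonneg.2 hq1.le)]
  calc s * ∑ n ∈ A, Real.exp (-(s * (c * |(n : ℝ)|)))
      ≤ s * ((1 - q)⁻¹ + (1 - q)⁻¹ - 1) := by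
        gcongr
        exact sum_le_hasSum A (fun _ _ => (Real.exp_pos _).le) hsum
    _ ≤ _ := by linarith

/-- The weight `e^{-s H(x)}` of a lattice point `x`. -/
def expWeight (H : (Fin d → ℤ) → ℤ) (s : ℝ) (x : Fin d → ℤ) : ℝ := Real.exp (-(s * H x))

/-- The weighted number of points of `E` is `O(s ^ (-p))` as `s → 0+`. The sums over finite
subsets of `E` stand for the sum over `E`, which is thereby shown to converge. -/
def HasGrowth (H : (Fin d → ℤ) → ℤ) (p : ℕ) (E : Set (Fin d → ℤ)) : Prop :=
  ∃ C, ∀ s ∈ Set.Ioc (0 : ℝ) 1, ∀ A : Finset (Fin d → ℤ), ↑A ⊆ E →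
    s ^ p * ∑ x ∈ A, expWeight H s x ≤ C

/-- `H` grows at least linearly on the lattice. -/
def IsCoercive (H : (Fin d → ℤ) → ℤ) : Prop :=
  ∃ c : ℝ, 0 < c ∧ ∀ x, c * ∑ i, |(x i : ℝ)| ≤ H x

variable {H : (Fin d → ℤ) → ℤ} {p : ℕ} {s : ℝ} {E E' : Set (Fin d → ℤ)}

theorem expWeight_pos (H : (Fin d → ℤ) → ℤ) (s : ℝ) (x : Fin d → ℤ) : 0 < expWeight H s x :=
  Real.exp_pos _

theorem expWeight_le_prod {c : ℝ} (hc0 : 0 ≤ c) (hc : ∀ x, c * ∑ i, |(x i : ℝ)| ≤ H x)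
    (hs : 0 ≤ s) (J : Finset (Fin d)) (x : Fin d → ℤ) :
    expWeight H s x ≤ ∏ j : J, Real.exp (-(s * (c * |(x j : ℝ)|))) := by
  rw [← Real.exp_sum, expWeight, Real.exp_le_exp, Finset.sum_neg_distrib, neg_le_neg_iff,
    ← Finset.mul_sum, ← Finset.mul_sum, Finset.sum_coe_sort J fun i => |(x i : ℝ)|]
  gcongr
  refine le_trans ?_ (hc x)
  gcongr
  exact Finset.subset_univ J

theorem sum_prod_le_of_injOn {α β κ : Type*} [Fintype κ] {e : ℤ → ℝ} (he : ∀ n, 0 ≤ e n)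
    {A : Finset α} {F : Finset β} {f : α → β} (hf : ∀ x ∈ A, f x ∈ F) {g : α → κ → ℤ}
    (hinj : Set.InjOn (fun x => (f x, g x)) A) :
    ∑ x ∈ A, ∏ j, e (g x j) ≤ F.card * ∏ j, ∑ n ∈ A.image (g · j), e n := by
  classical
  calc ∑ x ∈ A, ∏ j, e (g x j)
      = ∑ z ∈ A.image fun x => (f x, g x), ∏ j, e (z.2 j) :=
        (Finset.sum_image (f := fun z : β × (κ → ℤ) => ∏ j, e (z.2 j)) hinj).symm
    _ ≤ ∑ z ∈ F ×ˢ Fintype.piFinset fun j => A.image (g · j), ∏ j, e (z.2 j) := by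
        refine Finset.sum_le_sum_of_subset_of_nonneg (fun z hz => ?_) fun z _ _ =>
          Finset.prod_nonneg fun j _ => he _
        obtain ⟨x, hx, rfl⟩ := Finset.mem_image.1 hz
        exact Finset.mem_product.2 ⟨hf x hx, Fintype.mem_piFinset.2 fun j =>
          Finset.mem_image_of_mem (g · j) hx⟩
    _ = F.card * ∏ j, ∑ n ∈ A.image (g · j), e n := by
        rw [Finset.sum_product, Finset.prod_univ_sum]
        simp only [Finset.sum_const, nsmul_eq_mul]

theorem IsCoercive.hasGrowth_of_linearIndependent (hH : IsCoercive H) {ι : Type*} [Fintype ι]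
    {a : ι → Fin d → ℤ} (ha : LinearIndependent ℝ fun i => coeLat (a i)) (K : ℤ)
    (hE : ∀ x ∈ E, ∀ i, |a i ⬝ᵥ x| ≤ K) (hp : p + Fintype.card ι = d) : HasGrowth H p E := by
  classical
  obtain ⟨c, hc0, hc⟩ := hH
  obtain ⟨J, hJ, hJzero⟩ := exists_complementary_coordinates ha
  obtain ⟨C, _, hC⟩ := exists_mul_sum_exp_abs_le hc0
  set F : Finset (ι → ℤ) := Fintype.piFinset fun _ => Finset.Icc (-K) K
  have hpJ : p = Fintype.card J := by
    rw [Fintype.card_coe]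
    omega
  refine ⟨F.card * C ^ p, fun s hs A hA => ?_⟩
  have hs0 : 0 < s := hs.1
  have hF : ∀ x ∈ A, (fun i => a i ⬝ᵥ x) ∈ F := fun x hx =>
    Fintype.mem_piFinset.2 fun i => Finset.mem_Icc.2 (abs_le.1 (hE x (hA hx) i))
  have hinj : Set.InjOn (fun x => ((fun i => a i ⬝ᵥ x), fun j : J => x j)) (A : Set _) := by
    intro x _ y _ hxy
    obtain ⟨hdot, hcoord⟩ := Prod.mk.inj hxy
    have hzero : (fun i => (x i : ℝ) - y i) = 0 := by
      refine hJzero _ (fun i => ?_) fun j hj => by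
        simpa [sub_eq_zero] using congrFun hcoord ⟨j, hj⟩
      have : ((a i ⬝ᵥ x : ℤ) : ℝ) = (a i ⬝ᵥ y : ℤ) := congrArg _ (congrFun hdot i)
      simpa [dotProduct, coeLat, mul_sub, sub_eq_zero] using this
    funext i
    exact_mod_cast sub_eq_zero.1 (congrFun hzero i)
  let e (n : ℤ) : ℝ := Real.exp (-(s * (c * |(n : ℝ)|)))
  calc s ^ p * ∑ x ∈ A, expWeight H s x
      ≤ s ^ p * (F.card * ∏ j : J, ∑ n ∈ A.image fun x => x j, e n) := by
        gcongr
        exact (Finset.sum_le_sum fun x _ => expWeight_le_prod hc0.le hc hs0.le J x).trans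
          (sum_prod_le_of_injOn (e := e) (fun _ => (Real.exp_pos _).le) hF hinj)
    _ = F.card * ∏ j : J, s * ∑ n ∈ A.image fun x => x j, e n := by
        rw [Finset.prod_mul_distrib, Finset.prod_const, Finset.card_univ, ← hpJ]
        ring
    _ ≤ F.card * C ^ p := by
        rw [hpJ, ← Finset.card_univ, ← Finset.prod_const]
        gcongr with j
        exact hC s hs _

theorem IsCoercive.hasGrowth_univ (hH : IsCoercive H) : HasGrowth H d Set.univ :=
  hH.hasGrowth_of_linearIndependent (a := (Fin.elim0 : Fin 0 → Fin d → ℤ))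
    linearIndependent_empty_type 0 (fun _ _ i => i.elim0) (by simp)

theorem IsCoercive.hasGrowth_slab (hH : IsCoercive H) (hp : p + 1 = d) {n : Fin d → ℤ}
    (hn : n ≠ 0) (K : ℤ) : HasGrowth H p {x | |n ⬝ᵥ x| ≤ K} :=
  hH.hasGrowth_of_linearIndependent (a := fun _ : Unit => n)
    (linearIndependent_unique_iff.2 fun h =>
      hn (funext fun i => by simpa [coeLat] using congrFun h i)) K (fun _ hx _ => hx)
    (by simpa using hp)

theorem hasGrowth_empty : HasGrowth H p ∅ :=
  ⟨0, fun s _ A hA => by simp [Finset.coe_eq_empty.1 (Set.subset_empty_iff.1 hA)]⟩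

theorem HasGrowth.mono (h : HasGrowth H p E') (hE : E ⊆ E') : HasGrowth H p E :=
  let ⟨C, hC⟩ := h
  ⟨C, fun s hs A hA => hC s hs A (hA.trans hE)⟩

theorem HasGrowth.union (h : HasGrowth H p E) (h' : HasGrowth H p E') :
    HasGrowth H p (E ∪ E') := by
  classical
  obtain ⟨C, hC⟩ := h
  obtain ⟨C', hC'⟩ := h'
  refine ⟨C + C', fun s hs A hA => ?_⟩
  rw [← Finset.sum_filter_add_sum_filter_not A (· ∈ E), mul_add]
  refine add_le_add (hC s hs _ fun x hx => (Finset.mem_filter.1 hx).2) (hC' s hs _ fun x hx => ?_)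
  obtain ⟨hxA, hxE⟩ := Finset.mem_filter.1 hx
  exact (hA hxA).resolve_left hxE

theorem hasGrowth_biUnion {ι : Type*} (I : Finset ι) {E : ι → Set (Fin d → ℤ)}
    (h : ∀ i ∈ I, HasGrowth H p (E i)) : HasGrowth H p (⋃ i ∈ I, E i) := by
  classical
  induction I using Finset.induction_on with
  | empty => simpa using hasGrowth_empty
  | insert a I _ ih =>
    rw [Finset.set_biUnion_insert]
    exact (h a (Finset.mem_insert_self _ _)).union
      (ih fun i hi => h i (Finset.mem_insert_of_mem hi))

theorem HasGrowth.exists_tsum_le (h : HasGrowth H p E) :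
    ∃ C, 0 ≤ C ∧ ∀ s ∈ Set.Ioc (0 : ℝ) 1, s ^ p * ∑' x, E.indicator (expWeight H s) x ≤ C := by
  classical
  obtain ⟨C, hC⟩ := h
  have hC0 : 0 ≤ C := by simpa using hC 1 ⟨one_pos, le_rfl⟩ ∅ (by simp)
  refine ⟨C, hC0, fun s hs => ?_⟩
  have hs0 : 0 < s := hs.1
  rw [mul_comm, ← le_div_iff₀ (by positivity)]
  refine tsum_le_of_sum_le' (by positivity) fun A => ?_
  rw [le_div_iff₀ (by positivity), mul_comm, Finset.sum_indicator_eq_sum_filter]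
  exact hC s hs _ fun x hx => (Finset.mem_filter.1 hx).2

theorem IsCoercive.nonneg (hH : IsCoercive H) (x : Fin d → ℤ) : 0 ≤ H x := by
  obtain ⟨c, hc0, hc⟩ := hH
  exact_mod_cast (by positivity : 0 ≤ c * ∑ i, |(x i : ℝ)|).trans (hc x)

theorem IsCoercive.summable_expWeight (hH : IsCoercive H) (hs : 0 < s) :
    Summable (expWeight H s) := by
  obtain ⟨C, hC⟩ := hH.hasGrowth_univ
  have hmin : 0 < min s 1 := lt_min hs one_pos
  refine Summable.of_nonneg_of_le (fun x => (expWeight_pos H s x).le) (fun x => ?_)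
    (summable_of_sum_le (c := C / min s 1 ^ d)
      (fun x => (expWeight_pos H (min s 1) x).le) fun A => ?_)
  · have hHx : (0 : ℝ) ≤ H x := by exact_mod_cast hH.nonneg x
    exact Real.exp_le_exp.2 (neg_le_neg (mul_le_mul_of_nonneg_right (min_le_left _ _) hHx))
  · rw [le_div_iff₀ (by positivity), mul_comm]
    exact hC _ ⟨hmin, min_le_right _ _⟩ A (Set.subset_univ _)

end Growth

section Shift

open scoped Topology

variable {d : ℕ} {H : (Fin d → ℤ) → ℤ} {p : ℕ} {s : ℝ} {E E' : Set (Fin d → ℤ)}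

theorem HasGrowth.tendsto_zero (hH : IsCoercive H) (hE : HasGrowth H p E) {r j : ℕ}
    (hr : p < r + j) {M : ℝ} {F : ℝ → (Fin d → ℤ) → ℝ}
    (hF : ∀ᶠ s in 𝓝[>] 0, ∀ x, |F s x| ≤ s ^ j * M * E.indicator (expWeight H s) x) :
    Tendsto (fun s => s ^ r * ∑' x, F s x) (𝓝[>] 0) (𝓝 0) := by
  obtain ⟨C, _, hC⟩ := hE.exists_tsum_le
  have hlim : Tendsto (fun s : ℝ => s ^ (r + j - p) * (|M| * C)) (𝓝[>] 0) (𝓝 0) := by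
    have h0 : r + j - p ≠ 0 := by omega
    refine tendsto_nhdsWithin_of_tendsto_nhds (Continuous.tendsto' (by fun_prop) _ _ ?_)
    rw [zero_pow h0, zero_mul]
  refine squeeze_zero_norm' ?_ hlim
  filter_upwards [hF, Ioc_mem_nhdsGT zero_lt_one] with s hs hs1
  have hs0 : 0 < s := hs1.1
  have hind (x) : 0 ≤ E.indicator (expWeight H s) x :=
    Set.indicator_nonneg (fun y _ => (expWeight_pos H s y).le) x
  have hsum : |∑' x, F s x| ≤ s ^ j * |M| * ∑' x, E.indicator (expWeight H s) x :=
    tsum_of_norm_bounded (f := F s) (((hH.summable_expWeight hs0).indicator E).hasSum.mul_left _)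
      fun x => (hs x).trans (by gcongr; exacts [hind x, le_abs_self M])
  calc ‖s ^ r * ∑' x, F s x‖
      = s ^ r * |∑' x, F s x| := by rw [Real.norm_eq_abs, abs_mul, abs_of_nonneg (by positivity)]
    _ ≤ s ^ r * (s ^ j * |M| * ∑' x, E.indicator (expWeight H s) x) := by gcongr
    _ = s ^ (r + j - p) * (|M| * (s ^ p * ∑' x, E.indicator (expWeight H s) x)) := by
        have hpow : s ^ r * s ^ j = s ^ (r + j - p) * s ^ p := by
          rw [← pow_add, ← pow_add, Nat.sub_add_cancel hr.le]
        linear_combination |M| * (∑' x, E.indicator (expWeight H s) x) * hpow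
    _ ≤ s ^ (r + j - p) * (|M| * C) := by
        gcongr
        exact hC s hs1

theorem IsCoercive.summable_mul_expWeight (hH : IsCoercive H) (hs : 0 < s)
    {G : (Fin d → ℤ) → ℝ} {M : ℝ} (hG : ∀ x, |G x| ≤ M) :
    Summable fun x => G x * expWeight H s x :=
  ((hH.summable_expWeight hs).mul_left M).of_norm_bounded fun x => by
    rw [norm_mul, Real.norm_eq_abs, Real.norm_of_nonneg (expWeight_pos H s x).le]
    exact mul_le_mul_of_nonneg_right (hG x) (expWeight_pos H s x).le

theorem eventually_mul_le_one (c : ℝ) : ∀ᶠ s : ℝ in 𝓝[>] 0, s * c ≤ 1 := by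
  have hlim : Tendsto (fun s : ℝ => s * c) (𝓝 0) (𝓝 0) :=
    Continuous.tendsto' (by fun_prop) _ _ (zero_mul _)
  exact (hlim.mono_left nhdsWithin_le_nhds).eventually (ge_mem_nhds one_pos)

theorem abs_expWeight_sub_le {m : ℤ} {x y : Fin d → ℤ} (hxy : |H x - H y| ≤ m) (hs : 0 ≤ s)
    (hsm : s * m ≤ 1) :
    |expWeight H s x - expWeight H s y| ≤ 2 * (s * m) * expWeight H s x := by
  have hle : |s * ((H x : ℝ) - H y)| ≤ s * m := by
    rw [abs_mul, abs_of_nonneg hs]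
    gcongr
    exact_mod_cast hxy
  have hy : expWeight H s y = expWeight H s x * Real.exp (s * ((H x : ℝ) - H y)) := by
    rw [expWeight, expWeight, ← Real.exp_add]
    ring_nf
  calc |expWeight H s x - expWeight H s y|
      = expWeight H s x * |Real.exp (s * ((H x : ℝ) - H y)) - 1| := by
        rw [hy, abs_sub_comm, ← mul_sub_one, abs_mul, abs_of_pos (expWeight_pos H s x)]
    _ ≤ expWeight H s x * (2 * (s * m)) := by
        gcongr
        · exact (expWeight_pos H s x).le
        · exact (Real.abs_exp_sub_one_le (hle.trans hsm)).trans (by linarith)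
    _ = _ := mul_comm _ _

theorem HasGrowth.tendsto_tsum_mul_sub (hH : IsCoercive H) {u : Fin d → ℤ} {m : ℤ}
    (hu : ∀ x, |H (x + u) - H x| ≤ m) (hE : HasGrowth H (p + 1) E)
    {G : ℝ → (Fin d → ℤ) → ℝ} {M : ℝ}
    (hG : ∀ᶠ s in 𝓝[>] 0, ∀ x, |G s x| ≤ E.indicator (fun _ => M) x) :
    Tendsto (fun s => s ^ (p + 1) * ∑' x, G s x * (expWeight H s x - expWeight H s (x - u)))
      (𝓝[>] 0) (𝓝 0) := by
  refine hE.tendsto_zero (M := 2 * m * M) (j := 1) hH (by omega) ?_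
  filter_upwards [hG, eventually_mul_le_one m, self_mem_nhdsWithin] with s hs hsm hs0 x
  by_cases hx : x ∈ E
  · have hxu : |H x - H (x - u)| ≤ m := by simpa using hu (x - u)
    have hGM : |G s x| ≤ M := by simpa [hx] using hs x
    rw [abs_mul, Set.indicator_of_mem hx]
    calc |G s x| * |expWeight H s x - expWeight H s (x - u)|
        ≤ M * (2 * (s * m) * expWeight H s x) :=
          mul_le_mul hGM (abs_expWeight_sub_le hxu (le_of_lt hs0) hsm) (abs_nonneg _)
            ((abs_nonneg _).trans hGM)
      _ = _ := by ring
  · have : G s x = 0 := abs_nonpos_iff.1 (by simpa [hx] using hs x)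
    simp [hx, this]

-- Translation by `u` costs one power of `s`, so it is invisible to leading order.
theorem HasGrowth.tendsto_tsum_sub_tsum (hH : IsCoercive H) {u : Fin d → ℤ} {m : ℤ}
    (hu : ∀ x, |H (x + u) - H x| ≤ m) (hE : HasGrowth H (p + 1) E) (hE' : HasGrowth H p E')
    {G G' : ℝ → (Fin d → ℤ) → ℝ} {M : ℝ} (hM : 0 ≤ M)
    (hG : ∀ᶠ s in 𝓝[>] 0, ∀ x, |G s x| ≤ E.indicator (fun _ => M) x)
    (hG' : ∀ᶠ s in 𝓝[>] 0, ∀ x, |G' s x| ≤ M)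
    (hshift : ∀ s, ∀ x ∉ E', G s (x + u) = G' s x) :
    Tendsto (fun s => s ^ (p + 1) *
      (∑' x, G s x * expWeight H s x - ∑' x, G' s x * expWeight H s x)) (𝓝[>] 0) (𝓝 0) := by
  have hbound : ∀ᶠ s in 𝓝[>] 0, ∀ x, |G s x| ≤ M := by
    filter_upwards [hG] with s hs x using (hs x).trans (Set.indicator_le_self' (fun _ _ => hM) x)
  have herror : Tendsto (fun s => s ^ (p + 1) * ∑' x, (G s (x + u) - G' s x) * expWeight H s x)
      (𝓝[>] 0) (𝓝 0) := by
    refine hE'.tendsto_zero (M := 2 * M) (j := 0) hH (by omega) ?_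
    filter_upwards [hbound, hG'] with s hs hs' x
    by_cases hx : x ∈ E'
    · rw [abs_mul, abs_of_pos (expWeight_pos H s x), pow_zero, one_mul, Set.indicator_of_mem hx]
      gcongr
      · exact (expWeight_pos H s x).le
      · linarith [abs_sub (G s (x + u)) (G' s x), hs (x + u), hs' x]
    · simp [hx, hshift s x hx]
  have hlim := (hE.tendsto_tsum_mul_sub hH hu hG).add herror
  rw [add_zero] at hlim
  refine hlim.congr' ?_
  filter_upwards [hbound, hG', self_mem_nhdsWithin] with s hs hs' hs0
  have hsumG := hH.summable_mul_expWeight hs0 hs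
  have hsumGu := hH.summable_mul_expWeight hs0 fun x => hs (x + u)
  have htrans : ∑' x, G s (x + u) * expWeight H s x = ∑' x, G s x * expWeight H s (x - u) := by
    rw [← (Equiv.addRight u).tsum_eq fun x => G s x * expWeight H s (x - u)]
    simp
  have hsumG' : Summable fun x => G s x * expWeight H s (x - u) := by
    rw [← (Equiv.addRight u).summable_iff]
    simpa [Function.comp_def] using hsumGu
  simp only [mul_sub, sub_mul]
  rw [hsumG.tsum_sub hsumG', hsumGu.tsum_sub (hH.summable_mul_expWeight hs0 hs'), htrans]
  ring

end Shift

/-! ### Support functions near their ridges -/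

section SupportFunction

open scoped Matrix

variable {d : ℕ}

/-- `H x = max_{y ∈ Y} y ⬝ᵥ x` on the lattice, where `Y` plays the role of the vertex set of a
lattice polytope containing the origin in its interior; of the vertex condition only the fact that
no three vertices are collinear is recorded. -/
structure IsSupportFunction (Y : Finset (Fin d → ℤ)) (H : (Fin d → ℤ) → ℤ) : Prop where
  dotProduct_le : ∀ y ∈ Y, ∀ x, y ⬝ᵥ x ≤ H x
  exists_dotProduct_eq : ∀ x, ∃ y ∈ Y, y ⬝ᵥ x = H x
  coercive : IsCoercive H
  linearIndependent : ∀ y₁ ∈ Y, ∀ y₂ ∈ Y, ∀ y₃ ∈ Y, y₁ ≠ y₂ → y₁ ≠ y₃ → y₂ ≠ y₃ →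
    LinearIndependent ℝ fun i => coeLat (![y₁ - y₂, y₁ - y₃] i)

/-- The largest possible variation of `y ⬝ᵥ u` over the vertices `y` of a polytope with support
function `H`. -/
def oscillation (H : (Fin d → ℤ) → ℤ) (u : Fin d → ℤ) : ℤ := H u + H (-u)

/-- The vertices whose value at `x` comes within `K` of the maximum `H x`. -/
def nearMax (Y : Finset (Fin d → ℤ)) (H : (Fin d → ℤ) → ℤ) (K : ℤ) (x : Fin d → ℤ) :
    Finset (Fin d → ℤ) :=
  {y ∈ Y | H x - K ≤ y ⬝ᵥ x}

/-- The points at which at least `r` vertices come within `K` of the maximum: a neighbourhood of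
the cones of codimension `r - 1` of the normal fan, for `r ≤ 3`. -/
def nearTies (Y : Finset (Fin d → ℤ)) (H : (Fin d → ℤ) → ℤ) (r : ℕ) (K : ℤ) :
    Set (Fin d → ℤ) :=
  {x | r ≤ (nearMax Y H K x).card}

/-- The part of the hyperplane `n ⬝ᵥ x = k` on which `y₁` or `y₂` attains the maximum `H x`. It is
used for `n` proportional to `y₁ - y₂`; for `k = 0` it is then the wall between the maximality
regions of `y₁` and `y₂`. -/
def ridgeSlice (H : (Fin d → ℤ) → ℤ) (y₁ y₂ n : Fin d → ℤ) (k : ℤ) : Set (Fin d → ℤ) :=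
  {x | n ⬝ᵥ x = k ∧ (y₁ ⬝ᵥ x = H x ∨ y₂ ⬝ᵥ x = H x)}

open Classical in
/-- The contribution of the wall between `y₁` and `y₂` to the second difference of `H` in
direction `u`; as a function of the distance to the wall it is a tent. -/
def tent (H : (Fin d → ℤ) → ℤ) (u y₁ y₂ x : Fin d → ℤ) : ℤ :=
  if y₁ ⬝ᵥ x = H x ∨ y₂ ⬝ᵥ x = H x then max 0 (|(y₁ - y₂) ⬝ᵥ u| - |(y₁ - y₂) ⬝ᵥ x|) else 0

/-- The symmetric second difference of `H` in direction `u`. -/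
def secondDifference (H : (Fin d → ℤ) → ℤ) (u x : Fin d → ℤ) : ℤ :=
  H (x + u) + H (x - u) - 2 * H x

/-- The difference between twice the second difference of `H` and the sum of the tents of all
ordered pairs of distinct vertices, in which every wall occurs twice. -/
def tentDefect (Y : Finset (Fin d → ℤ)) (H : (Fin d → ℤ) → ℤ) (u x : Fin d → ℤ) : ℤ :=
  2 * secondDifference H u x - ∑ p ∈ Y.offDiag, tent H u p.1 p.2 x

variable {Y : Finset (Fin d → ℤ)} {H : (Fin d → ℤ) → ℤ} {K : ℤ} {u x y : Fin d → ℤ}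

theorem oscillation_neg (H : (Fin d → ℤ) → ℤ) (u : Fin d → ℤ) :
    oscillation H (-u) = oscillation H u := by
  rw [oscillation, neg_neg, add_comm, oscillation]

theorem mem_nearMax_of_eq (hy : y ∈ Y) (hx : y ⬝ᵥ x = H x) (hK : 0 ≤ K) : y ∈ nearMax Y H K x :=
  Finset.mem_filter.2 ⟨hy, by linarith⟩

theorem mem_nearMax_of_attains {y₁ y₂ : Fin d → ℤ} (hy₁ : y₁ ∈ Y) (hy₂ : y₂ ∈ Y)
    (hx : y₁ ⬝ᵥ x = H x ∨ y₂ ⬝ᵥ x = H x) (hK : |(y₁ - y₂) ⬝ᵥ x| ≤ K) :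
    y₁ ∈ nearMax Y H K x ∧ y₂ ∈ nearMax Y H K x := by
  rw [sub_dotProduct, abs_le] at hK
  simp only [nearMax, Finset.mem_filter, hy₁, hy₂, true_and]
  rcases hx with hx | hx <;> constructor <;> linarith

theorem nearMax_eq_pair {y₁ y₂ : Fin d → ℤ} (hx : x ∉ nearTies Y H 3 K) (hne : y₁ ≠ y₂)
    (h : y₁ ∈ nearMax Y H K x ∧ y₂ ∈ nearMax Y H K x) : nearMax Y H K x = {y₁, y₂} := by
  refine (Finset.eq_of_subset_of_card_le (fun y hy => ?_) ?_).symm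
  · obtain rfl | rfl := (by simpa using hy : y = y₁ ∨ y = y₂)
    exacts [h.1, h.2]
  · rw [Finset.card_pair hne]
    exact Nat.lt_succ_iff.1 (not_le.1 hx)

theorem two_mul_max_second_difference (a b e f : ℤ) :
    2 * (max (a + e) (b + f) + max (a + -e) (b + -f) - 2 * max a b) =
      max 0 (|e - f| - |a - b|) + max 0 (|f - e| - |b - a|) := by
  simp only [max_def, abs_eq_max_neg]
  split_ifs <;> omega

namespace IsSupportFunction

theorem map_add_le (hH : IsSupportFunction Y H) (x u : Fin d → ℤ) : H (x + u) ≤ H x + H u := by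
  obtain ⟨y, hy, hmax⟩ := hH.exists_dotProduct_eq (x + u)
  rw [← hmax, dotProduct_add]
  exact add_le_add (hH.dotProduct_le y hy x) (hH.dotProduct_le y hy u)

theorem map_two_nsmul (hH : IsSupportFunction Y H) (x : Fin d → ℤ) : H (2 • x) = 2 * H x := by
  obtain ⟨y, hy, hmax⟩ := hH.exists_dotProduct_eq x
  have hle := hH.map_add_le x x
  have hge := hH.dotProduct_le y hy (2 • x)
  rw [dotProduct_smul, hmax, nsmul_eq_mul] at hge
  rw [← two_nsmul] at hle
  push_cast at hge
  linarith

theorem map_zero (hH : IsSupportFunction Y H) : H 0 = 0 := by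
  obtain ⟨y, -, hmax⟩ := hH.exists_dotProduct_eq 0
  rw [← hmax, dotProduct_zero]

theorem oscillation_nonneg (hH : IsSupportFunction Y H) (u : Fin d → ℤ) : 0 ≤ oscillation H u :=
  add_nonneg (hH.coercive.nonneg u) (hH.coercive.nonneg (-u))

theorem oscillation_zero (hH : IsSupportFunction Y H) : oscillation H 0 = 0 := by
  rw [oscillation, neg_zero, hH.map_zero, add_zero]

theorem oscillation_two_nsmul (hH : IsSupportFunction Y H) (u : Fin d → ℤ) :
    oscillation H (2 • u) = 2 * oscillation H u := by
  rw [oscillation, ← smul_neg, hH.map_two_nsmul, hH.map_two_nsmul, oscillation, mul_add]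

theorem neg_map_neg_le_dotProduct (hH : IsSupportFunction Y H) (hy : y ∈ Y) (u : Fin d → ℤ) :
    -H (-u) ≤ y ⬝ᵥ u := by
  have := hH.dotProduct_le y hy (-u)
  rw [dotProduct_neg] at this
  linarith

theorem abs_map_add_sub_le (hH : IsSupportFunction Y H) (u x : Fin d → ℤ) :
    |H (x + u) - H x| ≤ oscillation H u := by
  have hle := hH.map_add_le x u
  have hge := hH.map_add_le (x + u) (-u)
  rw [add_neg_cancel_right] at hge
  have h0 := hH.coercive.nonneg u
  have h1 := hH.coercive.nonneg (-u)
  rw [oscillation, abs_le]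
  constructor <;> linarith

theorem abs_sub_dotProduct_le_oscillation (hH : IsSupportFunction Y H) {y₁ y₂ : Fin d → ℤ}
    (hy₁ : y₁ ∈ Y) (hy₂ : y₂ ∈ Y) (u : Fin d → ℤ) : |(y₁ - y₂) ⬝ᵥ u| ≤ oscillation H u := by
  have h₁ := hH.dotProduct_le y₁ hy₁ u
  have h₂ := hH.dotProduct_le y₂ hy₂ u
  have h₁' := hH.neg_map_neg_le_dotProduct hy₁ u
  have h₂' := hH.neg_map_neg_le_dotProduct hy₂ u
  rw [sub_dotProduct, oscillation, abs_le]
  constructor <;> linarith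

theorem nearMax_add_subset (hH : IsSupportFunction Y H) (K : ℤ) (u x : Fin d → ℤ) :
    nearMax Y H K (x + u) ⊆ nearMax Y H (K + oscillation H u) x := by
  intro y hy
  obtain ⟨hyY, hyK⟩ := Finset.mem_filter.1 hy
  have hle := hH.dotProduct_le y hyY u
  have hge := hH.map_add_le (x + u) (-u)
  rw [add_neg_cancel_right] at hge
  rw [dotProduct_add] at hyK
  refine Finset.mem_filter.2 ⟨hyY, ?_⟩
  rw [oscillation]
  linarith

theorem exists_mem_nearMax (hH : IsSupportFunction Y H) (hu : oscillation H u ≤ K)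
    (x : Fin d → ℤ) : ∃ y ∈ nearMax Y H K x, y ⬝ᵥ (x + u) = H (x + u) := by
  obtain ⟨y, hy, hmax⟩ := hH.exists_dotProduct_eq (x + u)
  have hmem := hH.nearMax_add_subset 0 u x (mem_nearMax_of_eq hy hmax le_rfl)
  obtain ⟨-, hK⟩ := Finset.mem_filter.1 hmem
  exact ⟨y, Finset.mem_filter.2 ⟨hy, by linarith⟩, hmax⟩

theorem map_add_eq (hH : IsSupportFunction Y H) (hx : x ∉ nearTies Y H 2 K)
    (hu : oscillation H u ≤ K) (hy : y ∈ Y) (hmax : y ⬝ᵥ x = H x) :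
    H (x + u) = H x + y ⬝ᵥ u := by
  obtain ⟨y', hy', hmax'⟩ := hH.exists_mem_nearMax hu x
  have hcard : (nearMax Y H K x).card ≤ 1 := Nat.lt_succ_iff.1 (not_le.1 hx)
  have heq : y' = y := Finset.card_le_one.1 hcard _ hy' _
    (mem_nearMax_of_eq hy hmax ((hH.oscillation_nonneg u).trans hu))
  rw [← hmax', heq, dotProduct_add, hmax]

theorem attains_of_nearMax_eq_pair (hH : IsSupportFunction Y H) {y₁ y₂ : Fin d → ℤ}
    (hx : nearMax Y H K x = {y₁, y₂}) (hu : oscillation H u ≤ K) :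
    y₁ ⬝ᵥ (x + u) = H (x + u) ∨ y₂ ⬝ᵥ (x + u) = H (x + u) := by
  obtain ⟨y, hy, hmax⟩ := hH.exists_mem_nearMax hu x
  rw [hx, Finset.mem_insert, Finset.mem_singleton] at hy
  obtain rfl | rfl := hy
  exacts [.inl hmax, .inr hmax]

theorem map_add_eq_max (hH : IsSupportFunction Y H) {y₁ y₂ : Fin d → ℤ}
    (hx : nearMax Y H K x = {y₁, y₂}) (hu : oscillation H u ≤ K) :
    H (x + u) = max (y₁ ⬝ᵥ (x + u)) (y₂ ⬝ᵥ (x + u)) := by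
  have hmem {y} (hy : y ∈ ({y₁, y₂} : Finset (Fin d → ℤ))) : y ∈ Y :=
    (Finset.mem_filter.1 (hx ▸ hy : y ∈ nearMax Y H K x)).1
  have h₁ := hH.dotProduct_le y₁ (hmem (by simp)) (x + u)
  have h₂ := hH.dotProduct_le y₂ (hmem (by simp)) (x + u)
  obtain h | h := hH.attains_of_nearMax_eq_pair hx hu
  · rw [← h, max_eq_left (h ▸ h₂)]
  · rw [← h, max_eq_right (h ▸ h₁)]

theorem add_mem_ridgeSlice_iff (hH : IsSupportFunction Y H) {y₁ y₂ n : Fin d → ℤ} (hy₁ : y₁ ∈ Y)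
    (hy₂ : y₂ ∈ Y) (hne : y₁ ≠ y₂) {c k : ℤ} (hn : y₁ - y₂ = c • n) (hx : x ∉ nearTies Y H 3 K)
    (hk : |c * k| ≤ K) (hku : |c * (k + n ⬝ᵥ u)| + oscillation H u ≤ K) :
    x + u ∈ ridgeSlice H y₁ y₂ n (k + n ⬝ᵥ u) ↔ x ∈ ridgeSlice H y₁ y₂ n k := by
  have hdot (z) : (y₁ - y₂) ⬝ᵥ z = c * n ⬝ᵥ z := by rw [hn, smul_dotProduct, smul_eq_mul]
  have hu : oscillation H u ≤ K := by linarith [abs_nonneg (c * (k + n ⬝ᵥ u))]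
  have hattains (h : y₁ ∈ nearMax Y H K x ∧ y₂ ∈ nearMax Y H K x) {v} (hv : oscillation H v ≤ K) :=
    hH.attains_of_nearMax_eq_pair (nearMax_eq_pair hx hne h) hv
  constructor
  · rintro ⟨hnx, hmax⟩
    have hmem := mem_nearMax_of_attains hy₁ hy₂ hmax (K := |c * (k + n ⬝ᵥ u)|)
      (by rw [hdot, hnx])
    have hsub : nearMax Y H |c * (k + n ⬝ᵥ u)| (x + u) ⊆ nearMax Y H K x :=
      (hH.nearMax_add_subset _ u x).trans
        (Finset.monotone_filter_right _ fun y _ hy => by linarith)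
    refine ⟨by rw [dotProduct_add] at hnx; linarith, ?_⟩
    simpa using hattains ⟨hsub hmem.1, hsub hmem.2⟩
      (hH.oscillation_zero.le.trans ((abs_nonneg _).trans hk))
  · rintro ⟨hnx, hmax⟩
    exact ⟨by rw [dotProduct_add, hnx], hattains (mem_nearMax_of_attains hy₁ hy₂ hmax
      (by rwa [hdot, hnx])) hu⟩

theorem mem_nearMax_of_tent_ne_zero (hH : IsSupportFunction Y H) {y₁ y₂ : Fin d → ℤ}
    (hy₁ : y₁ ∈ Y) (hy₂ : y₂ ∈ Y) (h : tent H u y₁ y₂ x ≠ 0) :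
    y₁ ∈ nearMax Y H (oscillation H u) x ∧ y₂ ∈ nearMax Y H (oscillation H u) x := by
  rw [tent] at h
  obtain ⟨hmax, hne⟩ := ite_ne_right_iff.1 h
  refine mem_nearMax_of_attains hy₁ hy₂ hmax
    (le_trans ?_ (hH.abs_sub_dotProduct_le_oscillation hy₁ hy₂ u))
  by_contra! hlt
  exact hne (max_eq_left (by linarith))

theorem sum_offDiag_tent_eq_sum_nearMax (hH : IsSupportFunction Y H) (u x : Fin d → ℤ) :
    ∑ p ∈ Y.offDiag, tent H u p.1 p.2 x =
      ∑ p ∈ (nearMax Y H (oscillation H u) x).offDiag, tent H u p.1 p.2 x := by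
  refine (Finset.sum_subset (Finset.offDiag_mono (Finset.filter_subset _ _)) ?_).symm
  intro p hp hpN
  obtain ⟨h₁, h₂, hne⟩ := Finset.mem_offDiag.1 hp
  by_contra h
  obtain ⟨h₁', h₂'⟩ := hH.mem_nearMax_of_tent_ne_zero h₁ h₂ h
  exact hpN (Finset.mem_offDiag.2 ⟨h₁', h₂', hne⟩)

theorem exists_nearMax_eq_pair (hH : IsSupportFunction Y H) (hx : x ∉ nearTies Y H 3 K)
    (hK : 0 ≤ K) : ∃ y₁ y₂, nearMax Y H K x = {y₁, y₂} := by
  obtain ⟨y, hy, -⟩ := hH.exists_mem_nearMax (hH.oscillation_zero.trans_le hK) x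
  have hpos := Finset.card_pos.2 ⟨y, hy⟩
  have hlt : (nearMax Y H K x).card < 3 := not_le.1 hx
  obtain h | h : (nearMax Y H K x).card = 1 ∨ (nearMax Y H K x).card = 2 := by omega
  · obtain ⟨y, hy⟩ := Finset.card_eq_one.1 h
    exact ⟨y, y, by simp [hy]⟩
  · obtain ⟨y₁, y₂, -, hy⟩ := Finset.card_eq_two.1 h
    exact ⟨y₁, y₂, hy⟩

theorem two_mul_secondDifference (hH : IsSupportFunction Y H)
    (hx : x ∉ nearTies Y H 3 (oscillation H u)) :
    2 * secondDifference H u x = ∑ p ∈ Y.offDiag, tent H u p.1 p.2 x := by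
  have hu := hH.oscillation_nonneg u
  have hzero : oscillation H 0 ≤ oscillation H u := hH.oscillation_zero.trans_le hu
  obtain ⟨y₁, y₂, hpair⟩ := hH.exists_nearMax_eq_pair hx hu
  have hHx := hH.map_add_eq_max hpair hzero
  have hattains := hH.attains_of_nearMax_eq_pair hpair hzero
  rw [add_zero] at hHx hattains
  have hneg : oscillation H (-u) ≤ oscillation H u :=
    (oscillation_neg H u).le
  rw [secondDifference, hH.sum_offDiag_tent_eq_sum_nearMax, hpair, sub_eq_add_neg x u,
    hH.map_add_eq_max hpair le_rfl, hH.map_add_eq_max hpair hneg, hHx]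
  simp only [dotProduct_add, dotProduct_neg]
  rw [two_mul_max_second_difference]
  obtain rfl | hne := eq_or_ne y₁ y₂
  · simp
  · rw [Finset.offDiag_insert (by simpa using hne)]
    simp [tent, hattains, hattains.symm, hne, hne.symm, sub_dotProduct]

end IsSupportFunction

end SupportFunction

/-! ### Parity characters -/

section Parity

open scoped Matrix

variable {d : ℕ} {S : Finset (Fin d)}

/-- The character of `ℤ^d / 2ℤ^d` attached to a set of coordinates. -/
def paritySign (S : Finset (Fin d)) (x : Fin d → ℤ) : ℝ := (-1) ^ ∑ i ∈ S, x i

/-- The positions of the odd coordinates of `n`, which encode the class of `n` modulo `2`. -/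
def oddSupport (n : Fin d → ℤ) : Finset (Fin d) := {i | Odd (n i)}

theorem neg_one_zpow_add (a b : ℤ) : (-1 : ℝ) ^ (a + b) = (-1) ^ a * (-1) ^ b :=
  zpow_add₀ (by norm_num) a b

theorem paritySign_add (S : Finset (Fin d)) (x u : Fin d → ℤ) :
    paritySign S (x + u) = paritySign S u * paritySign S x := by
  simp only [paritySign, Pi.add_apply, Finset.sum_add_distrib, neg_one_zpow_add, mul_comm]

theorem abs_paritySign (S : Finset (Fin d)) (x : Fin d → ℤ) : |paritySign S x| = 1 :=
  abs_neg_one_zpow _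

theorem paritySign_neg (S : Finset (Fin d)) (u : Fin d → ℤ) :
    paritySign S (-u) = paritySign S u := by
  simp [paritySign, zpow_neg, ← inv_zpow]

theorem paritySign_single (S : Finset (Fin d)) (i : Fin d) :
    paritySign S (Pi.single i 1) = if i ∈ S then -1 else 1 := by
  split_ifs with hi <;> simp [paritySign, Pi.single_apply, hi]

theorem paritySign_oddSupport (n x : Fin d → ℤ) :
    paritySign (oddSupport n) x = (-1) ^ (n ⬝ᵥ x) := by
  have heven : Even (n ⬝ᵥ x - ∑ i ∈ oddSupport n, x i) := by
    rw [oddSupport, Finset.sum_filter, dotProduct, ← Finset.sum_sub_distrib]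
    refine Finset.even_sum _ fun i _ => ?_
    split_ifs with hi
    · rw [← sub_one_mul]
      exact (hi.sub_odd odd_one).mul_right _
    · rw [sub_zero]
      exact (Int.not_odd_iff_even.1 hi).mul_right _
  rw [← sub_add_cancel (n ⬝ᵥ x) (∑ i ∈ oddSupport n, x i), neg_one_zpow_add, heven.neg_one_zpow,
    one_mul, paritySign]

theorem neg_one_zpow_sum {ι : Type*} (S : Finset ι) (f : ι → ℤ) :
    (-1 : ℝ) ^ ∑ i ∈ S, f i = ∏ i ∈ S, (-1) ^ f i := by
  classical
  induction S using Finset.induction_on with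
  | empty => simp
  | insert a S ha ih => rw [Finset.sum_insert ha, Finset.prod_insert ha, neg_one_zpow_add, ih]

theorem sum_paritySign (x : Fin d → ℤ) [Decidable (∀ i, Even (x i))] :
    ∑ S, paritySign S x = if ∀ i, Even (x i) then 2 ^ d else 0 := by
  simp only [paritySign, neg_one_zpow_sum]
  rw [← Finset.powerset_univ, ← Finset.prod_one_add]
  split_ifs with h
  · rw [Finset.prod_congr rfl fun i _ => by rw [(h i).neg_one_zpow]]
    norm_num
  · push Not at h
    obtain ⟨i, hi⟩ := h
    refine Finset.prod_eq_zero (Finset.mem_univ i) ?_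
    rw [(Int.not_even_iff_odd.1 hi).neg_one_zpow, add_neg_cancel]

theorem paritySign_sub_smul (S : Finset (Fin d)) (x z : Fin d → ℤ) (k : ℤ) :
    paritySign S (x - k • z) = paritySign S z ^ k * paritySign S x := by
  rw [sub_eq_add_neg, paritySign_add, paritySign_neg]
  simp only [paritySign, Pi.smul_apply, smul_eq_mul, ← Finset.mul_sum]
  rw [mul_comm k, zpow_mul]

theorem exists_dotProduct_eq_zero_and_paritySign {n z : Fin d → ℤ} (hz : n ⬝ᵥ z = 1)
    (hS : S.Nonempty) (hne : oddSupport n ≠ S) :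
    ∃ u, n ⬝ᵥ u = 0 ∧ paritySign S u = -1 := by
  suffices h : ∃ i, paritySign S z ^ n i * paritySign S (Pi.single i 1) = -1 by
    obtain ⟨i, hi⟩ := h
    refine ⟨Pi.single i 1 - n i • z, ?_, by rw [paritySign_sub_smul, hi]⟩
    rw [dotProduct_sub, dotProduct_single_one, dotProduct_smul, hz, smul_eq_mul, mul_one, sub_self]
  have hsign : paritySign S z = 1 ∨ paritySign S z = -1 :=
    eq_or_eq_neg_of_abs_eq (abs_paritySign S z)
  simp only [paritySign_single]
  obtain hsign | hsign := hsign
  · obtain ⟨i, hi⟩ := hS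
    exact ⟨i, by simp [hsign, hi]⟩
  · obtain ⟨i, hi⟩ : ∃ i, ¬(i ∈ oddSupport n ↔ i ∈ S) := by
      by_contra! h
      exact hne (Finset.ext h)
    refine ⟨i, ?_⟩
    rw [oddSupport, Finset.mem_filter_univ] at hi
    by_cases hiS : i ∈ S
    · have : Even (n i) := by simpa [hiS] using hi
      simp [hsign, hiS, this.neg_one_zpow]
    · have : Odd (n i) := by simpa [hiS] using hi
      simp [hsign, hiS, this.neg_one_zpow]

end Parity

/-! ### Sums twisted by parity characters -/

section Content

open scoped Matrix

variable {d : ℕ}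

/-- The lattice length of a lattice vector. -/
def content (v : Fin d → ℤ) : ℤ := Finset.univ.gcd v

theorem content_pos {v : Fin d → ℤ} (hv : v ≠ 0) : 0 < content v := by
  refine lt_of_le_of_ne (Int.nonneg_of_normalize_eq_self Finset.normalize_gcd) fun h => hv ?_
  funext i
  exact Finset.gcd_eq_zero_iff.1 h.symm i (Finset.mem_univ i)

/-- The primitive lattice vector in the direction of `v`. -/
def primitivePart (v : Fin d → ℤ) : Fin d → ℤ := fun i => v i / content v

theorem eq_content_smul_primitivePart (v : Fin d → ℤ) : v = content v • primitivePart v :=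
  funext fun i => (Int.mul_ediv_cancel' (Finset.gcd_dvd (Finset.mem_univ i))).symm

theorem exists_primitivePart_dotProduct_eq_one {v : Fin d → ℤ} (hv : v ≠ 0) :
    ∃ z, primitivePart v ⬝ᵥ z = 1 := by
  obtain ⟨z, hz⟩ := Finset.gcd_eq_sum_mul Finset.univ v
  have hmul : content v * primitivePart v ⬝ᵥ z = content v * 1 := by
    rw [← smul_eq_mul, ← smul_dotProduct, ← eq_content_smul_primitivePart, mul_one]
    exact hz.symm
  exact ⟨z, mul_left_cancel₀ (content_pos hv).ne' hmul⟩

end Content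

section TwistedSums

open scoped Topology Matrix

variable {d q : ℕ} {Y : Finset (Fin d → ℤ)} {H : (Fin d → ℤ) → ℤ} {S : Finset (Fin d)}

/-- The cone over the face spanned by the points at which both `y₁` and `y₂` attain the maximum. -/
def wall (H : (Fin d → ℤ) → ℤ) (y₁ y₂ : Fin d → ℤ) : Set (Fin d → ℤ) :=
  {x | y₁ ⬝ᵥ x = H x ∧ y₂ ⬝ᵥ x = H x}

theorem ridgeSlice_zero {y₁ y₂ n : Fin d → ℤ} {c : ℤ} (hc : c ≠ 0) (hn : y₁ - y₂ = c • n) :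
    ridgeSlice H y₁ y₂ n 0 = wall H y₁ y₂ := by
  ext x
  have hdot : y₁ ⬝ᵥ x - y₂ ⬝ᵥ x = c * n ⬝ᵥ x := by
    rw [← sub_dotProduct, hn, smul_dotProduct, smul_eq_mul]
  have hiff : n ⬝ᵥ x = 0 ↔ y₁ ⬝ᵥ x = y₂ ⬝ᵥ x := by
    rw [← sub_eq_zero (a := y₁ ⬝ᵥ x), hdot, mul_eq_zero, or_iff_right hc]
  simp only [ridgeSlice, wall, Set.mem_ofPred_eq, hiff]
  constructor
  · rintro ⟨h, hmax | hmax⟩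
    exacts [⟨hmax, h ▸ hmax⟩, ⟨h ▸ hmax, hmax⟩]
  · rintro ⟨h₁, h₂⟩
    exact ⟨h₁.trans h₂.symm, .inl h₁⟩

namespace IsSupportFunction

theorem abs_sub_dotProduct_le (hH : IsSupportFunction Y H) {K : ℤ} {x y₁ y₂ : Fin d → ℤ}
    (h₁ : y₁ ∈ nearMax Y H K x) (h₂ : y₂ ∈ nearMax Y H K x) : |(y₁ - y₂) ⬝ᵥ x| ≤ K := by
  obtain ⟨hY₁, h₁⟩ := Finset.mem_filter.1 h₁
  obtain ⟨hY₂, h₂⟩ := Finset.mem_filter.1 h₂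
  have hle₁ := hH.dotProduct_le y₁ hY₁ x
  have hle₂ := hH.dotProduct_le y₂ hY₂ x
  rw [sub_dotProduct, abs_le]
  constructor <;> linarith

theorem hasGrowth_nearTies_two (hH : IsSupportFunction Y H) (hd : q + 1 = d) (K : ℤ) :
    HasGrowth H q (nearTies Y H 2 K) := by
  refine (hasGrowth_biUnion Y.offDiag (E := fun p => {x | |(p.1 - p.2) ⬝ᵥ x| ≤ K}) fun p hp =>
    hH.coercive.hasGrowth_slab hd (sub_ne_zero.2 (Finset.mem_offDiag.1 hp).2.2) K).mono ?_
  intro x hx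
  obtain ⟨y₁, h₁, y₂, h₂, hne⟩ := Finset.one_lt_card.1 hx
  simp only [Set.mem_iUnion, exists_prop, Set.mem_ofPred_eq]
  exact ⟨(y₁, y₂), Finset.mem_offDiag.2 ⟨Finset.filter_subset _ _ h₁, Finset.filter_subset _ _ h₂,
    hne⟩, hH.abs_sub_dotProduct_le h₁ h₂⟩

theorem hasGrowth_nearTies_three (hH : IsSupportFunction Y H) (hd : q + 2 = d) (K : ℤ) :
    HasGrowth H q (nearTies Y H 3 K) := by
  let I := {p ∈ Y ×ˢ Y ×ˢ Y | p.1 ≠ p.2.1 ∧ p.1 ≠ p.2.2 ∧ p.2.1 ≠ p.2.2}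
  refine (hasGrowth_biUnion I
    (E := fun p => {x | ∀ i, |![p.1 - p.2.1, p.1 - p.2.2] i ⬝ᵥ x| ≤ K}) fun p hp => ?_).mono ?_
  · simp only [I, Finset.mem_filter, Finset.mem_product] at hp
    obtain ⟨⟨h₁, h₂, h₃⟩, h₁₂, h₁₃, h₂₃⟩ := hp
    exact hH.coercive.hasGrowth_of_linearIndependent
      (hH.linearIndependent _ h₁ _ h₂ _ h₃ h₁₂ h₁₃ h₂₃) K (fun _ hx => hx) (by simpa using hd)
  · intro x hx
    obtain ⟨y₁, h₁, y₂, h₂, y₃, h₃, h₁₂, h₁₃, h₂₃⟩ := Finset.two_lt_card.1 hx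
    have hY {y} (hy : y ∈ nearMax Y H K x) : y ∈ Y := Finset.filter_subset _ _ hy
    simp only [Set.mem_iUnion, exists_prop, Set.mem_ofPred_eq, Fin.forall_fin_two]
    exact ⟨(y₁, y₂, y₃), by simp [I, hY h₁, hY h₂, hY h₃, h₁₂, h₁₃, h₂₃],
      hH.abs_sub_dotProduct_le h₁ h₂, hH.abs_sub_dotProduct_le h₁ h₃⟩

theorem tendsto_twisted_ridgeSlice_sub (hH : IsSupportFunction Y H) (hd : q + 2 = d)
    {y₁ y₂ n : Fin d → ℤ} (hy₁ : y₁ ∈ Y) (hy₂ : y₂ ∈ Y) (hne : y₁ ≠ y₂) {c : ℤ}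
    (hn : y₁ - y₂ = c • n) (k : ℤ) (u : Fin d → ℤ) :
    Tendsto (fun s => s ^ (q + 1) *
      (∑' x, (ridgeSlice H y₁ y₂ n (k + n ⬝ᵥ u)).indicator (paritySign S) x * expWeight H s x -
        ∑' x, paritySign S u * (ridgeSlice H y₁ y₂ n k).indicator (paritySign S) x *
          expWeight H s x)) (𝓝[>] 0) (𝓝 0) := by
  have hn0 : n ≠ 0 := by
    rintro rfl
    exact hne (sub_eq_zero.1 (hn.trans (smul_zero c)))
  have habs (E : Set (Fin d → ℤ)) (x) : |E.indicator (paritySign S) x| ≤ 1 := by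
    by_cases hx : x ∈ E <;> simp [hx, abs_paritySign]
  set K := |c * k| + (|c * (k + n ⬝ᵥ u)| + oscillation H u) with hK
  have hu := hH.oscillation_nonneg u
  refine HasGrowth.tendsto_tsum_sub_tsum (M := 1) hH.coercive (hH.abs_map_add_sub_le u)
    (hH.coercive.hasGrowth_slab (by omega) hn0 |k + n ⬝ᵥ u|) (hH.hasGrowth_nearTies_three hd K)
    zero_le_one (.of_forall fun _ x => ?_) (.of_forall fun _ x => ?_) fun _ x hx => ?_
  · by_cases hx : x ∈ ridgeSlice H y₁ y₂ n (k + n ⬝ᵥ u)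
    · have hslab : x ∈ {x | |n ⬝ᵥ x| ≤ |k + n ⬝ᵥ u|} := by simp [hx.1]
      simpa [hslab] using habs _ x
    · simpa [hx] using Set.indicator_nonneg (fun _ _ => zero_le_one) x
  · rw [abs_mul, abs_paritySign, one_mul]
    exact habs _ x
  · have hiff := hH.add_mem_ridgeSlice_iff hy₁ hy₂ hne hn hx (k := k) (u := u)
      (by rw [hK]; linarith [abs_nonneg (c * (k + n ⬝ᵥ u))])
      (by rw [hK]; linarith [abs_nonneg (c * k)])
    by_cases hmem : x ∈ ridgeSlice H y₁ y₂ n k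
    · rw [Set.indicator_of_mem hmem, Set.indicator_of_mem (hiff.2 hmem), paritySign_add]
    · rw [Set.indicator_of_notMem hmem, Set.indicator_of_notMem (mt hiff.1 hmem), mul_zero]

theorem tendsto_twisted_ridgeSlice (hH : IsSupportFunction Y H) (hd : q + 2 = d)
    {y₁ y₂ n z : Fin d → ℤ} (hy₁ : y₁ ∈ Y) (hy₂ : y₂ ∈ Y) (hne : y₁ ≠ y₂) {c : ℤ}
    (hn : y₁ - y₂ = c • n) (hz : n ⬝ᵥ z = 1) {κ : ℝ}
    (hκ : Tendsto (fun s => s ^ (q + 1) * ∑' x, (wall H y₁ y₂).indicator (expWeight H s) x)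
      (𝓝[>] 0) (𝓝 κ)) (hS : S.Nonempty) (k : ℤ) :
    Tendsto (fun s => s ^ (q + 1) *
      ∑' x, (ridgeSlice H y₁ y₂ n k).indicator (paritySign S) x * expWeight H s x)
      (𝓝[>] 0) (𝓝 (if oddSupport n = S then (-1) ^ k * κ else 0)) := by
  have hc : c ≠ 0 := by
    rintro rfl
    exact hne (sub_eq_zero.1 (hn.trans (zero_smul ℤ n)))
  split_ifs with hnS
  · have hsign (x) : paritySign S x = (-1) ^ (n ⬝ᵥ x) := hnS ▸ paritySign_oddSupport n x
    have hwall (s x) : (ridgeSlice H y₁ y₂ n 0).indicator (paritySign S) x * expWeight H s x =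
        (wall H y₁ y₂).indicator (expWeight H s) x := by
      rw [← ridgeSlice_zero hc hn]
      by_cases hx : x ∈ ridgeSlice H y₁ y₂ n 0
      · simp [hx, hsign, hx.1]
      · simp [hx]
    have hlim := (hH.tendsto_twisted_ridgeSlice_sub (S := S) hd hy₁ hy₂ hne hn 0 (k • z)).add
      (hκ.const_mul ((-1) ^ k))
    simp only [dotProduct_smul, hz, hsign, smul_eq_mul, mul_one, zero_add, mul_assoc, hwall,
      tsum_mul_left] at hlim
    exact hlim.congr fun s => by ring
  · obtain ⟨u, hnu, hu⟩ := exists_dotProduct_eq_zero_and_paritySign hz hS hnS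
    have hlim := hH.tendsto_twisted_ridgeSlice_sub (S := S) hd hy₁ hy₂ hne hn k u
    simp only [hnu, hu, add_zero, neg_mul, one_mul, tsum_neg] at hlim
    simpa using (hlim.div_const 2).congr fun s => by ring

end IsSupportFunction

end TwistedSums

section SecondDifference

open scoped Topology Matrix

variable {d q : ℕ} {Y : Finset (Fin d → ℤ)} {H : (Fin d → ℤ) → ℤ} {S : Finset (Fin d)}
  {u : Fin d → ℤ}

theorem sum_Icc_neg_one_zpow_mul_sub_abs (e : ℝ) (m : ℕ) :
    ∑ k ∈ Finset.Icc (-(m : ℤ)) m, (-1 : ℝ) ^ k * (e - |(k : ℝ)|) =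
      (-1) ^ (m : ℤ) * (e - m - 1 / 2) + 1 / 2 := by
  induction m with
  | zero => simp
  | succ m ih =>
    have hsplit : Finset.Icc (-((m + 1 : ℕ) : ℤ)) (m + 1 : ℕ) =
        insert (-((m : ℤ) + 1)) (insert ((m : ℤ) + 1) (Finset.Icc (-(m : ℤ)) m)) := by
      ext k
      simp only [Finset.mem_Icc, Finset.mem_insert]
      omega
    have habs : |(m : ℝ) + 1| = m + 1 := abs_of_nonneg (by positivity)
    rw [hsplit, Finset.sum_insert (by simp; omega), Finset.sum_insert (by simp), ih]
    push_cast
    rw [abs_neg, habs, zpow_neg, ← inv_zpow, inv_neg_one, neg_one_zpow_add, zpow_one]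
    ring

theorem sum_tent_eq_one {e : ℤ} (he : Odd e) :
    ∑ k ∈ Finset.Icc (1 - |e|) (|e| - 1), (-1 : ℝ) ^ k * (|(e : ℝ)| - |(k : ℝ)|) = 1 := by
  obtain ⟨m, hm⟩ := he.natAbs
  have habs : |e| = (2 * m : ℕ) + 1 := by rw [Int.abs_eq_natAbs, hm]; rfl
  have hreal : |(e : ℝ)| = (2 * m : ℕ) + 1 := by exact_mod_cast congrArg (Int.cast (R := ℝ)) habs
  have heven : (-1 : ℝ) ^ ((2 * m : ℕ) : ℤ) = 1 := Even.neg_one_zpow (by simp)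
  rw [habs, hreal, add_sub_cancel_right, show (1 : ℤ) - ((2 * m : ℕ) + 1) = -(2 * m : ℕ) by ring,
    sum_Icc_neg_one_zpow_mul_sub_abs, heven]
  ring

theorem paritySign_mul_tent {y₁ y₂ n : Fin d → ℤ} {c : ℤ} (hc : 0 ≤ c) (hn : y₁ - y₂ = c • n)
    (x : Fin d → ℤ) :
    paritySign S x * tent H u y₁ y₂ x = ∑ k ∈ Finset.Icc (1 - |n ⬝ᵥ u|) (|n ⬝ᵥ u| - 1),
      c * (|((n ⬝ᵥ u : ℤ) : ℝ)| - |(k : ℝ)|) *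
        (ridgeSlice H y₁ y₂ n k).indicator (paritySign S) x := by
  have hdot (z) : |(y₁ - y₂) ⬝ᵥ z| = c * |n ⬝ᵥ z| := by
    rw [hn, smul_dotProduct, smul_eq_mul, abs_mul, abs_of_nonneg hc]
  rw [tent]
  split_ifs with hmax
  · have hmem (k) : x ∈ ridgeSlice H y₁ y₂ n k ↔ k = n ⬝ᵥ x :=
      ⟨fun h => h.1.symm, fun h => ⟨h.symm, hmax⟩⟩
    simp only [Set.indicator, hmem, mul_ite, mul_zero, Finset.sum_ite_eq', Finset.mem_Icc]
    rw [hdot, hdot, ← mul_sub]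
    split_ifs with hmem
    · rw [max_eq_right (mul_nonneg hc (by rw [sub_nonneg, abs_le]; omega))]
      push_cast
      ring
    · rw [max_eq_left (mul_nonpos_of_nonneg_of_nonpos hc ?_), Int.cast_zero, mul_zero]
      by_contra! hlt
      exact hmem (by have := abs_lt.1 (sub_pos.1 hlt); omega)
  · have hmem (k) : x ∉ ridgeSlice H y₁ y₂ n k := fun h => hmax h.2
    simp [hmem]

theorem abs_tent_le (H : (Fin d → ℤ) → ℤ) (u y₁ y₂ x : Fin d → ℤ) :
    |tent H u y₁ y₂ x| ≤ |(y₁ - y₂) ⬝ᵥ u| := by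
  rw [tent]
  split_ifs
  · rw [abs_of_nonneg (le_max_left _ _)]
    exact max_le (abs_nonneg _) (sub_le_self _ (abs_nonneg _))
  · rw [abs_zero]
    exact abs_nonneg _

namespace IsSupportFunction

theorem tendsto_twisted_tent (hH : IsSupportFunction Y H) (hd : q + 2 = d)
    {y₁ y₂ n z : Fin d → ℤ} (hy₁ : y₁ ∈ Y) (hy₂ : y₂ ∈ Y) (hne : y₁ ≠ y₂) {c : ℤ} (hc : 0 ≤ c)
    (hn : y₁ - y₂ = c • n) (hz : n ⬝ᵥ z = 1) {κ : ℝ}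
    (hκ : Tendsto (fun s => s ^ (q + 1) * ∑' x, (wall H y₁ y₂).indicator (expWeight H s) x)
      (𝓝[>] 0) (𝓝 κ)) (hS : S.Nonempty) (hu : paritySign S u = -1) :
    Tendsto (fun s => s ^ (q + 1) *
      ∑' x, paritySign S x * tent H u y₁ y₂ x * expWeight H s x)
      (𝓝[>] 0) (𝓝 (if oddSupport n = S then c * κ else 0)) := by
  have hlim := tendsto_finsetSum (Finset.Icc (1 - |n ⬝ᵥ u|) (|n ⬝ᵥ u| - 1)) fun k _ =>
    (hH.tendsto_twisted_ridgeSlice hd hy₁ hy₂ hne hn hz hκ hS k).const_mul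
      (c * (|((n ⬝ᵥ u : ℤ) : ℝ)| - |(k : ℝ)|))
  have hval : ∑ k ∈ Finset.Icc (1 - |n ⬝ᵥ u|) (|n ⬝ᵥ u| - 1),
      (c * (|((n ⬝ᵥ u : ℤ) : ℝ)| - |(k : ℝ)|) * if oddSupport n = S then (-1) ^ k * κ else 0) =
      if oddSupport n = S then c * κ else 0 := by
    split_ifs with hnS
    · have hodd : Odd (n ⬝ᵥ u) := by
        rw [← Int.not_even_iff_odd]
        intro heven
        rw [← hnS, paritySign_oddSupport, heven.neg_one_zpow] at hu
        norm_num at hu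
      calc _ = c * κ * ∑ k ∈ Finset.Icc (1 - |n ⬝ᵥ u|) (|n ⬝ᵥ u| - 1),
            (-1 : ℝ) ^ k * (|((n ⬝ᵥ u : ℤ) : ℝ)| - |(k : ℝ)|) := by
            rw [Finset.mul_sum]
            exact Finset.sum_congr rfl fun k _ => by ring
        _ = c * κ := by rw [sum_tent_eq_one hodd, mul_one]
    · simp
  rw [hval] at hlim
  refine hlim.congr' ?_
  filter_upwards [self_mem_nhdsWithin] with s hs
  have hsum (k : ℤ) : Summable fun x =>
      (ridgeSlice H y₁ y₂ n k).indicator (paritySign S) x * expWeight H s x := by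
    refine hH.coercive.summable_mul_expWeight hs (M := 1) fun x => ?_
    by_cases hx : x ∈ ridgeSlice H y₁ y₂ n k <;> simp [hx, abs_paritySign]
  simp only [paritySign_mul_tent hc hn, Finset.sum_mul, mul_assoc]
  rw [Summable.tsum_finsetSum fun k _ => ((hsum k).mul_left _).mul_left _, Finset.mul_sum]
  simp only [tsum_mul_left]
  exact Finset.sum_congr rfl fun k _ => by ring

end IsSupportFunction

end SecondDifference

section TwistedExpSums

open scoped Topology Matrix

variable {d q : ℕ} {Y : Finset (Fin d → ℤ)} {H : (Fin d → ℤ) → ℤ} {S : Finset (Fin d)}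
  {u : Fin d → ℤ}

/-- What is left of `2 - expWeight H s (x + u) / expWeight H s x - expWeight H s (x - u) /
expWeight H s x` after removing its linear term in `s`, divided by `s ^ 2`. -/
def quadraticRemainder (H : (Fin d → ℤ) → ℤ) (u : Fin d → ℤ) (s : ℝ) (x : Fin d → ℤ) : ℝ :=
  (2 - Real.exp (-(s * (H (x + u) - H x))) - Real.exp (-(s * (H (x - u) - H x))) -
    s * secondDifference H u x) / s ^ 2

theorem two_mul_expWeight_sub_sub {s : ℝ} (hs : s ≠ 0) (u x : Fin d → ℤ) :
    2 * expWeight H s x - expWeight H s (x + u) - expWeight H s (x - u) =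
      s * (secondDifference H u x * expWeight H s x) +
        s ^ 2 * (quadraticRemainder H u s x * expWeight H s x) := by
  have hexp (y : Fin d → ℤ) :
      expWeight H s y = Real.exp (-(s * (H y - H x))) * expWeight H s x := by
    rw [expWeight, expWeight, ← Real.exp_add]
    ring_nf
  rw [hexp (x + u), hexp (x - u), quadraticRemainder]
  field_simp
  ring

theorem tsum_paritySign_mul_add (hu : paritySign S u = -1) (f : (Fin d → ℤ) → ℝ) :
    ∑' x, paritySign S x * f (x + u) = -∑' x, paritySign S x * f x := by
  rw [← (Equiv.addRight u).tsum_eq fun x => paritySign S x * f x, ← tsum_neg]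
  simp [paritySign_add, hu]

theorem four_mul_tsum_paritySign_mul (hu : paritySign S u = -1) {f : (Fin d → ℤ) → ℝ}
    (hf : Summable f) :
    4 * ∑' x, paritySign S x * f x =
      ∑' x, paritySign S x * (2 * f x - f (x + u) - f (x - u)) := by
  have hsum {g : (Fin d → ℤ) → ℝ} (hg : Summable g) : Summable fun x => paritySign S x * g x :=
    hg.norm.of_norm_bounded fun x => by rw [norm_mul, Real.norm_eq_abs, abs_paritySign, one_mul]
  have hshift (v) : Summable fun x => f (x + v) := (Equiv.addRight v).summable_iff.2 hf
  have hadd := tsum_paritySign_mul_add hu f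
  have hsub := tsum_paritySign_mul_add ((paritySign_neg S u).trans hu) f
  simp only [sub_eq_add_neg _ u, mul_sub, mul_left_comm _ (2 : ℝ)]
  rw [(((hsum hf).mul_left 2).sub (hsum (hshift u))).tsum_sub (hsum (hshift (-u))),
    ((hsum hf).mul_left 2).tsum_sub (hsum (hshift u)), tsum_mul_left, hadd, hsub]
  ring

theorem IsCoercive.summable_twisted (hH : IsCoercive H) (S : Finset (Fin d)) {s : ℝ} (hs : 0 < s)
    {f : (Fin d → ℤ) → ℤ} {M : ℤ} (hf : ∀ x, |f x| ≤ M) :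
    Summable fun x => paritySign S x * f x * expWeight H s x :=
  hH.summable_mul_expWeight hs (M := M) fun x => by
    rw [abs_mul, abs_paritySign, one_mul]
    exact_mod_cast hf x

namespace IsSupportFunction

theorem abs_quadraticRemainder_le (hH : IsSupportFunction Y H) (u : Fin d → ℤ) :
    ∀ᶠ s in 𝓝[>] 0, ∀ x, |quadraticRemainder H u s x| ≤ 2 * (oscillation H u : ℝ) ^ 2 := by
  filter_upwards [eventually_mul_le_one (oscillation H u), self_mem_nhdsWithin] with s hs1 hs x
  have hs0 : 0 < s := hs
  have hexp {v : Fin d → ℤ} (hv : oscillation H v = oscillation H u) :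
      |Real.exp (-(s * (H (x + v) - H x))) - 1 - -(s * (H (x + v) - H x))| ≤
        s ^ 2 * (oscillation H u : ℝ) ^ 2 := by
    have hle : |-(s * ((H (x + v) : ℝ) - H x))| ≤ s * oscillation H u := by
      rw [abs_neg, abs_mul, abs_of_pos hs0]
      gcongr
      exact_mod_cast hv ▸ hH.abs_map_add_sub_le v x
    rw [← mul_pow]
    exact (Real.abs_exp_sub_one_sub_id_le (hle.trans hs1)).trans
      (sq_le_sq' (abs_le.1 hle).1 (abs_le.1 hle).2)
  have hadd := abs_le.1 (hexp rfl)
  have hsub := abs_le.1 (hexp (v := -u) (oscillation_neg H u))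
  rw [← sub_eq_add_neg] at hsub
  rw [quadraticRemainder, secondDifference, abs_div, abs_of_pos (pow_pos hs0 2),
    div_le_iff₀ (pow_pos hs0 2), abs_le]
  push_cast
  constructor <;> linarith [hadd.1, hadd.2, hsub.1, hsub.2]

theorem quadraticRemainder_add_self (hH : IsSupportFunction Y H) {x : Fin d → ℤ}
    (hx : x ∉ nearTies Y H 2 (2 * oscillation H u)) (s : ℝ) :
    quadraticRemainder H u s (x + u) = quadraticRemainder H u s x := by
  have hnonneg := hH.oscillation_nonneg u
  obtain ⟨y, hy, hmax⟩ := hH.exists_dotProduct_eq x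
  have h₁ := hH.map_add_eq hx (by linarith) hy hmax (u := u)
  have h₂ := hH.map_add_eq hx (hH.oscillation_two_nsmul u).le hy hmax
  have h₃ := hH.map_add_eq hx (u := -u) (by rw [oscillation_neg]; linarith) hy hmax
  rw [two_nsmul, ← add_assoc, dotProduct_add] at h₂
  rw [← sub_eq_add_neg, dotProduct_neg] at h₃
  simp only [quadraticRemainder, secondDifference, add_sub_cancel_right, h₁, h₂, h₃]
  push_cast
  ring_nf

theorem tendsto_twisted_quadraticRemainder (hH : IsSupportFunction Y H) (hd : q + 2 = d)
    (hu : paritySign S u = -1) :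
    Tendsto (fun s => s ^ (q + 2) *
      ∑' x, paritySign S x * quadraticRemainder H u s x * expWeight H s x) (𝓝[>] 0) (𝓝 0) := by
  have hbound : ∀ᶠ s in 𝓝[>] 0, ∀ x,
      |paritySign S x * quadraticRemainder H u s x| ≤ 2 * (oscillation H u : ℝ) ^ 2 := by
    filter_upwards [hH.abs_quadraticRemainder_le u] with s hs x
    rw [abs_mul, abs_paritySign, one_mul]
    exact hs x
  have hlim := HasGrowth.tendsto_tsum_sub_tsum (p := q + 1) hH.coercive (hH.abs_map_add_sub_le u)
    (E := Set.univ) (hd ▸ hH.coercive.hasGrowth_univ)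
    (hH.hasGrowth_nearTies_two hd (2 * oscillation H u))
    (M := 2 * (oscillation H u : ℝ) ^ 2) (by positivity)
    (G := fun s x => paritySign S x * quadraticRemainder H u s x)
    (G' := fun s x => -(paritySign S x * quadraticRemainder H u s x))
    (by simpa using hbound) (by simpa only [abs_neg] using hbound)
    fun s x hx => by rw [paritySign_add, hu, hH.quadraticRemainder_add_self hx]; ring
  have hhalf := hlim.div_const 2
  rw [zero_div] at hhalf
  refine hhalf.congr fun s => ?_
  simp only [neg_mul, tsum_neg]
  ring

theorem abs_secondDifference_le (hH : IsSupportFunction Y H) (u x : Fin d → ℤ) :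
    |secondDifference H u x| ≤ 2 * oscillation H u := by
  have hadd := abs_le.1 (hH.abs_map_add_sub_le u x)
  have hsub := abs_le.1 (hH.abs_map_add_sub_le (-u) x)
  rw [oscillation_neg, ← sub_eq_add_neg] at hsub
  rw [secondDifference, abs_le]
  constructor <;> linarith [hadd.1, hadd.2, hsub.1, hsub.2]

theorem exists_abs_tentDefect_le (hH : IsSupportFunction Y H) (u : Fin d → ℤ) :
    ∃ M : ℤ, ∀ x, |tentDefect Y H u x| ≤ M :=
  ⟨2 * (2 * oscillation H u) + ∑ p ∈ Y.offDiag, |(p.1 - p.2) ⬝ᵥ u|, fun x =>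
    calc |tentDefect Y H u x|
        ≤ |2 * secondDifference H u x| + |∑ p ∈ Y.offDiag, tent H u p.1 p.2 x| := abs_sub _ _
      _ ≤ _ := add_le_add
          ((abs_mul 2 _).trans_le (mul_le_mul_of_nonneg_left (hH.abs_secondDifference_le u x)
            zero_le_two))
          ((Finset.abs_sum_le_sum_abs _ _).trans
            (Finset.sum_le_sum fun p _ => abs_tent_le H u p.1 p.2 x))⟩

theorem tendsto_twisted_tentDefect (hH : IsSupportFunction Y H) (hd : q + 2 = d) :
    Tendsto (fun s => s ^ (q + 1) * ∑' x, paritySign S x * tentDefect Y H u x * expWeight H s x)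
      (𝓝[>] 0) (𝓝 0) := by
  obtain ⟨M, hM⟩ := hH.exists_abs_tentDefect_le u
  refine (hH.hasGrowth_nearTies_three hd (oscillation H u)).tendsto_zero (j := 0) (M := M)
    hH.coercive (by omega) (.of_forall fun s x => ?_)
  by_cases hx : x ∈ nearTies Y H 3 (oscillation H u)
  · rw [abs_mul, abs_mul, abs_paritySign, one_mul, abs_of_pos (expWeight_pos H s x), pow_zero,
      one_mul, Set.indicator_of_mem hx]
    exact mul_le_mul_of_nonneg_right (mod_cast hM x) (expWeight_pos H s x).le
  · simp [tentDefect, hH.two_mul_secondDifference hx, hx]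

theorem tendsto_twisted_secondDifference (hH : IsSupportFunction Y H) (hd : q + 2 = d)
    {L : (Fin d → ℤ) × (Fin d → ℤ) → ℝ}
    (hL : ∀ p ∈ Y.offDiag, Tendsto (fun s => s ^ (q + 1) *
      ∑' x, paritySign S x * tent H u p.1 p.2 x * expWeight H s x) (𝓝[>] 0) (𝓝 (L p))) :
    Tendsto (fun s => s ^ (q + 1) *
      ∑' x, paritySign S x * secondDifference H u x * expWeight H s x)
      (𝓝[>] 0) (𝓝 (1 / 2 * ∑ p ∈ Y.offDiag, L p)) := by
  have hlim := ((hH.tendsto_twisted_tentDefect (S := S) (u := u) hd).add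
    (tendsto_finsetSum _ hL)).const_mul (1 / 2)
  rw [zero_add] at hlim
  refine hlim.congr' ?_
  filter_upwards [self_mem_nhdsWithin] with s hs
  obtain ⟨M, hM⟩ := hH.exists_abs_tentDefect_le u
  have hsumD := hH.coercive.summable_twisted S hs hM
  have hsum (p : (Fin d → ℤ) × (Fin d → ℤ)) :=
    hH.coercive.summable_twisted S hs (abs_tent_le H u p.1 p.2)
  rw [← Finset.mul_sum, ← mul_add, ← Summable.tsum_finsetSum fun p _ => hsum p,
    ← hsumD.tsum_add (summable_sum fun p _ => hsum p), mul_left_comm, ← tsum_mul_left]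
  refine congrArg _ (tsum_congr fun x => ?_)
  rw [← Finset.sum_mul, ← Finset.mul_sum]
  simp only [tentDefect]
  push_cast
  ring

end IsSupportFunction

end TwistedExpSums

section ParityDifference

open scoped Topology Matrix

variable {d q : ℕ} {Y : Finset (Fin d → ℤ)} {H : (Fin d → ℤ) → ℤ} {S : Finset (Fin d)}
  {κ : (Fin d → ℤ) × (Fin d → ℤ) → ℝ}

theorem oddSupport_nonempty {n z : Fin d → ℤ} (hz : n ⬝ᵥ z = 1) : (oddSupport n).Nonempty := by
  by_contra! hempty
  have h := paritySign_oddSupport n z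
  rw [hz, hempty, paritySign, Finset.sum_empty, zpow_zero, zpow_one] at h
  norm_num at h

theorem tsum_sum_paritySign_mul_expWeight (hH : IsCoercive H) (htwo : ∀ x, H (2 • x) = 2 * H x)
    {s : ℝ} (hs : 0 < s) :
    ∑ S, ∑' x, paritySign S x * expWeight H s x = 2 ^ d * ∑' x, expWeight H (2 * s) x := by
  classical
  have hinj : Function.Injective fun x : Fin d → ℤ => 2 • x := nsmul_right_injective two_ne_zero
  have hsupp : (Function.support fun x => (∑ S, paritySign S x) * expWeight H s x) ⊆
      Set.range fun x : Fin d → ℤ => 2 • x := by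
    intro x hx
    rw [Function.mem_support, sum_paritySign] at hx
    have heven : ∀ i, Even (x i) := by
      by_contra h
      simp [h] at hx
    choose z hz using heven
    exact ⟨z, funext fun i => by simp [hz i, two_mul]⟩
  rw [← Summable.tsum_finsetSum fun S _ => hH.summable_mul_expWeight hs (M := 1) fun x =>
    (abs_paritySign S x).le, ← tsum_mul_left]
  simp only [← Finset.sum_mul]
  rw [← hinj.tsum_eq hsupp]
  refine tsum_congr fun x => ?_
  have heven : ∀ i, Even ((2 • x) i) := fun i => ⟨x i, by rw [two_nsmul, Pi.add_apply]⟩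
  rw [sum_paritySign, if_pos heven, expWeight, expWeight, htwo]
  push_cast
  ring_nf

namespace IsSupportFunction

theorem tendsto_twisted_expWeight (hH : IsSupportFunction Y H) (hd : q + 2 = d)
    (hκ : ∀ p ∈ Y.offDiag, Tendsto (fun s => s ^ (q + 1) *
      ∑' x, (wall H p.1 p.2).indicator (expWeight H s) x) (𝓝[>] 0) (𝓝 (κ p)))
    (hS : S.Nonempty) :
    Tendsto (fun s => s ^ q * ∑' x, paritySign S x * expWeight H s x) (𝓝[>] 0)
      (𝓝 (1 / 8 * ∑ p ∈ Y.offDiag,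
        if oddSupport (primitivePart (p.1 - p.2)) = S then content (p.1 - p.2) * κ p else 0)) := by
  obtain ⟨i, hi⟩ := hS
  have hu : paritySign S (Pi.single i 1) = -1 := by rw [paritySign_single, if_pos hi]
  have htent := hH.tendsto_twisted_secondDifference (S := S) (u := Pi.single i 1) hd fun p hp => by
    obtain ⟨h₁, h₂, hne⟩ := Finset.mem_offDiag.1 hp
    obtain ⟨z, hz⟩ := exists_primitivePart_dotProduct_eq_one (sub_ne_zero.2 hne)
    exact hH.tendsto_twisted_tent hd h₁ h₂ hne (content_pos (sub_ne_zero.2 hne)).le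
      (eq_content_smul_primitivePart _) hz (hκ p hp) ⟨i, hi⟩ hu
  have hlim := (htent.add (hH.tendsto_twisted_quadraticRemainder hd hu)).const_mul (1 / 4)
  rw [add_zero, ← mul_assoc] at hlim
  norm_num only at hlim
  refine hlim.congr' ?_
  filter_upwards [self_mem_nhdsWithin, hH.abs_quadraticRemainder_le (Pi.single i 1)] with s hs hR
  have hs0 : s ≠ 0 := ne_of_gt hs
  have hsumD := hH.coercive.summable_twisted S hs (hH.abs_secondDifference_le (Pi.single i 1))
  have hsumR := hH.coercive.summable_mul_expWeight hs (G := fun x => paritySign S x *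
    quadraticRemainder H (Pi.single i 1) s x) (by simpa [abs_mul, abs_paritySign] using hR)
  have hfour := four_mul_tsum_paritySign_mul hu (hH.coercive.summable_expWeight hs)
  simp only [two_mul_expWeight_sub_sub hs0, mul_add, mul_left_comm (paritySign S _) s,
    mul_left_comm (paritySign S _) (s ^ 2), ← mul_assoc (paritySign S _)] at hfour
  rw [(hsumD.mul_left s).tsum_add (hsumR.mul_left (s ^ 2)), tsum_mul_left, tsum_mul_left] at hfour
  linear_combination -(s ^ q / 4) * hfour

theorem tendsto_parity_difference (hH : IsSupportFunction Y H) (hd : q + 2 = d)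
    (hκ : ∀ p ∈ Y.offDiag, Tendsto (fun s => s ^ (q + 1) *
      ∑' x, (wall H p.1 p.2).indicator (expWeight H s) x) (𝓝[>] 0) (𝓝 (κ p))) :
    Tendsto (fun s => s ^ q * (2 ^ d * ∑' x, expWeight H (2 * s) x - ∑' x, expWeight H s x))
      (𝓝[>] 0) (𝓝 (1 / 8 * ∑ p ∈ Y.offDiag, content (p.1 - p.2) * κ p)) := by
  have hlim := tendsto_finsetSum ({∅}ᶜ : Finset (Finset (Fin d))) fun S hS =>
    hH.tendsto_twisted_expWeight hd hκ (Finset.nonempty_iff_ne_empty.2 (by simpa using hS))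
  rw [← Finset.mul_sum, Finset.sum_comm] at hlim
  have hval {p : (Fin d → ℤ) × (Fin d → ℤ)} (hp : p ∈ Y.offDiag) :
      (∑ S ∈ {∅}ᶜ, if oddSupport (primitivePart (p.1 - p.2)) = S then content (p.1 - p.2) * κ p
        else 0) = content (p.1 - p.2) * κ p := by
    obtain ⟨z, hz⟩ := exists_primitivePart_dotProduct_eq_one
      (sub_ne_zero.2 (Finset.mem_offDiag.1 hp).2.2)
    rw [Finset.sum_ite_eq, if_pos (by simpa using (oddSupport_nonempty hz).ne_empty)]
  rw [Finset.sum_congr rfl fun p hp => hval hp] at hlim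
  refine hlim.congr' ?_
  filter_upwards [self_mem_nhdsWithin] with s hs
  have hempty : ∑' x, paritySign ∅ x * expWeight H s x = ∑' x, expWeight H s x := by
    simp [paritySign]
  rw [← tsum_sum_paritySign_mul_expWeight hH.coercive hH.map_two_nsmul hs, ← Finset.mul_sum,
    ← hempty, ← Finset.sum_compl_add_sum {∅}, Finset.sum_singleton, add_sub_cancel_right]

end IsSupportFunction

end ParityDifference

/-! ### Generating functions at the boundary of the disc of convergence -/

section Abelian

open scoped Topology Nat

open Asymptotics

theorem hasSum_pow_three_mul_geometric {q : ℝ} (hq : ‖q‖ < 1) :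
    HasSum (fun n : ℕ => (n : ℝ) ^ 3 * q ^ n) (q * (1 + 4 * q + q ^ 2) / (1 - q) ^ 4) := by
  have hne : 1 - q ≠ 0 := sub_ne_zero.mpr (by rintro rfl; simp at hq)
  have hchoose (k n : ℕ) : ((n + k).choose k : ℝ) = ((n + k).descFactorial k : ℝ) / k ! := by
    rw [Nat.descFactorial_eq_factorial_mul_choose]
    push_cast
    field_simp
  have hsum := (((hasSum_choose_mul_geometric_of_norm_lt_one 3 hq).mul_left 6).sub
    ((hasSum_choose_mul_geometric_of_norm_lt_one 2 hq).mul_left 12)).add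
      ((hasSum_choose_mul_geometric_of_norm_lt_one 1 hq).mul_left 7) |>.sub
        (hasSum_geometric_of_norm_lt_one hq)
  have hvalue : q * (1 + 4 * q + q ^ 2) / (1 - q) ^ 4 = 6 * (1 / (1 - q) ^ (3 + 1)) -
      12 * (1 / (1 - q) ^ (2 + 1)) + 7 * (1 / (1 - q) ^ (1 + 1)) - (1 - q)⁻¹ := by
    field_simp
    ring
  rw [hvalue]
  refine hsum.congr_fun fun n => ?_
  simp only [hchoose, Nat.descFactorial_succ, Nat.descFactorial_zero, Nat.factorial]
  push_cast [Nat.add_sub_cancel, show n + 3 - 2 = n + 1 by omega,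
    show n + 3 - 1 = n + 2 by omega, show n + 2 - 1 = n + 1 by omega]
  ring

theorem tendsto_exp_neg_nhdsGT_zero : Tendsto (fun s : ℝ => Real.exp (-s)) (𝓝[>] 0) (𝓝 1) :=
  tendsto_nhdsWithin_of_tendsto_nhds (Continuous.tendsto' (by fun_prop) _ _ (by simp))

theorem tendsto_div_one_sub_exp_neg :
    Tendsto (fun s : ℝ => s / (1 - Real.exp (-s))) (𝓝[>] 0) (𝓝 1) := by
  have hderiv : HasDerivAt (fun s : ℝ => 1 - Real.exp (-s)) 1 0 := by
    simpa using (hasDerivAt_neg (0 : ℝ)).exp.const_sub 1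
  have hslope := ((hasDerivAt_iff_tendsto_slope_zero.mp hderiv).mono_left
    (nhdsWithin_mono 0 fun s (hs : 0 < s) => hs.ne')).inv₀ one_ne_zero
  rw [inv_one] at hslope
  refine hslope.congr fun s => ?_
  simp [div_eq_mul_inv, mul_comm]

theorem exp_neg_lt_one {s : ℝ} (hs : 0 < s) : Real.exp (-s) < 1 :=
  Real.exp_lt_one_iff.mpr (neg_neg_of_pos hs)

theorem norm_exp_neg_lt_one {s : ℝ} (hs : 0 < s) : ‖Real.exp (-s)‖ < 1 := by
  rw [Real.norm_of_nonneg (Real.exp_pos _).le]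
  exact exp_neg_lt_one hs

theorem isEquivalent_choose_add (k : ℕ) :
    (fun m : ℕ => ((m + k).choose k : ℝ)) ~[atTop] fun m => (m : ℝ) ^ k / k ! := by
  have hshift : (fun m : ℕ => ((m + k : ℕ) : ℝ)) ~[atTop] fun m => (m : ℝ) := by
    push_cast
    exact IsEquivalent.refl.add_isLittleO
      ((isLittleO_const_id_atTop (k : ℝ)).comp_tendsto tendsto_natCast_atTop_atTop)
  exact ((isEquivalent_choose k).comp_tendsto (tendsto_add_atTop_nat k)).trans
    ((hshift.pow k).div IsEquivalent.refl)

theorem isLittleO_sub_mul_choose {k : ℕ} {f : ℕ → ℝ} {v : ℝ}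
    (hf : Tendsto (fun m : ℕ => k ! * f m / (m : ℝ) ^ k) atTop (𝓝 v)) :
    (fun m => f m - v * (m + k).choose k) =o[atTop] fun m => ((m + k).choose k : ℝ) := by
  have hchoose := isEquivalent_choose_add k
  have hpow : (fun m : ℕ => f m - v * ((m : ℝ) ^ k / k !)) =o[atTop]
      fun m => (m : ℝ) ^ k / k ! := by
    have hpos : ∀ᶠ m : ℕ in atTop, (m : ℝ) ^ k / k ! ≠ 0 := by
      filter_upwards [eventually_gt_atTop 0] with m hm
      positivity
    refine (isLittleO_iff_tendsto' (hpos.mono fun m hm h => absurd h hm)).mpr ?_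
    refine (tendsto_sub_nhds_zero_iff.mpr hf).congr' ?_
    filter_upwards [eventually_gt_atTop 0] with m hm
    field_simp
  refine ((hpow.sub (hchoose.isLittleO.const_mul_left v)).trans_isBigO
    hchoose.isBigO_symm).congr_left fun m => ?_
  simp only [Pi.sub_apply]
  ring

theorem exists_abs_tsum_mul_pow_le {c g : ℕ → ℝ} (hcg : c =o[atTop] g) (hg : ∀ m, 0 ≤ g m)
    {δ : ℝ} (hδ : 0 < δ) :
    ∃ B : ℝ, ∀ q ∈ Set.Ioo (0 : ℝ) 1, Summable (fun m => g m * q ^ m) →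
      Summable (fun m => c m * q ^ m) ∧
        |∑' m, c m * q ^ m| ≤ δ * ∑' m, g m * q ^ m + B := by
  obtain ⟨N, hN⟩ := eventually_atTop.mp (hcg.bound hδ)
  refine ⟨∑ m ∈ Finset.range N, |c m|, fun q hq hsum => ?_⟩
  have hhead : HasSum ((Finset.range N : Set ℕ).indicator fun m => |c m|)
      (∑ m ∈ Finset.range N, |c m|) := by
    have := hasSum_sum_of_ne_finset_zero (L := SummationFilter.unconditional ℕ)
      (s := Finset.range N) (f := (Finset.range N : Set ℕ).indicator fun m => |c m|)
      fun m hm => Set.indicator_of_notMem hm _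
    rwa [Finset.sum_congr rfl fun m hm => Set.indicator_of_mem (Finset.mem_coe.mpr hm) _] at this
  have hbound (m) : ‖c m * q ^ m‖ ≤
      δ * (g m * q ^ m) + (Finset.range N : Set ℕ).indicator (fun m => |c m|) m := by
    have hqm : 0 ≤ q ^ m := pow_nonneg hq.1.le m
    rw [norm_mul, Real.norm_eq_abs, Real.norm_of_nonneg hqm]
    by_cases hm : m ∈ (Finset.range N : Set ℕ)
    · rw [Set.indicator_of_mem hm]
      have hle : |c m| * q ^ m ≤ |c m| :=
        mul_le_of_le_one_right (abs_nonneg _) (pow_le_one₀ hq.1.le hq.2.le)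
      have := mul_nonneg hδ.le (mul_nonneg (hg m) hqm)
      linarith
    · rw [Set.indicator_of_notMem hm, add_zero, ← mul_assoc]
      have hcm := hN m (by simpa using hm)
      rw [Real.norm_eq_abs, Real.norm_of_nonneg (hg m)] at hcm
      gcongr
  have htotal := (hsum.hasSum.mul_left δ).add hhead
  exact ⟨htotal.summable.of_norm_bounded hbound, tsum_of_norm_bounded htotal hbound⟩

theorem tendsto_pow_mul_tsum_of_isLittleO {k : ℕ} {c : ℕ → ℝ}
    (hc : c =o[atTop] fun m => ((m + k).choose k : ℝ)) :
    Tendsto (fun s => s ^ (k + 1) * ∑' m, c m * Real.exp (-s) ^ m) (𝓝[>] 0) (𝓝 0) := by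
  rw [Metric.tendsto_nhds]
  intro ε hε
  obtain ⟨B, hB⟩ := exists_abs_tsum_mul_pow_le hc (fun m => Nat.cast_nonneg _) (half_pos hε)
  have hlim : Tendsto (fun s => ε / 2 * (s / (1 - Real.exp (-s))) ^ (k + 1) + s ^ (k + 1) * B)
      (𝓝[>] 0) (𝓝 (ε / 2 * 1 ^ (k + 1) + 0 ^ (k + 1) * B)) :=
    ((tendsto_div_one_sub_exp_neg.pow _).const_mul _).add
      (((tendsto_id.mono_left nhdsWithin_le_nhds).pow _).mul_const B)
  have hlt : ε / 2 * 1 ^ (k + 1) + 0 ^ (k + 1) * B < ε := by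
    rw [one_pow, zero_pow k.succ_ne_zero]
    linarith
  filter_upwards [hlim.eventually_lt_const hlt, self_mem_nhdsWithin] with s hsε hs
  have hs0 : 0 < s := hs
  have hsum := hasSum_choose_mul_geometric_of_norm_lt_one k (norm_exp_neg_lt_one hs0)
  have hle := (hB _ ⟨Real.exp_pos _, exp_neg_lt_one hs0⟩ hsum.summable).2
  rw [hsum.tsum_eq] at hle
  rw [Real.dist_eq, sub_zero, abs_mul, abs_of_nonneg (by positivity)]
  calc s ^ (k + 1) * |∑' m, c m * Real.exp (-s) ^ m|
      ≤ s ^ (k + 1) * (ε / 2 * (1 / (1 - Real.exp (-s)) ^ (k + 1)) + B) := by gcongr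
    _ = ε / 2 * (s / (1 - Real.exp (-s))) ^ (k + 1) + s ^ (k + 1) * B := by rw [div_pow]; ring
    _ < ε := hsε

theorem tendsto_pow_mul_tsum_mul_exp {k : ℕ} {f : ℕ → ℝ} {v : ℝ}
    (hf : Tendsto (fun m : ℕ => k ! * f m / (m : ℝ) ^ k) atTop (𝓝 v)) :
    Tendsto (fun s => s ^ (k + 1) * ∑' m, f m * Real.exp (-s) ^ m) (𝓝[>] 0) (𝓝 v) := by
  have hsmall := isLittleO_sub_mul_choose hf
  obtain ⟨B, hB⟩ := exists_abs_tsum_mul_pow_le hsmall (fun m => Nat.cast_nonneg _) one_pos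
  have hmain := (tendsto_div_one_sub_exp_neg.pow (k + 1)).const_mul v
  have hlim := (tendsto_pow_mul_tsum_of_isLittleO hsmall).add hmain
  rw [one_pow, mul_one, zero_add] at hlim
  refine hlim.congr' ?_
  filter_upwards [self_mem_nhdsWithin] with s hs
  have hs0 : 0 < s := hs
  have hsum := hasSum_choose_mul_geometric_of_norm_lt_one k (norm_exp_neg_lt_one hs0)
  have hrest := (hB _ ⟨Real.exp_pos _, exp_neg_lt_one hs0⟩ hsum.summable).1
  have hsplit (m : ℕ) : f m * Real.exp (-s) ^ m =
      (f m - v * (m + k).choose k) * Real.exp (-s) ^ m +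
        v * ((m + k).choose k * Real.exp (-s) ^ m) := by ring
  rw [tsum_congr hsplit, hrest.tsum_add (hsum.summable.mul_left v), tsum_mul_left, hsum.tsum_eq,
    div_pow]
  ring

end Abelian

section LevelCounts

open scoped Topology

variable {d : ℕ} {H : (Fin d → ℤ) → ℤ}

theorem IsCoercive.tsum_indicator_expWeight (hH : IsCoercive H) {s : ℝ} (hs : 0 < s)
    (E : Set (Fin d → ℤ)) :
    ∑' x, E.indicator (expWeight H s) x =
      ∑' j : ℕ, ({x | x ∈ E ∧ H x = j}.ncard : ℝ) * Real.exp (-s) ^ j := by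
  have htoNat (x) : ((H x).toNat : ℤ) = H x := Int.toNat_of_nonneg (hH.nonneg x)
  rw [← (((hH.summable_expWeight hs).indicator E).hasSum.tsum_fiberwise
    fun x => (H x).toNat).tsum_eq]
  refine tsum_congr fun j => ?_
  have hlevel : (fun x => (H x).toNat) ⁻¹' {j} ∩ E = {x | x ∈ E ∧ H x = j} := by
    ext x
    have := htoNat x
    simp only [Set.mem_inter_iff, Set.mem_preimage, Set.mem_singleton_iff, Set.mem_ofPred_eq]
    rw [and_comm]
    exact and_congr_right fun _ => by omega
  rw [tsum_subtype, Set.indicator_indicator, hlevel]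
  have hconst (x) : {x | x ∈ E ∧ H x = j}.indicator (expWeight H s) x =
      {x | x ∈ E ∧ H x = j}.indicator (fun _ => Real.exp (-s) ^ j) x := by
    refine congrFun (Set.indicator_congr fun x hx => ?_) x
    rw [expWeight, hx.2, ← Real.exp_nat_mul]
    push_cast
    ring_nf
  rw [tsum_congr hconst, ← tsum_subtype, tsum_const, Nat.card_coe_set_eq, nsmul_eq_mul]

variable {a b : ℝ}

theorem IsCoercive.tsum_expWeight_of_odd_cubic (hH : IsCoercive H) (hzero : {x | H x = 0}.ncard = 1)
    (hlevel : ∀ j : ℕ, 1 ≤ j → ({x | H x = j}.ncard : ℝ) = a * j ^ 3 + b * j) {s : ℝ}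
    (hs : 0 < s) :
    ∑' x, expWeight H s x =
      1 + a * (Real.exp (-s) * (1 + 4 * Real.exp (-s) + Real.exp (-s) ^ 2) /
        (1 - Real.exp (-s)) ^ 4) + b * (Real.exp (-s) / (1 - Real.exp (-s)) ^ 2) := by
  have hq := norm_exp_neg_lt_one hs
  have hfiber := hH.tsum_indicator_expWeight hs Set.univ
  simp only [Set.indicator_univ, Set.mem_univ, true_and] at hfiber
  rw [hfiber, ← (((hasSum_ite_eq (0 : ℕ) (1 : ℝ)).add
    ((hasSum_pow_three_mul_geometric hq).mul_left a)).add
      ((hasSum_coe_mul_geometric_of_norm_lt_one hq).mul_left b)).tsum_eq]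
  refine tsum_congr fun j => ?_
  rcases Nat.eq_zero_or_pos j with rfl | hj
  · simp [hzero]
  · rw [hlevel j hj, if_neg hj.ne']
    ring

theorem tendsto_sq_mul_odd_cubic_difference (a b : ℝ) :
    Tendsto (fun s : ℝ => s ^ 2 * (15 - a * (Real.exp (-s) *
      (1 - 4 * Real.exp (-s) + Real.exp (-s) ^ 2) / (1 + Real.exp (-s)) ^ 4)) +
        b * ((s / (1 - Real.exp (-s))) ^ 2 * ((16 * Real.exp (-s) ^ 2 -
          Real.exp (-s) * (1 + Real.exp (-s)) ^ 2) / (1 + Real.exp (-s)) ^ 2)))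
      (𝓝[>] 0) (𝓝 (3 * b)) := by
  have hid : Tendsto (fun s : ℝ => s) (𝓝[>] 0) (𝓝 0) := tendsto_id.mono_left nhdsWithin_le_nhds
  have hq := tendsto_exp_neg_nhdsGT_zero
  have hone := hq.const_add 1
  have hne : (1 + 1 : ℝ) ≠ 0 := by norm_num
  have hcubic := (hid.pow 2).mul (((hq.mul (((hq.const_mul 4).const_sub 1).add (hq.pow 2))).div
    (hone.pow 4) (pow_ne_zero 4 hne)).const_mul a |>.const_sub 15)
  have hlinear := ((tendsto_div_one_sub_exp_neg.pow 2).mul ((((hq.pow 2).const_mul 16).sub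
    (hq.mul (hone.pow 2))).div (hone.pow 2) (pow_ne_zero 2 hne))).const_mul b
  have hvalue : 3 * b = 0 ^ 2 * (15 - a * (1 * (1 - 4 * 1 + 1 ^ 2) / (1 + 1) ^ 4)) +
      b * (1 ^ 2 * ((16 * 1 ^ 2 - 1 * (1 + 1) ^ 2) / (1 + 1) ^ 2)) := by ring
  rw [hvalue]
  exact hcubic.add hlinear

theorem IsCoercive.tendsto_tsum_difference_of_odd_cubic (hH : IsCoercive H)
    (hzero : {x | H x = 0}.ncard = 1)
    (hlevel : ∀ j : ℕ, 1 ≤ j → ({x | H x = j}.ncard : ℝ) = a * j ^ 3 + b * j) :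
    Tendsto (fun s => s ^ 2 * (2 ^ 4 * ∑' x, expWeight H (2 * s) x - ∑' x, expWeight H s x))
      (𝓝[>] 0) (𝓝 (3 * b)) := by
  refine (tendsto_sq_mul_odd_cubic_difference a b).congr' ?_
  filter_upwards [self_mem_nhdsWithin] with s hs
  have hs0 : 0 < s := hs
  have hsq : Real.exp (-(2 * s)) = Real.exp (-s) ^ 2 := by
    rw [← Real.exp_nat_mul]
    push_cast
    ring_nf
  rw [hH.tsum_expWeight_of_odd_cubic hzero hlevel hs0,
    hH.tsum_expWeight_of_odd_cubic hzero hlevel (by positivity : 0 < 2 * s), hsq]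
  have hsub : 1 - Real.exp (-s) ≠ 0 := (sub_pos.mpr (exp_neg_lt_one hs0)).ne'
  have hadd : 1 + Real.exp (-s) ≠ 0 := by positivity
  rw [show 1 - Real.exp (-s) ^ 2 = (1 - Real.exp (-s)) * (1 + Real.exp (-s)) by ring]
  field_simp
  ring

end LevelCounts

/-! ### Counting lattice points in dilates -/

section CoeLat

open scoped Matrix

variable {d : ℕ}

theorem coeLat_zero : coeLat (0 : Fin d → ℤ) = 0 := funext fun _ => Int.cast_zero

theorem coeLat_add (x y : Fin d → ℤ) : coeLat (x + y) = coeLat x + coeLat y :=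
  funext fun _ => Int.cast_add _ _

theorem coeLat_neg (x : Fin d → ℤ) : coeLat (-x) = -coeLat x := funext fun _ => Int.cast_neg _

theorem coeLat_sub (x y : Fin d → ℤ) : coeLat (x - y) = coeLat x - coeLat y :=
  funext fun _ => Int.cast_sub _ _

theorem coeLat_zsmul (k : ℤ) (x : Fin d → ℤ) : coeLat (k • x) = (k : ℝ) • coeLat x :=
  funext fun _ => Int.cast_mul _ _

theorem coeLat_nsmul (k : ℕ) (x : Fin d → ℤ) : coeLat (k • x) = (k : ℝ) • coeLat x := by
  rw [← natCast_zsmul, coeLat_zsmul, Int.cast_natCast]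

theorem coeLat_injective : Function.Injective (coeLat (d := d)) := fun _ _ h =>
  funext fun i => Int.cast_injective (congrFun h i)

theorem coeLat_dotProduct (y x : Fin d → ℤ) : coeLat y ⬝ᵥ coeLat x = ((y ⬝ᵥ x : ℤ) : ℝ) := by
  simp only [coeLat, dotProduct, Int.cast_sum, Int.cast_mul]

end CoeLat

section IntegerLattice

open scoped Topology Nat

variable {d : ℕ} {θ : Set (Fin d → ℝ)}

/-- The lattice `ℤ^d` as a submodule of `ℝ^d`, the form in which Mathlib's lattice point counts
are stated. -/
def integerLattice (d : ℕ) : Submodule ℤ (Fin d → ℝ) :=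
  Submodule.span ℤ (Set.range (Pi.basisFun ℝ (Fin d)))

instance (d : ℕ) : DiscreteTopology (integerLattice d) := by
  unfold integerLattice
  infer_instance

theorem mem_integerLattice {x : Fin d → ℝ} : x ∈ integerLattice d ↔ ∃ n, coeLat n = x := by
  rw [integerLattice, Module.Basis.mem_span_iff_repr_mem]
  simp only [Pi.basisFun_repr, Set.mem_range]
  constructor
  · intro h
    choose n hn using h
    exact ⟨n, funext hn⟩
  · rintro ⟨n, rfl⟩ i
    exact ⟨n i, rfl⟩

theorem coeLat_mem_integerLattice (n : Fin d → ℤ) : coeLat n ∈ integerLattice d :=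
  mem_integerLattice.2 ⟨n, rfl⟩

theorem ncard_inter_inv_smul_integerLattice (S : Set (Fin d → ℝ)) {m : ℝ} (hm : m ≠ 0) :
    (S ∩ m⁻¹ • (integerLattice d : Set (Fin d → ℝ))).ncard = (latticePoints (m • S)).ncard := by
  have himage : (fun x => m⁻¹ • coeLat x) '' latticePoints (m • S) =
      S ∩ m⁻¹ • (integerLattice d : Set (Fin d → ℝ)) := by
    ext z
    simp only [Set.mem_image, Set.mem_inter_iff, Set.mem_inv_smul_set_iff₀ hm, SetLike.mem_coe,
      mem_integerLattice, latticePoints, Set.mem_ofPred_eq]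
    constructor
    · rintro ⟨x, hx, rfl⟩
      exact ⟨(Set.mem_smul_set_iff_inv_smul_mem₀ hm _ _).1 hx, x, (smul_inv_smul₀ hm _).symm⟩
    · rintro ⟨hz, x, hx⟩
      exact ⟨x, hx ▸ Set.smul_mem_smul_set hz, by rw [hx, inv_smul_smul₀ hm]⟩
  rw [← himage, Set.ncard_image_of_injective]
  exact (smul_right_injective _ (inv_ne_zero hm)).comp coeLat_injective

theorem tendsto_ncard_latticePoints_smul_volume (hc : IsCompact θ) (hconv : Convex ℝ θ) :
    Tendsto (fun m : ℕ => ((latticePoints ((m : ℝ) • θ)).ncard : ℝ) / (m : ℝ) ^ d) atTop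
      (𝓝 (volume θ).toReal) := by
  have hcount := tendsto_card_div_pow_atTop_volume θ hc.isBounded hc.isClosed.measurableSet
    (hconv.addHaar_frontier volume)
  rw [Fintype.card_fin] at hcount
  refine hcount.congr' ?_
  filter_upwards [eventually_ne_atTop 0] with m hm
  rw [Nat.card_coe_set_eq]
  exact congrArg (fun N : ℕ => (N : ℝ) / (m : ℝ) ^ d)
    (ncard_inter_inv_smul_integerLattice θ (Nat.cast_ne_zero.2 hm))

theorem exists_tendsto_card_inter_inv_smul {E : Type*} [NormedAddCommGroup E] [NormedSpace ℝ E]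
    [FiniteDimensional ℝ E] (L : Submodule ℤ E) [DiscreteTopology L] [IsZLattice ℝ L] {s : Set E}
    (hs : Bornology.IsBounded s) (hclosed : IsClosed s) (hconv : Convex ℝ s) :
    ∃ v : ℝ, Tendsto (fun m : ℕ => ((s ∩ (m : ℝ)⁻¹ • (L : Set E)).ncard : ℝ) /
      (m : ℝ) ^ Module.finrank ℝ E) atTop (𝓝 v) := by
  borelize E
  have : Module.Finite ℤ L := ZLattice.module_finite ℝ L
  have : Module.Free ℤ L := ZLattice.module_free ℝ L
  let b := Module.finBasisOfFinrankEq ℤ L (ZLattice.rank ℝ L)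
  have hfrontier : volume (frontier ((b.ofZLatticeBasis ℝ).equivFun '' s)) = 0 :=
    Convex.addHaar_frontier volume
      (hconv.is_linear_image (b.ofZLatticeBasis ℝ).equivFun.isLinear)
  have hcount := ZLattice.covolume.tendsto_card_div_pow'' b hs hclosed.measurableSet hfrontier
  rw [Fintype.card_fin] at hcount
  exact ⟨_, hcount⟩

theorem ncard_inter_comap_integerLattice {W : Submodule ℝ (Fin d → ℝ)} {u : Fin d → ℤ}
    (hW : ∀ x ∈ θ, x - coeLat u ∈ W) {m : ℕ} (hm : m ≠ 0) :
    ((fun w : W => (w : Fin d → ℝ) + coeLat u) ⁻¹' θ ∩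
      (m : ℝ)⁻¹ • (ZLattice.comap ℝ (integerLattice d) W.subtype : Set W)).ncard =
        (latticePoints ((m : ℝ) • θ)).ncard := by
  have hm' : (m : ℝ) ≠ 0 := Nat.cast_ne_zero.2 hm
  have hmem (z : Fin d → ℝ) : (m : ℝ) • (z + coeLat u) ∈ integerLattice d ↔
      (m : ℝ) • z ∈ integerLattice d := by
    rw [smul_add, ← coeLat_nsmul]
    exact (integerLattice d).add_mem_iff_left (coeLat_mem_integerLattice _)
  rw [← ncard_inter_inv_smul_integerLattice θ hm', ← Set.ncard_image_of_injective _
    ((add_left_injective (coeLat u)).comp Subtype.val_injective)]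
  congr 1
  ext z
  simp only [Set.mem_image, Set.mem_inter_iff, Set.mem_preimage, Set.mem_inv_smul_set_iff₀ hm',
    SetLike.mem_coe, ZLattice.comap]
  constructor
  · rintro ⟨w, ⟨hθ, hL⟩, rfl⟩
    exact ⟨hθ, (hmem w).2 hL⟩
  · rintro ⟨hθ, hL⟩
    refine ⟨⟨z - coeLat u, hW z hθ⟩, ⟨by simpa using hθ, (hmem _).1 ?_⟩, by simp⟩
    simpa using hL

instance (W : Submodule ℝ (Fin d → ℝ)) :
    DiscreteTopology (ZLattice.comap ℝ (integerLattice d) W.subtype) :=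
  ZLattice.comap_discreteTopology ℝ _ continuous_subtype_val Subtype.val_injective

theorem isZLattice_comap_span {S : Set (Fin d → ℝ)} (hS : S ⊆ integerLattice d) :
    IsZLattice ℝ (ZLattice.comap ℝ (integerLattice d) (Submodule.span ℝ S).subtype) :=
  ⟨eq_top_iff.2 (Submodule.span_span_coe_preimage.symm.le.trans
    (Submodule.span_mono fun _ hx => hS hx))⟩

theorem exists_vectorSpan_eq_span (U : Finset (Fin d → ℤ)) {u : Fin d → ℤ} (hu : u ∈ U) :
    ∃ S : Set (Fin d → ℝ), S ⊆ integerLattice d ∧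
      vectorSpan ℝ (convexHull ℝ (coeLat '' (U : Set (Fin d → ℤ)))) = Submodule.span ℝ S := by
  refine ⟨(· - coeLat u) '' (coeLat '' (U : Set (Fin d → ℤ))), ?_, ?_⟩
  · rintro _ ⟨_, ⟨v, _, rfl⟩, rfl⟩
    exact mem_integerLattice.2 ⟨v - u, coeLat_sub v u⟩
  · rw [← direction_affineSpan, affineSpan_convexHull, direction_affineSpan,
      vectorSpan_eq_span_vsub_set_right ℝ (p := coeLat u)
        (Set.mem_image_of_mem _ (Finset.mem_coe.2 hu))]
    rfl

theorem exists_tendsto_ncard_latticePoints_smul (hθ : IsLatticePolytope θ) :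
    ∃ v : ℝ, Tendsto (fun m : ℕ => ((latticePoints ((m : ℝ) • θ)).ncard : ℝ) /
      (m : ℝ) ^ dimSet θ) atTop (𝓝 v) := by
  obtain ⟨U, rfl⟩ := hθ
  rcases U.eq_empty_or_nonempty with rfl | ⟨u, hu⟩
  · exact ⟨0, by simp [latticePoints]⟩
  set θ := convexHull ℝ (coeLat '' (U : Set (Fin d → ℤ)))
  obtain ⟨S, hS, hspan⟩ := exists_vectorSpan_eq_span U hu
  set W := Submodule.span ℝ S
  have := isZLattice_comap_span hS
  have hcompact : IsCompact θ := (U.finite_toSet.image _).isCompact_convexHull ℝ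
  have huθ : coeLat u ∈ θ := subset_convexHull ℝ _ ⟨u, hu, rfl⟩
  have hW : ∀ x ∈ θ, x - coeLat u ∈ W := fun x hx => hspan ▸ vsub_mem_vectorSpan ℝ hx huθ
  obtain ⟨v, hv⟩ := exists_tendsto_card_inter_inv_smul
    (ZLattice.comap ℝ (integerLattice d) W.subtype)
    (s := (fun w : W => (w : Fin d → ℝ) + coeLat u) ⁻¹' θ)
    (((IsometryEquiv.addRight (coeLat u)).isometry.comp isometry_subtype_coe).antilipschitz
      |>.isBounded_preimage hcompact.isBounded)
    (hcompact.isClosed.preimage (continuous_subtype_val.add continuous_const))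
    ((convex_convexHull ℝ _).affine_preimage
      (W.subtype.toAffineMap + AffineMap.const ℝ W (coeLat u)))
  rw [show Module.finrank ℝ W = dimSet θ by rw [dimSet, direction_affineSpan, hspan]] at hv
  refine ⟨v, hv.congr' ?_⟩
  filter_upwards [eventually_ne_atTop 0] with m hm
  rw [ncard_inter_comap_integerLattice hW hm]

theorem tendsto_div_pow_of_le {f : ℕ → ℝ} {v : ℝ} {j k : ℕ} (hjk : j < k)
    (hf : Tendsto (fun m : ℕ => f m / (m : ℝ) ^ j) atTop (𝓝 v)) :
    Tendsto (fun m : ℕ => f m / (m : ℝ) ^ k) atTop (𝓝 0) := by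
  obtain ⟨i, rfl⟩ := Nat.exists_eq_add_of_lt hjk
  have hinv : Tendsto (fun m : ℕ => ((m : ℝ) ^ (i + 1))⁻¹) atTop (𝓝 0) :=
    ((tendsto_pow_atTop (Nat.succ_ne_zero i)).comp tendsto_natCast_atTop_atTop).inv_tendsto_atTop
  have hmul := hf.mul hinv
  rw [mul_zero] at hmul
  refine hmul.congr fun m => ?_
  rw [add_assoc, ← div_eq_mul_inv, div_div, ← pow_add]

theorem tendsto_normVol {k : ℕ} (hθ : IsLatticePolytope θ) (hk : dimSet θ ≤ k) :
    Tendsto (fun m : ℕ => (k ! : ℝ) * (latticePoints ((m : ℝ) • θ)).ncard / (m : ℝ) ^ k) atTop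
      (𝓝 (normVol k θ)) := by
  refine tendsto_nhds_limUnder ?_
  obtain ⟨v, hv⟩ := exists_tendsto_ncard_latticePoints_smul hθ
  simp only [mul_div_assoc]
  rcases hk.lt_or_eq with hlt | rfl
  exacts [⟨_, (tendsto_div_pow_of_le hlt hv).const_mul _⟩, ⟨_, hv.const_mul _⟩]

theorem normVol_eq_zero {k : ℕ} (hθ : IsLatticePolytope θ) (hk : dimSet θ < k) :
    normVol k θ = 0 := by
  obtain ⟨v, hv⟩ := exists_tendsto_ncard_latticePoints_smul hθ
  have hzero := (tendsto_div_pow_of_le hk hv).const_mul (k ! : ℝ)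
  simp only [← mul_div_assoc, mul_zero] at hzero
  exact hzero.limUnder_eq

end IntegerLattice

/-! ### Reflexive polytopes and their gauges -/

section PolarBody

open scoped Matrix Topology

variable {d : ℕ} {Δ : Set (Fin d → ℝ)} {x y : Fin d → ℝ}

/-- The polar body in the convention `⟨y, x⟩ ≤ 1`, that is, the reflection of `polarDual` in the
origin. With this sign the gauge of a body is the support function of its polar. -/
def polarBody (Δ : Set (Fin d → ℝ)) : Set (Fin d → ℝ) :=
  {y | ∀ x ∈ Δ, y ⬝ᵥ x ≤ 1}

theorem neg_mem_polarDual : -y ∈ polarDual Δ ↔ y ∈ polarBody Δ := by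
  refine forall₂_congr fun x _ => ?_
  change -1 ≤ -y ⬝ᵥ x ↔ y ⬝ᵥ x ≤ 1
  rw [neg_dotProduct, neg_le_neg_iff]

theorem isLinearMap_dotProduct_left (x : Fin d → ℝ) :
    IsLinearMap ℝ fun y : Fin d → ℝ => y ⬝ᵥ x :=
  ⟨fun y z => add_dotProduct y z x, fun c y => smul_dotProduct c y x⟩

theorem convex_polarBody (Δ : Set (Fin d → ℝ)) : Convex ℝ (polarBody Δ) := by
  rw [polarBody, Set.ofPred_forall]
  refine convex_iInter fun x => ?_
  rw [Set.ofPred_forall]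
  exact convex_iInter fun _ => convex_halfSpace_le (isLinearMap_dotProduct_left x) 1

theorem dotProduct_le_gauge (h0 : Δ ∈ 𝓝 0) (hy : y ∈ polarBody Δ) (x : Fin d → ℝ) :
    y ⬝ᵥ x ≤ gauge Δ x := by
  refine le_of_forall_gt_imp_ge_of_dense fun t ht => ?_
  obtain ⟨r, hr, hrt, z, hz, rfl⟩ := exists_lt_of_gauge_lt (absorbent_nhds_zero h0) ht
  calc y ⬝ᵥ (r • z) = r * y ⬝ᵥ z := dotProduct_smul r y z
    _ ≤ r * 1 := mul_le_mul_of_nonneg_left (hy z hz) hr.le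
    _ ≤ t := by linarith

theorem exists_dotProduct_eq_apply (f : (Fin d → ℝ) →L[ℝ] ℝ) : ∃ y, ∀ x, f x = y ⬝ᵥ x := by
  obtain ⟨y, hy⟩ := (dotProductEquiv ℝ (Fin d)).surjective f.toLinearMap
  exact ⟨y, fun x => (LinearMap.congr_fun hy x).symm⟩

theorem mem_of_forall_mem_polarBody (hconv : Convex ℝ Δ) (hclosed : IsClosed Δ) (h0 : 0 ∈ Δ)
    (hx : ∀ y ∈ polarBody Δ, y ⬝ᵥ x ≤ 1) : x ∈ Δ := by
  by_contra hxΔ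
  obtain ⟨f, u, hfu, hux⟩ := geometric_hahn_banach_closed_point hconv hclosed hxΔ
  obtain ⟨w, hw⟩ := exists_dotProduct_eq_apply f
  have hu : 0 < u := by simpa using hfu 0 h0
  have hpolar : u⁻¹ • w ∈ polarBody Δ := fun z hz => by
    rw [smul_dotProduct, smul_eq_mul, inv_mul_le_iff₀ hu, mul_one, ← hw]
    exact (hfu z hz).le
  have hle := hx _ hpolar
  rw [smul_dotProduct, smul_eq_mul, inv_mul_le_iff₀ hu, mul_one, ← hw] at hle
  exact hle.not_gt hux

theorem linearIndependent_sub_of_mem_extremePoints {E : Type*} [AddCommGroup E] [Module ℝ E]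
    {A : Set E} {a b c : E} (ha : a ∈ A.extremePoints ℝ) (hb : b ∈ A.extremePoints ℝ)
    (hc : c ∈ A.extremePoints ℝ) (hab : a ≠ b) (hac : a ≠ c) (hbc : b ≠ c) :
    LinearIndependent ℝ ![a - b, a - c] := by
  rw [LinearIndependent.pair_iff' (sub_ne_zero.2 hab)]
  intro t ht
  have hline : c = AffineMap.lineMap a b t := by
    rw [AffineMap.lineMap_apply_module', ← neg_sub a b, smul_neg, ht]
    abel
  have hcol : Collinear ℝ {c, a, b} := collinear_insert_of_mem_affineSpan_pair
    (hline ▸ AffineMap.lineMap_mem_affineSpan_pair t a b)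
  rw [mem_extremePoints_iff_forall_segment] at ha hb hc
  rcases hcol.wbtw_or_wbtw_or_wbtw with h | h | h
  · rcases ha.2 c hc.1 b hb.1 (mem_segment_iff_wbtw.2 h) with h | h
    exacts [hac h.symm, hab h.symm]
  · rcases hb.2 a ha.1 c hc.1 (mem_segment_iff_wbtw.2 h) with h | h
    exacts [hab h, hbc h.symm]
  · rcases hc.2 b hb.1 a ha.1 (mem_segment_iff_wbtw.2 h) with h | h
    exacts [hbc h, hac h]

end PolarBody

section PolarPair

open scoped Matrix Topology

variable {d : ℕ} {Δ : Set (Fin d → ℝ)} {V Y : Finset (Fin d → ℤ)}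

/-- The data of a reflexive polytope `Δ`: a finite set `V` of lattice points spanning it and the
vertex set `Y` of its polar body, so that `-Y` is the vertex set of the dual polytope. -/
structure IsPolarPair (Δ : Set (Fin d → ℝ)) (V Y : Finset (Fin d → ℤ)) : Prop where
  eq_convexHull : Δ = convexHull ℝ (coeLat '' (V : Set (Fin d → ℤ)))
  zero_mem_interior : 0 ∈ interior Δ
  polarBody_eq_convexHull : polarBody Δ = convexHull ℝ (coeLat '' (Y : Set (Fin d → ℤ)))
  mem_extremePoints : ∀ y ∈ Y, coeLat y ∈ (polarBody Δ).extremePoints ℝ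

theorem exists_isPolarPair (hΔ : IsReflexive Δ) : ∃ V Y, IsPolarPair Δ V Y := by
  classical
  obtain ⟨⟨V, hV⟩, h0, ⟨U, hU⟩⟩ := hΔ
  have hneg : coeLat '' ((-U : Finset (Fin d → ℤ)) : Set (Fin d → ℤ)) =
      -(coeLat '' (U : Set (Fin d → ℤ))) := by
    rw [Finset.coe_neg, ← Set.image_neg_eq_neg, ← Set.image_neg_eq_neg, Set.image_image,
      Set.image_image]
    simp only [coeLat_neg]
  have hpolar : polarBody Δ =
      convexHull ℝ (coeLat '' ((-U : Finset (Fin d → ℤ)) : Set (Fin d → ℤ))) := by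
    rw [hneg, convexHull_neg, ← hU]
    exact Set.ext fun y => neg_mem_polarDual.symm
  set Y : Finset (Fin d → ℤ) := (-U).filter fun y => coeLat y ∈ (polarBody Δ).extremePoints ℝ
  have hY : coeLat '' (Y : Set (Fin d → ℤ)) = (polarBody Δ).extremePoints ℝ := by
    refine Set.Subset.antisymm ?_ fun z hz => ?_
    · rintro _ ⟨y, hy, rfl⟩
      exact (Finset.mem_filter.1 hy).2
    · rw [hpolar] at hz
      obtain ⟨y, hy, rfl⟩ := extremePoints_convexHull_subset hz
      exact ⟨y, Finset.mem_filter.2 ⟨hy, hpolar ▸ hz⟩, rfl⟩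
  have hcompact : IsCompact (polarBody Δ) := by
    rw [hpolar]
    exact ((Finset.finite_toSet _).image _).isCompact_convexHull ℝ
  have hkrein := closure_convexHull_extremePoints hcompact (convex_polarBody Δ)
  rw [← hY, ((Y.finite_toSet.image _).isClosed_convexHull ℝ).closure_eq] at hkrein
  exact ⟨V, Y, hV, h0, hkrein.symm, fun y hy => hY ▸ ⟨y, hy, rfl⟩⟩

/-- The gauge of `Δ` on lattice points. Rounding up is a device to make it integer-valued by
definition: for reflexive `Δ` the gauge is already an integer there. -/
def latticeHeight (Δ : Set (Fin d → ℝ)) (x : Fin d → ℤ) : ℤ := ⌈gauge Δ (coeLat x)⌉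

namespace IsPolarPair

theorem isCompact (hΔ : IsPolarPair Δ V Y) : IsCompact Δ := by
  rw [hΔ.eq_convexHull]
  exact (V.finite_toSet.image _).isCompact_convexHull ℝ

theorem convex (hΔ : IsPolarPair Δ V Y) : Convex ℝ Δ := by
  rw [hΔ.eq_convexHull]
  exact convex_convexHull ℝ _

theorem mem_nhds_zero (hΔ : IsPolarPair Δ V Y) : Δ ∈ 𝓝 0 :=
  mem_interior_iff_mem_nhds.1 hΔ.zero_mem_interior

theorem absorbent (hΔ : IsPolarPair Δ V Y) : Absorbent ℝ Δ := absorbent_nhds_zero hΔ.mem_nhds_zero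

theorem coeLat_mem (hΔ : IsPolarPair Δ V Y) {v : Fin d → ℤ} (hv : v ∈ V) : coeLat v ∈ Δ := by
  rw [hΔ.eq_convexHull]
  exact subset_convexHull ℝ _ ⟨v, hv, rfl⟩

theorem coeLat_mem_polarBody (hΔ : IsPolarPair Δ V Y) {y : Fin d → ℤ} (hy : y ∈ Y) :
    coeLat y ∈ polarBody Δ :=
  (hΔ.mem_extremePoints y hy).1

theorem gauge_le_one_iff (hΔ : IsPolarPair Δ V Y) {x : Fin d → ℝ} : gauge Δ x ≤ 1 ↔ x ∈ Δ := by
  rw [gauge_le_one_iff_mem_closure hΔ.convex hΔ.mem_nhds_zero, hΔ.isCompact.isClosed.closure_eq]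

theorem mem_smul_iff (hΔ : IsPolarPair Δ V Y) {t : ℝ} (ht : 0 < t) {x : Fin d → ℝ} :
    x ∈ t • Δ ↔ gauge Δ x ≤ t := by
  rw [Set.mem_smul_set_iff_inv_smul_mem₀ ht.ne', ← hΔ.gauge_le_one_iff,
    gauge_smul_of_nonneg (inv_nonneg.2 ht.le), smul_eq_mul, inv_mul_le_iff₀ ht, mul_one]

theorem dotProduct_le_of_forall (hΔ : IsPolarPair Δ V Y) {x z : Fin d → ℝ} {t : ℝ}
    (hx : ∀ y ∈ Y, coeLat y ⬝ᵥ x ≤ t) (hz : z ∈ polarBody Δ) : z ⬝ᵥ x ≤ t := by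
  rw [hΔ.polarBody_eq_convexHull] at hz
  refine convexHull_min ?_ (convex_halfSpace_le (isLinearMap_dotProduct_left x) t) hz
  rintro _ ⟨y, hy, rfl⟩
  exact hx y hy

theorem exists_dotProduct_eq_gauge (hΔ : IsPolarPair Δ V Y) (x : Fin d → ℝ) :
    ∃ y ∈ Y, coeLat y ⬝ᵥ x = gauge Δ x := by
  have hzero : (0 : Fin d → ℝ) ∈ polarBody Δ := fun z _ => by simp
  have hne : Y.Nonempty := by
    rw [hΔ.polarBody_eq_convexHull] at hzero
    simpa using convexHull_nonempty_iff.1 ⟨_, hzero⟩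
  obtain ⟨y, hy, hmax⟩ := Y.exists_max_image (fun y => coeLat y ⬝ᵥ x) hne
  refine ⟨y, hy, (dotProduct_le_gauge hΔ.mem_nhds_zero (hΔ.coeLat_mem_polarBody hy) x).antisymm ?_⟩
  have hnonneg := hΔ.dotProduct_le_of_forall hmax hzero
  rw [zero_dotProduct] at hnonneg
  refine le_of_forall_gt_imp_ge_of_dense fun t ht => ?_
  have ht0 : 0 < t := hnonneg.trans_lt ht
  refine gauge_le_of_mem ht0.le ((Set.mem_smul_set_iff_inv_smul_mem₀ ht0.ne' _ _).2 ?_)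
  refine mem_of_forall_mem_polarBody hΔ.convex hΔ.isCompact.isClosed
    (interior_subset hΔ.zero_mem_interior) fun z hz => ?_
  rw [dotProduct_smul, smul_eq_mul, inv_mul_le_iff₀ ht0, mul_one]
  exact (hΔ.dotProduct_le_of_forall hmax hz).trans ht.le

theorem coe_latticeHeight (hΔ : IsPolarPair Δ V Y) (x : Fin d → ℤ) :
    (latticeHeight Δ x : ℝ) = gauge Δ (coeLat x) := by
  obtain ⟨y, -, hy⟩ := hΔ.exists_dotProduct_eq_gauge (coeLat x)
  rw [latticeHeight, ← hy, coeLat_dotProduct, Int.ceil_intCast]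

theorem isCoercive_latticeHeight (hΔ : IsPolarPair Δ V Y) : IsCoercive (latticeHeight Δ) := by
  obtain ⟨R, hR, hball⟩ := hΔ.isCompact.isBounded.subset_closedBall_lt 0 0
  refine ⟨(R * (d + 1))⁻¹, by positivity, fun x => ?_⟩
  rw [hΔ.coe_latticeHeight]
  refine le_trans ?_ (le_gauge_of_subset_closedBall hΔ.absorbent hR.le hball)
  have hsum : ∑ i, |(x i : ℝ)| ≤ ∑ _i : Fin d, ‖coeLat x‖ :=
    Finset.sum_le_sum fun i _ => norm_le_pi_norm (coeLat x) i
  rw [Finset.sum_const, Finset.card_univ, Fintype.card_fin, nsmul_eq_mul] at hsum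
  rw [inv_mul_le_iff₀ (by positivity), mul_right_comm, mul_div_cancel₀ _ hR.ne']
  nlinarith [norm_nonneg (coeLat x)]

theorem isSupportFunction_latticeHeight (hΔ : IsPolarPair Δ V Y) :
    IsSupportFunction Y (latticeHeight Δ) where
  dotProduct_le y hy x := by
    have hle := dotProduct_le_gauge hΔ.mem_nhds_zero (hΔ.coeLat_mem_polarBody hy) (coeLat x)
    rw [coeLat_dotProduct, ← hΔ.coe_latticeHeight] at hle
    exact_mod_cast hle
  exists_dotProduct_eq x := by
    obtain ⟨y, hy, hyx⟩ := hΔ.exists_dotProduct_eq_gauge (coeLat x)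
    rw [coeLat_dotProduct, ← hΔ.coe_latticeHeight] at hyx
    exact ⟨y, hy, by exact_mod_cast hyx⟩
  coercive := hΔ.isCoercive_latticeHeight
  linearIndependent y₁ h₁ y₂ h₂ y₃ h₃ h₁₂ h₁₃ h₂₃ := by
    have hind := linearIndependent_sub_of_mem_extremePoints (hΔ.mem_extremePoints _ h₁)
      (hΔ.mem_extremePoints _ h₂) (hΔ.mem_extremePoints _ h₃) (coeLat_injective.ne h₁₂)
      (coeLat_injective.ne h₁₃) (coeLat_injective.ne h₂₃)
    have hvec : ![coeLat y₁ - coeLat y₂, coeLat y₁ - coeLat y₃] =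
        fun i => coeLat (![y₁ - y₂, y₁ - y₃] i) := by
      rw [← coeLat_sub, ← coeLat_sub]
      exact List.ofFn_injective rfl
    exact hvec ▸ hind

theorem latticeHeight_eq_zero_iff (hΔ : IsPolarPair Δ V Y) {x : Fin d → ℤ} :
    latticeHeight Δ x = 0 ↔ x = 0 := by
  rw [← Int.cast_eq_zero (α := ℝ), hΔ.coe_latticeHeight,
    gauge_eq_zero hΔ.absorbent (NormedSpace.isVonNBounded_of_isBounded ℝ hΔ.isCompact.isBounded),
    ← coeLat_zero, coeLat_injective.eq_iff]

end IsPolarPair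

end PolarPair

section LevelSums

open scoped Topology

variable {d : ℕ} {H : (Fin d → ℤ) → ℤ}

theorem IsCoercive.finite_le (hH : IsCoercive H) (r : ℝ) : {x | (H x : ℝ) ≤ r}.Finite := by
  obtain ⟨c, hc, hcH⟩ := hH
  obtain ⟨N, hN⟩ := exists_nat_ge (r / c)
  refine (Set.finite_Icc (fun _ => -(N : ℤ)) fun _ : Fin d => (N : ℤ)).subset fun x hx => ?_
  have habs (i) : |x i| ≤ N := by
    have hsum : |(x i : ℝ)| ≤ ∑ i, |(x i : ℝ)| :=
      Finset.single_le_sum (fun i _ => abs_nonneg (x i : ℝ)) (Finset.mem_univ i)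
    have hle : |(x i : ℝ)| ≤ r / c := by
      rw [le_div_iff₀' hc]
      exact (mul_le_mul_of_nonneg_left hsum hc.le).trans ((hcH x).trans hx)
    exact_mod_cast hle.trans hN
  exact ⟨fun i => (abs_le.1 (habs i)).1, fun i => (abs_le.1 (habs i)).2⟩

theorem IsCoercive.ncard_le_eq_sum (hH : IsCoercive H) (m : ℕ) :
    {x | H x ≤ m}.ncard = ∑ j ∈ Finset.range (m + 1), {x | H x = (j : ℤ)}.ncard := by
  classical
  have hfin : {x | H x ≤ m}.Finite := by exact_mod_cast hH.finite_le m
  rw [Set.ncard_eq_toFinset_card _ hfin, Finset.card_eq_sum_card_fiberwise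
    (f := fun x => (H x).toNat) (t := Finset.range (m + 1)) fun x hx => ?_]
  · refine Finset.sum_congr rfl fun j hj => ?_
    rw [← Set.ncard_coe_finset]
    congr 1
    ext x
    have hnonneg := hH.nonneg x
    simp only [Finset.coe_filter, Set.Finite.mem_toFinset, Set.mem_ofPred_eq, Finset.mem_range]
      at hj ⊢
    omega
  · have hle : H x ≤ m := hfin.mem_toFinset.1 hx
    exact Finset.mem_coe.2 (Finset.mem_range_succ_iff.2 (Int.toNat_le.2 hle))

theorem tendsto_sum_odd_cubic_div_pow {N : ℕ → ℝ} {a b : ℝ} (hzero : N 0 = 1)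
    (hN : ∀ j, 1 ≤ j → N j = a * j ^ 3 + b * j) :
    Tendsto (fun m : ℕ => (∑ j ∈ Finset.range (m + 1), N j) / (m : ℝ) ^ 4) atTop
      (𝓝 (a / 4)) := by
  have hsum (m : ℕ) : ∑ j ∈ Finset.range (m + 1), N j =
      1 + a * ((m : ℝ) ^ 2 * (m + 1) ^ 2) / 4 + b * (m * (m + 1)) / 2 := by
    induction m with
    | zero => simp [hzero]
    | succ m ih =>
      rw [Finset.sum_range_succ, ih, hN (m + 1) (Nat.succ_pos m)]
      push_cast
      ring
  have hinv : Tendsto (fun m : ℕ => 1 / (m : ℝ)) atTop (𝓝 0) := tendsto_one_div_atTop_nhds_zero_nat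
  have hlim := ((hinv.pow 4).add ((((hinv.const_add 1).pow 2).const_mul a).div_const 4)).add
    ((((hinv.pow 2).mul (hinv.const_add 1)).const_mul b).div_const 2)
  have hvalue : a / 4 = 0 ^ 4 + a * (1 + 0) ^ 2 / 4 + b * (0 ^ 2 * (1 + 0)) / 2 := by ring
  rw [hvalue]
  refine hlim.congr' ?_
  filter_upwards [eventually_ne_atTop 0] with m hm
  have hm' : (m : ℝ) ≠ 0 := Nat.cast_ne_zero.2 hm
  rw [hsum]
  field_simp

end LevelSums

namespace IsPolarPair

variable {d : ℕ} {Δ : Set (Fin d → ℝ)} {V Y : Finset (Fin d → ℤ)}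

theorem latticeHeight_eq_iff (hΔ : IsPolarPair Δ V Y) {x : Fin d → ℤ} {j : ℕ} :
    latticeHeight Δ x = j ↔ gauge Δ (coeLat x) = j := by
  rw [← hΔ.coe_latticeHeight]
  exact_mod_cast Iff.rfl

theorem latticePoints_smul (hΔ : IsPolarPair Δ V Y) {m : ℕ} (hm : 0 < m) :
    latticePoints ((m : ℝ) • Δ) = {x | latticeHeight Δ x ≤ m} := by
  ext x
  have hm' : (0 : ℝ) < m := Nat.cast_pos.2 hm
  rw [latticePoints, Set.mem_ofPred_eq, hΔ.mem_smul_iff hm', ← hΔ.coe_latticeHeight]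
  exact_mod_cast Iff.rfl

theorem latticePoints_frontier (hΔ : IsPolarPair Δ V Y) :
    latticePoints (frontier Δ) = {x | latticeHeight Δ x = (1 : ℕ)} := by
  ext x
  rw [latticePoints, Set.mem_ofPred_eq, Set.mem_ofPred_eq, hΔ.latticeHeight_eq_iff, Nat.cast_one,
    gauge_eq_one_iff_mem_frontier hΔ.convex hΔ.mem_nhds_zero]

theorem ncard_latticeHeight_eq_zero (hΔ : IsPolarPair Δ V Y) :
    {x | latticeHeight Δ x = 0}.ncard = 1 := by
  rw [Set.ncard_eq_one]
  exact ⟨0, Set.ext fun x => hΔ.latticeHeight_eq_zero_iff⟩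

theorem exists_sum_smul_eq (hΔ : IsPolarPair Δ V Y) (x : Fin d → ℝ) :
    ∃ c : (Fin d → ℝ) → ℝ, (∀ v ∈ V.map ⟨coeLat, coeLat_injective⟩, 0 ≤ c v) ∧
      ∑ v ∈ V.map ⟨coeLat, coeLat_injective⟩, c v • v = x ∧
        ∑ v ∈ V.map ⟨coeLat, coeLat_injective⟩, c v = gauge Δ x := by
  rcases eq_or_ne x 0 with rfl | hx
  · exact ⟨0, by simp⟩
  have hpos : 0 < gauge Δ x := (gauge_pos hΔ.absorbent
    (NormedSpace.isVonNBounded_of_isBounded ℝ hΔ.isCompact.isBounded)).2 hx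
  have hmem := (Set.mem_smul_set_iff_inv_smul_mem₀ hpos.ne' _ _).1
    ((hΔ.mem_smul_iff hpos).2 le_rfl)
  have hcoe : coeLat '' (V : Set (Fin d → ℤ)) = (V.map ⟨coeLat, coeLat_injective⟩ : Finset _) := by
    rw [Finset.coe_map]
    rfl
  rw [hΔ.eq_convexHull, hcoe, Finset.mem_convexHull', ← hcoe, ← hΔ.eq_convexHull] at hmem
  obtain ⟨w, hw, hwsum, hwx⟩ := hmem
  refine ⟨fun v => gauge Δ x * w v, fun v hv => mul_nonneg hpos.le (hw v hv), ?_, ?_⟩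
  · simp only [mul_smul]
    rw [← Finset.smul_sum, hwx, smul_inv_smul₀ hpos.ne']
  · rw [← Finset.mul_sum, hwsum, mul_one]

theorem isLatticeGauge (hΔ : IsPolarPair Δ V Y) :
    IsLatticeGauge (integerLattice d).toAddSubgroup (V.map ⟨coeLat, coeLat_injective⟩)
      (gauge Δ) where
  mem_lattice v hv := by
    obtain ⟨n, -, rfl⟩ := Finset.mem_map.1 hv
    exact coeLat_mem_integerLattice n
  add_le := gauge_add_le hΔ.convex hΔ.absorbent
  smul_of_nonneg c x hc := gauge_smul_of_nonneg hc x
  le_one v hv := by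
    obtain ⟨n, hn, rfl⟩ := Finset.mem_map.1 hv
    exact gauge_le_one_of_mem (hΔ.coeLat_mem hn)
  exists_rep := hΔ.exists_sum_smul_eq
  exists_natCast x hx := by
    obtain ⟨n, rfl⟩ := mem_integerLattice.1 hx
    obtain ⟨k, hk⟩ := Int.eq_ofNat_of_zero_le (hΔ.isCoercive_latticeHeight.nonneg n)
    exact ⟨k, hΔ.latticeHeight_eq_iff.1 hk⟩
  finite_le r := by
    refine ((hΔ.isCoercive_latticeHeight.finite_le r).image coeLat).subset ?_
    rintro x ⟨hx, hr⟩
    obtain ⟨n, rfl⟩ := mem_integerLattice.1 hx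
    exact ⟨n, by rwa [Set.mem_ofPred_eq, hΔ.coe_latticeHeight], rfl⟩

theorem ncard_gauge_eq (hΔ : IsPolarPair Δ V Y) (j : ℕ) :
    {x | x ∈ (integerLattice d).toAddSubgroup ∧ gauge Δ x = j}.ncard =
      {x | latticeHeight Δ x = j}.ncard := by
  rw [← Set.ncard_image_of_injective _ coeLat_injective]
  congr 1
  ext x
  constructor
  · rintro ⟨hx, hj⟩
    obtain ⟨n, rfl⟩ := mem_integerLattice.1 hx
    exact ⟨n, hΔ.latticeHeight_eq_iff.2 hj, rfl⟩
  · rintro ⟨n, hn, rfl⟩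
    exact ⟨coeLat_mem_integerLattice n, hΔ.latticeHeight_eq_iff.1 hn⟩

theorem exists_ncard_latticeHeight_eq {Δ : Set (Fin 4 → ℝ)} {V Y : Finset (Fin 4 → ℤ)}
    (hΔ : IsPolarPair Δ V Y) : ∃ b : ℝ, ∀ j : ℕ, 1 ≤ j →
      ({x | latticeHeight Δ x = j}.ncard : ℝ) = 4 * (volume Δ).toReal * j ^ 3 + b * j := by
  obtain ⟨a, b, hab⟩ := hΔ.isLatticeGauge.exists_ncard_level_eq_odd_cubic (by simp)
  simp only [hΔ.ncard_gauge_eq] at hab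
  have hcount : Tendsto (fun m : ℕ => ((latticePoints ((m : ℝ) • Δ)).ncard : ℝ) / (m : ℝ) ^ 4)
      atTop (nhds (a / 4)) := by
    refine (tendsto_sum_odd_cubic_div_pow (N := fun j => {x | latticeHeight Δ x = j}.ncard)
      (by exact_mod_cast hΔ.ncard_latticeHeight_eq_zero) hab).congr' ?_
    filter_upwards [eventually_gt_atTop 0] with m hm
    rw [hΔ.latticePoints_smul hm, hΔ.isCoercive_latticeHeight.ncard_le_eq_sum, Nat.cast_sum]
  have hvolume := tendsto_nhds_unique hcount
    (tendsto_ncard_latticePoints_smul_volume hΔ.isCompact hΔ.convex)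
  refine ⟨b, fun j hj => ?_⟩
  rw [hab j hj, ← hvolume]
  ring

end IsPolarPair

section ConvexHull

theorem mem_convexHull_of_forall_eq {E ι : Type*} [AddCommGroup E] [Module ℝ E] {A : Set E}
    {f : ι → E →ₗ[ℝ] ℝ} {c : ι → ℝ} (hle : ∀ i, ∀ a ∈ A, f i a ≤ c i) {z : E}
    (hz : z ∈ convexHull ℝ A) (heq : ∀ i, f i z = c i) :
    z ∈ convexHull ℝ {a ∈ A | ∀ i, f i a = c i} := by
  classical
  obtain ⟨κ, _, w, a, hw, hwsum, ha, rfl⟩ := mem_convexHull_iff_exists_fintype.1 hz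
  have hactive (k : κ) (hk : w k ≠ 0) (i : ι) : f i (a k) = c i := by
    have hslack : ∑ k, w k * (c i - f i (a k)) = 0 := by
      simp only [mul_sub, Finset.sum_sub_distrib, ← Finset.sum_mul, hwsum, ← heq i, map_sum,
        map_smul, smul_eq_mul, one_mul, sub_self]
    rw [Finset.sum_eq_zero_iff_of_nonneg fun k _ =>
      mul_nonneg (hw k) (sub_nonneg.2 (hle i _ (ha k)))] at hslack
    have hzero := (mul_eq_zero.1 (hslack k (Finset.mem_univ k))).resolve_left hk
    exact (sub_eq_zero.1 hzero).symm
  have hsum : ∑ k with w k ≠ 0, w k • a k = ∑ k, w k • a k :=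
    Finset.sum_filter_of_ne fun k _ hk hwk => hk (by rw [hwk, zero_smul])
  rw [← hsum]
  refine (convex_convexHull ℝ _).sum_mem (fun k _ => hw k)
    (by rw [Finset.sum_filter_ne_zero, hwsum]) fun k hk => ?_
  exact subset_convexHull ℝ _ ⟨ha k, hactive k (Finset.mem_filter.1 hk).2⟩

end ConvexHull

section Dimension

open scoped Matrix

variable {d : ℕ} {θ : Set (Fin d → ℝ)}

theorem dotProductEquiv_mem_dualAnnihilator {w : Fin d → ℝ} (hw : ∀ x ∈ θ, w ⬝ᵥ x = 0) :
    dotProductEquiv ℝ (Fin d) w ∈ (Submodule.span ℝ θ).dualAnnihilator := by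
  rw [Submodule.mem_dualAnnihilator]
  exact fun x hx =>
    (Submodule.span_le (p := LinearMap.ker (dotProductEquiv ℝ (Fin d) w))).2 hw hx

theorem finrank_span_add_card_le {ι : Type*} [Fintype ι] {w : ι → Fin d → ℝ}
    (hind : LinearIndependent ℝ w) (hw : ∀ i, ∀ x ∈ θ, w i ⬝ᵥ x = 0) :
    Module.finrank ℝ (Submodule.span ℝ θ) + Fintype.card ι ≤ d := by
  have hdual : LinearIndependent ℝ fun i =>
      (⟨_, dotProductEquiv_mem_dualAnnihilator (hw i)⟩ :
        (Submodule.span ℝ θ).dualAnnihilator) :=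
    LinearIndependent.of_comp (Submodule.subtype _)
      (hind.map' (dotProductEquiv ℝ (Fin d)).toLinearMap (LinearEquiv.ker _))
  calc Module.finrank ℝ (Submodule.span ℝ θ) + Fintype.card ι
      ≤ Module.finrank ℝ (Submodule.span ℝ θ) +
          Module.finrank ℝ (Submodule.span ℝ θ).dualAnnihilator :=
        Nat.add_le_add_left hdual.fintype_card_le_finrank _
    _ = d := by rw [Subspace.finrank_add_finrank_dualAnnihilator_eq, Module.finrank_fin_fun]

theorem le_finrank_span_of_forall_eq_zero
    (h : ∀ w : Fin d → ℝ, (∀ x ∈ θ, w ⬝ᵥ x = 0) → w = 0) :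
    d ≤ Module.finrank ℝ (Submodule.span ℝ θ) := by
  have hbot : (Submodule.span ℝ θ).dualAnnihilator = ⊥ := by
    refine (Submodule.eq_bot_iff _).2 fun f hf => ?_
    obtain ⟨w, rfl⟩ := (dotProductEquiv ℝ (Fin d)).surjective f
    rw [h w fun x hx => (Submodule.mem_dualAnnihilator _).1 hf x (Submodule.subset_span hx),
      map_zero]
  have hadd := Subspace.finrank_add_finrank_dualAnnihilator_eq (Submodule.span ℝ θ)
  rw [hbot, finrank_bot, add_zero, Module.finrank_fin_fun] at hadd
  exact hadd.ge

theorem finrank_span_eq_dimSet_add_one (hne : θ.Nonempty) {y : Fin d → ℝ}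
    (hy : ∀ x ∈ θ, y ⬝ᵥ x = 1) : Module.finrank ℝ (Submodule.span ℝ θ) = dimSet θ + 1 := by
  obtain ⟨p, hp⟩ := hne
  have hvanish : vectorSpan ℝ θ ≤ LinearMap.ker (dotProductEquiv ℝ (Fin d) y) := by
    rw [vectorSpan_eq_span_vsub_set_right ℝ hp, Submodule.span_le]
    rintro _ ⟨x, hx, rfl⟩
    change y ⬝ᵥ (x - p) = 0
    rw [dotProduct_sub, hy x hx, hy p hp, sub_self]
  have hpspan : p ∉ vectorSpan ℝ θ := fun h => one_ne_zero ((hy p hp).symm.trans (hvanish h))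
  have hspan : Submodule.span ℝ θ = vectorSpan ℝ θ ⊔ Submodule.span ℝ {p} := by
    refine le_antisymm (Submodule.span_le.2 fun x hx => ?_) (sup_le ?_ ?_)
    · have hadd := Submodule.add_mem_sup (vsub_mem_vectorSpan ℝ hx hp)
        (Submodule.mem_span_singleton_self (R := ℝ) p)
      rwa [vsub_eq_sub, sub_add_cancel] at hadd
    · rw [vectorSpan_eq_span_vsub_set_right ℝ hp, Submodule.span_le]
      rintro _ ⟨x, hx, rfl⟩
      exact Submodule.sub_mem _ (Submodule.subset_span hx) (Submodule.subset_span hp)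
    · exact (Submodule.span_singleton_le_iff_mem _ _).2 (Submodule.subset_span hp)
  rw [hspan, Submodule.finrank_sup_span_singleton hpspan, dimSet, direction_affineSpan]

theorem dimSet_empty : dimSet (∅ : Set (Fin d → ℝ)) = 0 := by
  rw [dimSet, direction_affineSpan, vectorSpan_empty, finrank_bot]

end Dimension

section CommonFace

open scoped Matrix Topology

variable {d : ℕ} {Δ : Set (Fin d → ℝ)} {V Y : Finset (Fin d → ℤ)} {y₁ y₂ : Fin d → ℤ}

/-- The intersection of the faces of `Δ` cut out by two vertices of its polar body. Up to the
factor `m`, it is the part at height `m` of the wall of the normal fan between `y₁` and `y₂`. -/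
def commonFace (Δ : Set (Fin d → ℝ)) (y₁ y₂ : Fin d → ℤ) : Set (Fin d → ℝ) :=
  {x | x ∈ Δ ∧ coeLat y₁ ⬝ᵥ x = 1 ∧ coeLat y₂ ⬝ᵥ x = 1}

theorem commonFace_add_two_le (hne : (commonFace Δ y₁ y₂).Nonempty) (hy : y₁ ≠ y₂) :
    dimSet (commonFace Δ y₁ y₂) + 2 ≤ d := by
  have hsub : coeLat (y₁ - y₂) ≠ 0 := coeLat_zero (d := d) ▸ coeLat_injective.ne (sub_ne_zero.2 hy)
  have hle := finrank_span_add_card_le (θ := commonFace Δ y₁ y₂)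
    (LinearIndependent.of_subsingleton (v := fun _ : Unit => coeLat (y₁ - y₂)) () hsub)
    fun _ x hx => by rw [coeLat_sub, sub_dotProduct, hx.2.1, hx.2.2, sub_self]
  rw [finrank_span_eq_dimSet_add_one hne fun x hx => hx.2.1, Fintype.card_unit] at hle
  omega

namespace IsPolarPair

theorem isLatticePolytope_commonFace (hΔ : IsPolarPair Δ V Y) (h₁ : y₁ ∈ Y) (h₂ : y₂ ∈ Y) :
    IsLatticePolytope (commonFace Δ y₁ y₂) := by
  classical
  refine ⟨V.filter fun v => coeLat v ∈ commonFace Δ y₁ y₂, Set.Subset.antisymm ?_ ?_⟩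
  · rintro x ⟨hx, hx₁, hx₂⟩
    rw [hΔ.eq_convexHull] at hx
    refine convexHull_mono ?_ (mem_convexHull_of_forall_eq (c := fun _ => 1)
      (f := fun i => dotProductEquiv ℝ (Fin d) (coeLat (![y₁, y₂] i)))
      (Fin.forall_fin_two.2 ⟨?_, ?_⟩) hx (Fin.forall_fin_two.2 ⟨hx₁, hx₂⟩))
    · rintro _ ⟨⟨v, hv, rfl⟩, hy⟩
      exact ⟨v, Finset.mem_filter.2 ⟨hv, hΔ.coeLat_mem hv, hy 0, hy 1⟩, rfl⟩
    · rintro _ ⟨v, hv, rfl⟩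
      exact hΔ.coeLat_mem_polarBody h₁ _ (hΔ.coeLat_mem hv)
    · rintro _ ⟨v, hv, rfl⟩
      exact hΔ.coeLat_mem_polarBody h₂ _ (hΔ.coeLat_mem hv)
  · refine convexHull_min ?_ (hΔ.convex.inter
      ((convex_hyperplane (dotProductEquiv ℝ (Fin d) (coeLat y₁)).isLinear 1).inter
        (convex_hyperplane (dotProductEquiv ℝ (Fin d) (coeLat y₂)).isLinear 1)))
    rintro _ ⟨v, hv, rfl⟩
    exact (Finset.mem_filter.1 hv).2

theorem isExposed_commonFace (hΔ : IsPolarPair Δ V Y) (h₁ : y₁ ∈ Y) (h₂ : y₂ ∈ Y) :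
    IsExposed ℝ Δ (commonFace Δ y₁ y₂) := by
  rintro ⟨p, hpΔ, hp₁, hp₂⟩
  refine ⟨LinearMap.toContinuousLinearMap
    (dotProductEquiv ℝ (Fin d) (coeLat y₁ + coeLat y₂)), ?_⟩
  have hle₁ := hΔ.coeLat_mem_polarBody h₁
  have hle₂ := hΔ.coeLat_mem_polarBody h₂
  ext x
  simp only [commonFace, LinearMap.coe_toContinuousLinearMap', dotProductEquiv_apply_apply,
    add_dotProduct, Set.mem_ofPred_eq]
  constructor
  · rintro ⟨hx, hx₁, hx₂⟩
    refine ⟨hx, fun z hz => ?_⟩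
    rw [hx₁, hx₂]
    exact add_le_add (hle₁ z hz) (hle₂ z hz)
  · rintro ⟨hx, hmax⟩
    have hp := hmax p hpΔ
    have hx₁ := hle₁ x hx
    have hx₂ := hle₂ x hx
    exact ⟨hx, by linarith, by linarith⟩

theorem wall_level_eq (hΔ : IsPolarPair Δ V Y) (h₁ : y₁ ∈ Y) {m : ℕ} (hm : 0 < m) :
    {x | x ∈ wall (latticeHeight Δ) y₁ y₂ ∧ latticeHeight Δ x = m} =
      latticePoints ((m : ℝ) • commonFace Δ y₁ y₂) := by
  have hm' : (0 : ℝ) < m := Nat.cast_pos.2 hm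
  ext x
  have hle := hΔ.isSupportFunction_latticeHeight.dotProduct_le y₁ h₁ x
  have hmem : coeLat x ∈ (m : ℝ) • commonFace Δ y₁ y₂ ↔
      latticeHeight Δ x ≤ m ∧ y₁ ⬝ᵥ x = m ∧ y₂ ⬝ᵥ x = m := by
    rw [Set.mem_smul_set_iff_inv_smul_mem₀ hm'.ne', commonFace, Set.mem_ofPred_eq,
      ← Set.mem_smul_set_iff_inv_smul_mem₀ hm'.ne', hΔ.mem_smul_iff hm', ← hΔ.coe_latticeHeight,
      dotProduct_smul, dotProduct_smul, smul_eq_mul, smul_eq_mul, inv_mul_eq_one₀ hm'.ne',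
      inv_mul_eq_one₀ hm'.ne', coeLat_dotProduct, coeLat_dotProduct]
    norm_cast
    simp only [eq_comm]
  refine Iff.trans ?_ hmem.symm
  simp only [wall, Set.mem_ofPred_eq]
  omega

theorem tendsto_tsum_wall {q : ℕ} (hq : q + 2 = d) (hΔ : IsPolarPair Δ V Y) (h₁ : y₁ ∈ Y)
    (h₂ : y₂ ∈ Y) (hy : y₁ ≠ y₂) :
    Tendsto (fun s => s ^ (q + 1) *
      ∑' x, (wall (latticeHeight Δ) y₁ y₂).indicator (expWeight (latticeHeight Δ) s) x)
      (𝓝[>] 0) (𝓝 (normVol q (commonFace Δ y₁ y₂))) := by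
  have hdim : dimSet (commonFace Δ y₁ y₂) ≤ q := by
    rcases (commonFace Δ y₁ y₂).eq_empty_or_nonempty with hempty | hne
    · rw [hempty, dimSet_empty]
      exact Nat.zero_le q
    · have := commonFace_add_two_le hne hy
      omega
  have hlevel := (tendsto_normVol (hΔ.isLatticePolytope_commonFace h₁ h₂) hdim).congr' (by
    filter_upwards [eventually_gt_atTop 0] with m hm
    rw [← hΔ.wall_level_eq h₁ hm])
  refine (tendsto_pow_mul_tsum_mul_exp hlevel).congr' ?_
  filter_upwards [self_mem_nhdsWithin] with s hs
  rw [hΔ.isCoercive_latticeHeight.tsum_indicator_expWeight hs]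

end IsPolarPair

end CommonFace

section DualVertices

open scoped Matrix Topology

variable {d : ℕ} {Δ θ : Set (Fin d → ℝ)} {V Y : Finset (Fin d → ℤ)} {y₁ y₂ : Fin d → ℤ}

open Classical in
/-- The members of `Y` taking the value `1` on all of `θ`. If `Y` is the vertex set of the polar
body of `Δ` and `θ` is a face of `Δ`, these are the negatives of the vertices of the dual face. -/
def dualVertices (Y : Finset (Fin d → ℤ)) (θ : Set (Fin d → ℝ)) : Finset (Fin d → ℤ) :=
  Y.filter fun y => ∀ x ∈ θ, coeLat y ⬝ᵥ x = 1

theorem mem_dualVertices {y : Fin d → ℤ} :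
    y ∈ dualVertices Y θ ↔ y ∈ Y ∧ ∀ x ∈ θ, coeLat y ⬝ᵥ x = 1 := by
  classical exact Finset.mem_filter

namespace IsPolarPair

theorem mem_convexHull_dualVertices (hΔ : IsPolarPair Δ V Y) (hθ : θ ⊆ Δ) {y : Fin d → ℝ}
    (hy : y ∈ polarBody Δ) (hyθ : ∀ x ∈ θ, y ⬝ᵥ x = 1) :
    y ∈ convexHull ℝ (coeLat '' (dualVertices Y θ : Set (Fin d → ℤ))) := by
  rw [hΔ.polarBody_eq_convexHull] at hy
  refine convexHull_mono ?_ (mem_convexHull_of_forall_eq (c := fun _ => 1)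
    (f := fun x : θ => (isLinearMap_dotProduct_left (x : Fin d → ℝ)).mk')
    ?_ hy fun x => hyθ x x.2)
  · rintro _ ⟨⟨v, hv, rfl⟩, hvθ⟩
    exact ⟨v, mem_dualVertices.2 ⟨hv, fun x hx => hvθ ⟨x, hx⟩⟩, rfl⟩
  · rintro x _ ⟨v, hv, rfl⟩
    exact hΔ.coeLat_mem_polarBody hv _ (hθ x.2)

theorem exists_mem_polarBody_eq (hΔ : IsPolarPair Δ V Y) (hexp : IsExposed ℝ Δ θ)
    (hne : θ.Nonempty) (hproper : θ ≠ Δ) :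
    ∃ y ∈ polarBody Δ, θ = {x | x ∈ Δ ∧ y ⬝ᵥ x = 1} := by
  obtain ⟨l, hl⟩ := hexp hne
  obtain ⟨w, hw⟩ := exists_dotProduct_eq_apply l
  simp only [hw] at hl
  obtain ⟨p, hp⟩ := hne
  obtain ⟨hpΔ, hmax⟩ : p ∈ Δ ∧ ∀ z ∈ Δ, w ⬝ᵥ z ≤ w ⬝ᵥ p := by rwa [hl] at hp
  have hpos : 0 < w ⬝ᵥ p := by
    by_contra! hle
    obtain ⟨r, hr, z, hz, hrz⟩ := hΔ.absorbent.gauge_set_nonempty (x := w)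
    have hself : w ⬝ᵥ w ≤ 0 := by
      calc w ⬝ᵥ w = r * w ⬝ᵥ z := by rw [← smul_eq_mul, ← dotProduct_smul, ← hrz]
        _ ≤ 0 := mul_nonpos_of_nonneg_of_nonpos hr.le ((hmax z hz).trans hle)
    have hw0 : w = 0 := dotProduct_self_eq_zero.1
      (hself.antisymm (Finset.sum_nonneg fun i _ => mul_self_nonneg (w i)))
    exact hproper (by simp [hl, hw0])
  refine ⟨(w ⬝ᵥ p)⁻¹ • w, fun x hx => ?_, ?_⟩
  · rw [smul_dotProduct, smul_eq_mul, inv_mul_le_iff₀ hpos, mul_one]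
    exact hmax x hx
  · rw [hl]
    ext x
    simp only [Set.mem_ofPred_eq, smul_dotProduct, smul_eq_mul, inv_mul_eq_one₀ hpos.ne']
    exact and_congr_right fun hx => ⟨fun h => (h p hpΔ).antisymm (hmax x hx),
      fun h z hz => h ▸ hmax z hz⟩

theorem mem_iff_forall_dualVertices (hΔ : IsPolarPair Δ V Y) (hexp : IsExposed ℝ Δ θ)
    (hne : θ.Nonempty) (hproper : θ ≠ Δ) {x : Fin d → ℝ} :
    x ∈ θ ↔ x ∈ Δ ∧ ∀ y ∈ dualVertices Y θ, coeLat y ⬝ᵥ x = 1 := by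
  refine ⟨fun hx => ⟨hexp.subset hx, fun y hy => (mem_dualVertices.1 hy).2 x hx⟩, ?_⟩
  rintro ⟨hxΔ, hx⟩
  obtain ⟨y, hy, hθ⟩ := hΔ.exists_mem_polarBody_eq hexp hne hproper
  have hyθ : ∀ x ∈ θ, y ⬝ᵥ x = 1 := fun x hx => by
    rw [hθ] at hx
    exact hx.2
  rw [hθ]
  refine ⟨hxΔ, convexHull_min ?_ (convex_hyperplane (isLinearMap_dotProduct_left x) 1)
    (hΔ.mem_convexHull_dualVertices hexp.subset hy hyθ)⟩
  rintro _ ⟨v, hv, rfl⟩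
  exact hx v hv

theorem eq_zero_of_forall_facet (hΔ : IsPolarPair Δ V Y) {y : Fin d → ℤ} (hy : y ∈ Y)
    {w : Fin d → ℝ} (hw : ∀ x ∈ Δ, coeLat y ⬝ᵥ x = 1 → w ⬝ᵥ x = 0) : w = 0 := by
  -- Otherwise `y ± ε w` both lie in the polar body, so that `y` is not a vertex of it.
  have hnear : ∀ᶠ ε in 𝓝 (0 : ℝ), ∀ v ∈ V, (coeLat y + ε • w) ⬝ᵥ coeLat v ≤ 1 := by
    refine (Filter.eventually_all_finset V).2 fun v hv => ?_
    have hle := hΔ.coeLat_mem_polarBody hy _ (hΔ.coeLat_mem hv)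
    simp only [add_dotProduct, smul_dotProduct]
    rcases hle.eq_or_lt with heq | hlt
    · simp [heq, hw _ (hΔ.coeLat_mem hv) heq]
    · have hcont : Continuous fun ε : ℝ => coeLat y ⬝ᵥ coeLat v + ε • (w ⬝ᵥ coeLat v) := by
        fun_prop
      exact (hcont.tendsto' 0 _ (by simp)).eventually_le_const hlt
  have hpolar {ε : ℝ} (hε : ∀ v ∈ V, (coeLat y + ε • w) ⬝ᵥ coeLat v ≤ 1) :
      coeLat y + ε • w ∈ polarBody Δ := fun x hx => by
    rw [hΔ.eq_convexHull] at hx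
    refine convexHull_min ?_ (convex_halfSpace_le
      (dotProductEquiv ℝ (Fin d) (coeLat y + ε • w)).isLinear 1) hx
    rintro _ ⟨v, hv, rfl⟩
    exact hε v hv
  have hneg := (continuous_neg.tendsto' (0 : ℝ) 0 neg_zero).eventually hnear
  obtain ⟨ε, ⟨hplus, hminus⟩, hε⟩ := (((hnear.and hneg).filter_mono nhdsWithin_le_nhds).and
    (self_mem_nhdsWithin (s := Set.Ioi (0 : ℝ)))).exists
  have hmid : coeLat y ∈ openSegment ℝ (coeLat y + ε • w) (coeLat y + (-ε) • w) :=
    ⟨1 / 2, 1 / 2, by norm_num, by norm_num, by norm_num, by module⟩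
  have heq := (_root_.mem_extremePoints.1 (hΔ.mem_extremePoints y hy)).2 _ (hpolar hplus) _
    (hpolar hminus) hmid
  exact (smul_eq_zero.1 (add_eq_left.1 heq.1)).resolve_left hε.ne'

theorem dualVertices_eq_pair (hΔ : IsPolarPair Δ V Y) (hne : θ.Nonempty)
    (hdim : dimSet θ + 2 = d) (h₁ : y₁ ∈ dualVertices Y θ) (h₂ : y₂ ∈ dualVertices Y θ)
    (hy : y₁ ≠ y₂) : dualVertices Y θ = {y₁, y₂} := by
  refine Finset.Subset.antisymm (fun y₃ h₃ => ?_)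
    (Finset.insert_subset h₁ (Finset.singleton_subset_iff.2 h₂))
  rw [mem_dualVertices] at h₁ h₂ h₃
  by_contra hy₃
  rw [Finset.mem_insert, Finset.mem_singleton, not_or] at hy₃
  have hind := hΔ.isSupportFunction_latticeHeight.linearIndependent y₁ h₁.1 y₂ h₂.1 y₃ h₃.1 hy
    (Ne.symm hy₃.1) (Ne.symm hy₃.2)
  have hle := finrank_span_add_card_le (θ := θ) hind (Fin.forall_fin_two.2
    ⟨fun x hx => by simp [coeLat_sub, sub_dotProduct, h₁.2 x hx, h₂.2 x hx],
      fun x hx => by simp [coeLat_sub, sub_dotProduct, h₁.2 x hx, h₃.2 x hx]⟩)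
  rw [finrank_span_eq_dimSet_add_one hne h₁.2, Fintype.card_fin] at hle
  omega

theorem dimSet_eq (hΔ : IsPolarPair Δ V Y) : dimSet Δ = d := by
  rw [dimSet, affineSpan_eq_top_of_nonempty_interior ⟨0, interior_mono (subset_convexHull ℝ Δ)
    hΔ.zero_mem_interior⟩, AffineSubspace.direction_top, finrank_top, Module.finrank_fin_fun]

end IsPolarPair

end DualVertices

section CodimTwoFaces

open scoped Matrix

variable {d q : ℕ} {Δ θ : Set (Fin d → ℝ)} {V Y : Finset (Fin d → ℤ)} {y₁ y₂ : Fin d → ℤ}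

namespace IsPolarPair

theorem eq_commonFace_of_dualVertices_eq (hΔ : IsPolarPair Δ V Y) (hq : q + 2 = d)
    (hθ : IsFaceOfDim Δ q θ) (hpair : dualVertices Y θ = {y₁, y₂}) :
    θ = commonFace Δ y₁ y₂ := by
  have hproper : θ ≠ Δ := by
    rintro rfl
    have := hΔ.dimSet_eq.symm.trans hθ.2.2
    omega
  ext x
  rw [hΔ.mem_iff_forall_dualVertices hθ.1 hθ.2.1 hproper, hpair]
  rw [commonFace, Set.mem_ofPred_eq]
  simp only [Finset.mem_insert, Finset.mem_singleton, forall_eq_or_imp, forall_eq]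

theorem exists_dualVertices_eq_pair (hΔ : IsPolarPair Δ V Y) (hq : q + 2 = d)
    (hθ : IsFaceOfDim Δ q θ) : ∃ y₁ y₂, y₁ ≠ y₂ ∧ dualVertices Y θ = {y₁, y₂} := by
  obtain ⟨hexp, hne, hdim⟩ := hθ
  have hproper : θ ≠ Δ := by
    rintro rfl
    have := hΔ.dimSet_eq.symm.trans hdim
    omega
  obtain ⟨y, hy, heq⟩ := hΔ.exists_mem_polarBody_eq hexp hne hproper
  have hhull := hΔ.mem_convexHull_dualVertices hexp.subset hy fun x hx => (heq ▸ hx).2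
  obtain ⟨y₁, h₁⟩ : (dualVertices Y θ).Nonempty := by
    simpa using convexHull_nonempty_iff.1 ⟨y, hhull⟩
  suffices h : ∃ y₂ ∈ dualVertices Y θ, y₁ ≠ y₂ by
    obtain ⟨y₂, h₂, hy₁₂⟩ := h
    exact ⟨y₁, y₂, hy₁₂, hΔ.dualVertices_eq_pair hne (by omega) h₁ h₂ hy₁₂⟩
  by_contra! honly
  have h₁θ := mem_dualVertices.1 h₁
  -- If `y₁` were alone, `θ` would be the whole facet it cuts out.
  have hfull : d ≤ Module.finrank ℝ (Submodule.span ℝ θ) := by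
    refine le_finrank_span_of_forall_eq_zero fun w hw =>
      hΔ.eq_zero_of_forall_facet h₁θ.1 fun x hx hx₁ => hw x ?_
    refine (hΔ.mem_iff_forall_dualVertices hexp hne hproper).2 ⟨hx, fun y₂ h₂ => ?_⟩
    rwa [← honly y₂ h₂]
  rw [finrank_span_eq_dimSet_add_one hne h₁θ.2] at hfull
  omega

theorem commonFace_eq_iff_mem_offDiag (hΔ : IsPolarPair Δ V Y) (hq : q + 2 = d)
    (hθ : IsFaceOfDim Δ q θ) (hpair : (y₁, y₂) ∈ Y.offDiag) :
    commonFace Δ y₁ y₂ = θ ↔ (y₁, y₂) ∈ (dualVertices Y θ).offDiag := by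
  obtain ⟨h₁, h₂, hy⟩ := Finset.mem_offDiag.1 hpair
  constructor
  · rintro rfl
    exact Finset.mem_offDiag.2 ⟨mem_dualVertices.2 ⟨h₁, fun x hx => hx.2.1⟩,
      mem_dualVertices.2 ⟨h₂, fun x hx => hx.2.2⟩, hy⟩
  · intro h
    obtain ⟨h₁θ, h₂θ, -⟩ := Finset.mem_offDiag.1 h
    exact (hΔ.eq_commonFace_of_dualVertices_eq hq hθ
      (hΔ.dualVertices_eq_pair hθ.2.1 (by rw [hθ.2.2, hq]) h₁θ h₂θ hy)).symm

theorem card_offDiag_dualVertices (hΔ : IsPolarPair Δ V Y) (hq : q + 2 = d)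
    (hθ : IsFaceOfDim Δ q θ) : (dualVertices Y θ).offDiag.card = 2 := by
  obtain ⟨y₁, y₂, hy, hpair⟩ := hΔ.exists_dualVertices_eq_pair hq hθ
  rw [hpair, Finset.offDiag_card, Finset.card_pair hy]

open Classical in
theorem filter_commonFace_eq (hΔ : IsPolarPair Δ V Y) (hq : q + 2 = d)
    (hθ : IsFaceOfDim Δ q θ) :
    Y.offDiag.filter (fun p => commonFace Δ p.1 p.2 = θ) = (dualVertices Y θ).offDiag := by
  ext p
  rw [Finset.mem_filter]
  refine ⟨fun hp => (hΔ.commonFace_eq_iff_mem_offDiag hq hθ hp.1).1 hp.2, fun hp => ?_⟩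
  have hpY : p ∈ Y.offDiag := Finset.offDiag_mono (Finset.filter_subset _ _) hp
  exact ⟨hpY, (hΔ.commonFace_eq_iff_mem_offDiag hq hθ hpY).2 hp⟩

open Classical in
theorem setOf_isFaceOfDim_eq (hΔ : IsPolarPair Δ V Y) (hq : q + 2 = d) :
    {θ | IsFaceOfDim Δ q θ} =
      ((Y.offDiag.image fun p : (Fin d → ℤ) × (Fin d → ℤ) => commonFace Δ p.1 p.2).filter
        (IsFaceOfDim Δ q) : Finset (Set (Fin d → ℝ))) := by
  ext θ
  rw [Finset.mem_coe, Finset.mem_filter, Finset.mem_image]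
  refine ⟨fun hθ => ⟨?_, hθ⟩, fun hθ => hθ.2⟩
  have hpos : 0 < (dualVertices Y θ).offDiag.card := by
    rw [hΔ.card_offDiag_dualVertices hq hθ]
    exact two_pos
  obtain ⟨p, hp⟩ := Finset.card_pos.1 hpos
  rw [← hΔ.filter_commonFace_eq hq hθ, Finset.mem_filter] at hp
  exact ⟨p, hp⟩

theorem sum_commonFace_eq_two_mul_finsum (hΔ : IsPolarPair Δ V Y) (hq : q + 2 = d)
    {g : Set (Fin d → ℝ) → ℝ}
    (hg : ∀ p ∈ Y.offDiag, ¬IsFaceOfDim Δ q (commonFace Δ p.1 p.2) →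
      g (commonFace Δ p.1 p.2) = 0) :
    ∑ p ∈ Y.offDiag, g (commonFace Δ p.1 p.2) = 2 * ∑ᶠ θ ∈ {θ | IsFaceOfDim Δ q θ}, g θ := by
  classical
  rw [hΔ.setOf_isFaceOfDim_eq hq, finsum_mem_coe_finset, Finset.mul_sum, Finset.sum_filter,
    Finset.sum_comp g fun p : (Fin d → ℤ) × (Fin d → ℤ) => commonFace Δ p.1 p.2]
  refine Finset.sum_congr rfl fun θ hθ => ?_
  split_ifs with hface
  · rw [hΔ.filter_commonFace_eq hq hface, hΔ.card_offDiag_dualVertices hq hface, nsmul_eq_mul,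
      Nat.cast_ofNat]
  · obtain ⟨p, hp, rfl⟩ := Finset.mem_image.1 hθ
    rw [hg p hp hface, smul_zero]

theorem neg_mem_dualFace_iff (hΔ : IsPolarPair Δ V Y) (hθ : θ ⊆ Δ) {z : Fin d → ℝ} :
    -z ∈ dualFace Δ θ ↔
      z ∈ convexHull ℝ (coeLat '' (dualVertices Y θ : Set (Fin d → ℤ))) := by
  have hval (x : Fin d → ℝ) : ∑ i, (-z) i * x i = -1 ↔ z ⬝ᵥ x = 1 := by
    change -z ⬝ᵥ x = -1 ↔ _
    rw [neg_dotProduct, neg_inj]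
  rw [dualFace, Set.mem_ofPred_eq, neg_mem_polarDual]
  simp only [hval]
  refine ⟨fun h => hΔ.mem_convexHull_dualVertices hθ h.1 h.2, fun hz => ⟨?_, fun x hx => ?_⟩⟩
  · refine convexHull_min ?_ (convex_polarBody Δ) hz
    rintro _ ⟨y, hy, rfl⟩
    exact hΔ.coeLat_mem_polarBody (mem_dualVertices.1 hy).1
  · refine convexHull_min ?_ (convex_hyperplane (isLinearMap_dotProduct_left x) 1) hz
    rintro _ ⟨y, hy, rfl⟩
    exact (mem_dualVertices.1 hy).2 x hx

end IsPolarPair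

end CodimTwoFaces

section LatticeSegment

open scoped Matrix

variable {d : ℕ} {a b : Fin d → ℤ}

theorem latticePoints_segment (hab : a ≠ b) :
    latticePoints (segment ℝ (coeLat b) (coeLat a)) =
      (fun k : ℤ => b + k • primitivePart (a - b)) '' Set.Icc 0 (content (a - b)) := by
  obtain ⟨z, hz⟩ := exists_primitivePart_dotProduct_eq_one (sub_ne_zero.2 hab)
  have hc : (0 : ℝ) < content (a - b) := Int.cast_pos.2 (content_pos (sub_ne_zero.2 hab))
  have hsub : coeLat a - coeLat b =
      (content (a - b) : ℝ) • coeLat (primitivePart (a - b)) := by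
    rw [← coeLat_sub, ← coeLat_zsmul, ← eq_content_smul_primitivePart]
  ext x
  rw [latticePoints, Set.mem_ofPred_eq, segment_eq_image']
  simp only [Set.mem_image, hsub, smul_smul]
  constructor
  · rintro ⟨t, ⟨ht₀, ht₁⟩, hx⟩
    have hk : t * content (a - b) = ((x - b) ⬝ᵥ z : ℤ) := by
      rw [← coeLat_dotProduct, coeLat_sub, ← hx, add_sub_cancel_left, smul_dotProduct,
        coeLat_dotProduct, hz, Int.cast_one, smul_eq_mul, mul_one]
    refine ⟨(x - b) ⬝ᵥ z, ⟨?_, ?_⟩, coeLat_injective ?_⟩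
    · rw [← Int.cast_nonneg_iff (R := ℝ), ← hk]
      positivity
    · rw [← Int.cast_le (R := ℝ), ← hk]
      exact mul_le_of_le_one_left hc.le ht₁
    · rw [coeLat_add, coeLat_zsmul, ← hk, hx]
  · rintro ⟨k, ⟨hk₀, hk₁⟩, rfl⟩
    refine ⟨k / content (a - b), ⟨by positivity, (div_le_one hc).2 (Int.cast_le.2 hk₁)⟩, ?_⟩
    rw [div_mul_cancel₀ _ hc.ne', coeLat_add, coeLat_zsmul]

theorem ncard_latticePoints_segment (hab : a ≠ b) :
    ((latticePoints (segment ℝ (coeLat b) (coeLat a))).ncard : ℤ) = content (a - b) + 1 := by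
  obtain ⟨z, hz⟩ := exists_primitivePart_dotProduct_eq_one (sub_ne_zero.2 hab)
  have hc := content_pos (sub_ne_zero.2 hab)
  have hinj : Function.Injective fun k : ℤ => b + k • primitivePart (a - b) := by
    intro k l hkl
    have hdot := congrArg (· ⬝ᵥ z) (add_left_cancel hkl)
    simpa only [smul_dotProduct, hz, smul_eq_mul, mul_one] using hdot
  rw [latticePoints_segment hab, Set.ncard_image_of_injective _ hinj, ← Finset.coe_Icc,
    Set.ncard_coe_finset, Int.card_Icc, Int.toNat_of_nonneg (by omega), sub_zero]

theorem ncard_latticePoints_neg (S : Set (Fin d → ℝ)) :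
    (latticePoints (-S)).ncard = (latticePoints S).ncard := by
  have hneg : latticePoints (-S) = Neg.neg '' latticePoints S := by
    ext x
    simp [latticePoints, coeLat_neg]
  rw [hneg, Set.ncard_image_of_injective _ neg_injective]

theorem IsPolarPair.ncard_latticePoints_dualFace_sub_one {Δ θ : Set (Fin d → ℝ)}
    {V Y : Finset (Fin d → ℤ)} (hΔ : IsPolarPair Δ V Y) (hθ : θ ⊆ Δ) (hab : a ≠ b)
    (hpair : dualVertices Y θ = {a, b}) :
    ((latticePoints (dualFace Δ θ)).ncard : ℝ) - 1 = content (a - b) := by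
  have hdual : dualFace Δ θ = -segment ℝ (coeLat b) (coeLat a) := by
    ext z
    rw [Set.mem_neg, segment_symm, ← convexHull_pair, ← Set.image_pair, ← Finset.coe_pair,
      ← hpair, ← hΔ.neg_mem_dualFace_iff hθ, neg_neg]
  rw [hdual, ncard_latticePoints_neg, ← Int.cast_natCast, ncard_latticePoints_segment hab]
  push_cast
  ring

end LatticeSegment

section EdgeSum

variable {d q : ℕ} {Δ : Set (Fin d → ℝ)} {V Y : Finset (Fin d → ℤ)}

theorem normVol_empty (k : ℕ) : normVol k (∅ : Set (Fin d → ℝ)) = 0 := by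
  have hzero (m : ℕ) : latticePoints ((m : ℝ) • (∅ : Set (Fin d → ℝ))) = ∅ := by
    rw [Set.smul_set_empty]
    rfl
  simp only [normVol, hzero, Set.ncard_empty, Nat.cast_zero, mul_zero, zero_div]
  exact tendsto_const_nhds.limUnder_eq

namespace IsPolarPair

theorem normVol_commonFace_eq_zero (hΔ : IsPolarPair Δ V Y) (hq : q + 2 = d)
    {y₁ y₂ : Fin d → ℤ} (h₁ : y₁ ∈ Y) (h₂ : y₂ ∈ Y) (hy : y₁ ≠ y₂)
    (hface : ¬IsFaceOfDim Δ q (commonFace Δ y₁ y₂)) : normVol q (commonFace Δ y₁ y₂) = 0 := by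
  rcases (commonFace Δ y₁ y₂).eq_empty_or_nonempty with hempty | hne
  · rw [hempty, normVol_empty]
  · have hle := commonFace_add_two_le hne hy
    have hdim : dimSet (commonFace Δ y₁ y₂) ≠ q := fun h =>
      hface ⟨hΔ.isExposed_commonFace h₁ h₂, hne, h⟩
    exact normVol_eq_zero (hΔ.isLatticePolytope_commonFace h₁ h₂) (by omega)

theorem sum_content_mul_normVol_eq (hΔ : IsPolarPair Δ V Y) (hq : q + 2 = d) :
    ∑ p ∈ Y.offDiag, (content (p.1 - p.2) : ℝ) * normVol q (commonFace Δ p.1 p.2) =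
      2 * ∑ᶠ θ ∈ {θ | IsFaceOfDim Δ q θ},
        normVol q θ * (((latticePoints (dualFace Δ θ)).ncard : ℝ) - 1) := by
  have hvanish (p) (hp : p ∈ Y.offDiag) (hface : ¬IsFaceOfDim Δ q (commonFace Δ p.1 p.2)) :
      normVol q (commonFace Δ p.1 p.2) = 0 := by
    obtain ⟨h₁, h₂, hy⟩ := Finset.mem_offDiag.1 hp
    exact hΔ.normVol_commonFace_eq_zero hq h₁ h₂ hy hface
  rw [← hΔ.sum_commonFace_eq_two_mul_finsum hq
    fun p hp hface => by rw [hvanish p hp hface, zero_mul]]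
  refine Finset.sum_congr rfl fun p hp => ?_
  by_cases hface : IsFaceOfDim Δ q (commonFace Δ p.1 p.2)
  · obtain ⟨h₁, h₂, hy⟩ := Finset.mem_offDiag.1
      ((hΔ.commonFace_eq_iff_mem_offDiag hq hface hp).1 rfl)
    have hpair := hΔ.dualVertices_eq_pair hface.2.1 (by rw [hface.2.2, hq]) h₁ h₂ hy
    rw [hΔ.ncard_latticePoints_dualFace_sub_one hface.1.subset hy hpair, mul_comm]
  · rw [hvanish p hp hface, mul_zero, zero_mul]

end IsPolarPair

end EdgeSum

end ReflexivePolytope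

open ReflexivePolytope

theorem reflexive_4d_identity (Δ : Set (Fin 4 → ℝ))
    (hΔ : IsReflexive Δ) (hdim : dimSet Δ = 4) :
    12 * ((latticePoints (frontier Δ)).ncard : ℝ) =
      2 * ((Nat.factorial 4 : ℝ) * (volume Δ).toReal) +
        ∑ᶠ θ ∈ {θ : Set (Fin 4 → ℝ) | IsFaceOfDim Δ 2 θ},
          normVol 2 θ * (((latticePoints (dualFace Δ θ)).ncard : ℝ) - 1) := by
  obtain ⟨V, Y, hpair⟩ := exists_isPolarPair hΔ
  obtain ⟨b, hlevel⟩ := hpair.exists_ncard_latticeHeight_eq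
  have hboundary : ((latticePoints (frontier Δ)).ncard : ℝ) = 4 * (volume Δ).toReal + b := by
    simpa only [hpair.latticePoints_frontier, one_pow, Nat.cast_one, mul_one] using
      hlevel 1 le_rfl
  have hcoefficient := hpair.isCoercive_latticeHeight.tendsto_tsum_difference_of_odd_cubic
    hpair.ncard_latticeHeight_eq_zero hlevel
  have hwalls := hpair.isSupportFunction_latticeHeight.tendsto_parity_difference (q := 2) rfl
    fun p hp => by
      obtain ⟨h₁, h₂, hne⟩ := Finset.mem_offDiag.1 hp
      exact hpair.tendsto_tsum_wall rfl h₁ h₂ hne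
  have hb := tendsto_nhds_unique hcoefficient hwalls
  rw [hpair.sum_content_mul_normVol_eq rfl] at hb
  rw [hboundary, show Nat.factorial 4 = 24 from rfl]
  push_cast
  linarith

end
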